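/- Let k be an algebraically closed field, S a polynomial ring over k, and I ⊆ S a homogeneous ideal of height 3 generated by n quadrics. If I has an associated prime p with height(p) = 3 and Hilbert–Samuel multiplicity e(S/p) = 5, then pd_S(S/I) ≤ 6. -/

import Mathlib

open CategoryTheory Opposite

universe u

/-- The height of an ideal: the infimum of the heights (in the prime spectrum,
ordered by inclusion) of the primes containing it. -/
noncomputable def Ideal.heightENat {R : Type u} [CommRing R] (I : Ideal R) : ℕ∞ :=
  ⨅ (p : PrimeSpectrum R) (_ : I ≤ p.asIdeal), Order.height p

/-- The projective dimension of an `R`-module `M`: the least `n` such that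
`Ext^i(M, N) = 0` for all `i > n` and all modules `N` (and `⊤` if no such `n` exists). -/
noncomputable def projDim (R : Type u) [CommRing R] (M : Type u) [AddCommGroup M]
    [Module R M] : ℕ∞ :=
  sInf ((↑) '' {n : ℕ | ∀ i : ℕ, n < i → ∀ N : ModuleCat.{u} R,
    Subsingleton (((Ext R (ModuleCat.{u} R) i).obj (op (ModuleCat.of R M))).obj N)})

/-- The Hilbert function of the standard graded ring `S/J`, where
`S = k[x_1, ..., x_N]`: the `k`-dimension of the degree-`d` graded piece of `S/J`. -/
noncomputable def hilbertFunction (k : Type u) [Field k] {N : ℕ}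
    (J : Ideal (MvPolynomial (Fin N) k)) (d : ℕ) : ℕ :=
  Module.finrank k (Submodule.map (Ideal.Quotient.mkₐ k J).toLinearMap
    (MvPolynomial.homogeneousSubmodule (Fin N) k d))

open scoped Classical in
/-- The Hilbert–Samuel multiplicity `e(S/J)` of the graded ring `S/J`:
`(deg P)!` times the leading coefficient of the Hilbert polynomial `P` of `S/J`,
i.e. of the polynomial agreeing with the Hilbert function in all large degrees
(the degree of the Hilbert polynomial being `dim(S/J) - 1`). -/
noncomputable def hilbertSamuelMultiplicity (k : Type u) [Field k] {N : ℕ}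
    (J : Ideal (MvPolynomial (Fin N) k)) : ℚ :=
  if h : ∃ P : Polynomial ℚ, ∀ᶠ d : ℕ in Filter.atTop,
      (hilbertFunction k J d : ℚ) = P.eval (d : ℚ)
  then (h.choose.natDegree).factorial * h.choose.leadingCoeff
  else 0

section part1
theorem projDim_le_of_LE (R : Type u) [CommRing R] (M : Type u) [AddCommGroup M] [Module R M]
    (n : ℕ) (h : HasProjectiveDimensionLE (ModuleCat.of R M) n) : projDim R M ≤ n := by
  unfold projDim
  refine sInf_le ⟨n, ?_, rfl⟩
  intro i hi N
  obtain ⟨i, rfl⟩ : ∃ j, i = j + 1 := ⟨i - 1, by omega⟩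
  let P := projectiveResolution (ModuleCat.of R M)
  have hz : Limits.IsZero (((Ext R (ModuleCat.{u} R) (i+1)).obj (op (ModuleCat.of R M))).obj N) := by
    refine Limits.IsZero.of_iso ?_ (P.isoExt (i+1) N)
    rw [← HomologicalComplex.exactAt_iff_isZero_homology, HomologicalComplex.exactAt_iff' _ i (i+1) (i+2) (by simp) (by simp), ShortComplex.moduleCat_exact_iff]
    intro (f : P.complex.X (i+1) ⟶ N) hf
    have hf' : P.complex.d (i+2) (i+1) ≫ f = 0 := hf
    have := Abelian.Ext.eq_zero_of_hasProjectiveDimensionLT (P.extMk f (i+2) rfl hf') (n+1) hi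
    rw [P.extMk_eq_zero_iff f (i+2) rfl hf' i rfl] at this
    obtain ⟨g, hg⟩ := this
    exact ⟨g, hg⟩
  exact ModuleCat.isZero_iff_subsingleton.mp hz

/-- projective dimension at most `n`, unbundled -/
def PDle (A : Type u) [CommRing A] (n : ℕ) (M : Type u) [AddCommGroup M] [Module A M] : Prop :=
  HasProjectiveDimensionLE (ModuleCat.of A M) n

section PD
variable {A : Type u} [CommRing A]

theorem PDle_zero_iff (M : Type u) [AddCommGroup M] [Module A M] :
    PDle A 0 M ↔ Module.Projective A M := by
  unfold PDle
  rw [← projective_iff_hasProjectiveDimensionLE_zero, ← IsProjective.iff_projective]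

theorem PDle.mono {M : Type u} [AddCommGroup M] [Module A M] {m n : ℕ} (h : PDle A m M)
    (hmn : m ≤ n) : PDle A n M := by
  unfold PDle at *
  exact hasProjectiveDimensionLT_of_ge _ (m+1) (n+1) (by omega)

theorem PDle_succ_iff {K P M : Type u} [AddCommGroup K] [Module A K] [AddCommGroup P] [Module A P]
    [AddCommGroup M] [Module A M] (f : K →ₗ[A] P) (g : P →ₗ[A] M) (hf : Function.Injective f)
    (hg : Function.Surjective g) (hfg : Function.Exact f g) [hP : Module.Projective A P] (n : ℕ) :
    PDle A (n+1) M ↔ PDle A n K := by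
  let S : ShortComplex (ModuleCat.{u} A) := ShortComplex.mk (ModuleCat.ofHom f) (ModuleCat.ofHom g)
    (by ext x; exact hfg.apply_apply_eq_zero x)
  have hS : S.ShortExact := by
    refine ShortComplex.ShortExact.mk' ?_ ?_ ?_
    · rw [ShortComplex.moduleCat_exact_iff]
      intro x hx
      exact (hfg x).1 hx
    · exact (ModuleCat.mono_iff_injective _).2 hf
    · exact (ModuleCat.epi_iff_surjective _).2 hg
  have : Projective S.X₂ := (IsProjective.iff_projective (R := A) P).1 hP
  exact hS.hasProjectiveDimensionLT_X₃_iff n this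

theorem PDle.of_equiv {M N : Type u} [AddCommGroup M] [Module A M] [AddCommGroup N] [Module A N]
    (e : M ≃ₗ[A] N) {n : ℕ} (h : PDle A n M) : PDle A n N := by
  unfold PDle at *
  have e' : (ModuleCat.of A M) ≃ₗ[A] (ModuleCat.of A N) := e
  exact ModuleCat.hasProjectiveDimensionLE_of_linearEquiv e' n

attribute [local instance] RingHomInvPair.of_ringEquiv in
/-- transport along a ring isomorphism -/
theorem PDle.of_semi {B : Type u} [CommRing B] (e : A ≃+* B) {M N : Type u} [AddCommGroup M]
    [Module A M] [AddCommGroup N] [Module B N] (e' : M ≃+ N) (he : ∀ (a : A) (m : M),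
      e' (a • m) = e a • e' m) {n : ℕ} (h : PDle A n M) : PDle B n N := by
  unfold PDle at *
  let e'' : (ModuleCat.of A M) ≃ₛₗ[RingHomClass.toRingHom e] (ModuleCat.of B N) :=
    { e' with map_smul' := he }
  exact ModuleCat.hasProjectiveDimensionLE_of_semiLinearEquiv e e'' n

open Polynomial

theorem projective_PolynomialModule (M : Type u) [AddCommGroup M] [Module A M]
    [Module.Projective A M] : Module.Projective A[X] (PolynomialModule A M) :=
  Module.Projective.of_equiv
    (PolynomialModule.polynomialTensorProductLEquivPolynomialModule A M)

section base
variable (M : Type u) [AddCommGroup M] [Module A M] [Module A[X] M] [IsScalarTower A A[X] M]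

/-- evaluation M[X] → M -/
noncomputable def pmEval : PolynomialModule A M →ₗ[A[X]] M :=
  (LinearMap.liftBaseChange A[X] (LinearMap.id : M →ₗ[A] M)).comp
    (PolynomialModule.polynomialTensorProductLEquivPolynomialModule A M).symm.toLinearMap

theorem pmEval_single (i : ℕ) (m : M) :
    pmEval M (PolynomialModule.single A i m) = (X ^ i : A[X]) • m := by
  have : PolynomialModule.single A i m =
      PolynomialModule.polynomialTensorProductLEquivPolynomialModule A M
        ((X^i : A[X]) ⊗ₜ m) := by
    change _ = LinearMap.liftBaseChange A[X] (PolynomialModule.lsingle A (M := M) 0) _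
    rw [LinearMap.liftBaseChange_tmul, ← monomial_one_right_eq_X_pow,
      PolynomialModule.monomial_smul_lsingle]
    simp [PolynomialModule.lsingle]
  rw [this, pmEval]
  simp

/-- the map `q ↦ X q - t q` -/
noncomputable def pmD : PolynomialModule A M →ₗ[A[X]] PolynomialModule A M where
  toFun q := (X : A[X]) • q - PolynomialModule.ofCoeff A
    (q.coeff.mapRange (fun m => (X : A[X]) • m) (by simp))
  map_add' p q := by
    have : (Finsupp.mapRange (fun m : M => (X : A[X]) • m) (by simp) (p.coeff + q.coeff)) =
      (p.coeff.mapRange (fun m : M => (X : A[X]) • m) (by simp)) +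
      (q.coeff.mapRange (fun m : M => (X : A[X]) • m) (by simp)) := by
      ext i; simp
    rw [PolynomialModule.coeff_add, this, smul_add, PolynomialModule.ofCoeff_add]
    abel
  map_smul' a q := by
    simp only [RingHom.id_apply, smul_sub]
    rw [smul_comm]
    congr 1
    apply PolynomialModule.ext
    ext n
    simp only [PolynomialModule.smul_apply, Finsupp.mapRange_apply, Finset.smul_sum]
    refine Finset.sum_congr rfl fun x _ => ?_
    rw [smul_comm]

theorem pmD_coeff_succ (q : PolynomialModule A M) (n : ℕ) :
    (pmD M q).coeff (n+1) = q.coeff n - (X : A[X]) • q.coeff (n+1) := by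
  have h : ((X : A[X]) • q).coeff (n+1) = q.coeff n := by
    rw [← monomial_one_one_eq_X, PolynomialModule.monomial_smul_apply]; simp
  have h2 : ∀ a b : PolynomialModule A M, (a - b).coeff = a.coeff - b.coeff := fun a b => rfl
  change ((X : A[X]) • q - _).coeff (n+1) = _
  rw [h2, Finsupp.sub_apply, h]
  simp

theorem pmD_single (i : ℕ) (m : M) :
    pmD (A := A) M (PolynomialModule.single A i m) = PolynomialModule.single A (i+1) m
      - PolynomialModule.single A i ((X : A[X]) • m) := by
  change (X : A[X]) • PolynomialModule.single A i m - _ = _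
  have h : (X : A[X]) • PolynomialModule.single A i m = PolynomialModule.single A (i+1) m := by
    rw [← monomial_one_one_eq_X, PolynomialModule.monomial_smul_single, one_smul, add_comm]
  rw [h]
  simp

theorem pmD_injective : Function.Injective (pmD (A := A) M) := by
  rw [injective_iff_map_eq_zero]
  intro q hq
  have h : ∀ n, q.coeff n = (X : A[X]) • q.coeff (n+1) := by
    intro n
    have := pmD_coeff_succ M q n
    rw [hq] at this
    exact (sub_eq_zero.1 this.symm)
  obtain ⟨B, hB⟩ : ∃ B, ∀ n, B ≤ n → q.coeff n = 0 := by
    refine ⟨q.coeff.support.sup id + 1, fun n hn => ?_⟩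
    by_contra hne
    have := Finset.le_sup (f := id) (Finsupp.mem_support_iff.2 hne)
    simp at this; omega
  have h2 : ∀ j n, B ≤ n + j → q.coeff n = 0 := by
    intro j
    induction j with
    | zero => intro n hn; exact hB n hn
    | succ j ih => intro n hn; rw [h n, ih (n+1) (by omega), smul_zero]
  apply PolynomialModule.ext
  ext n
  exact h2 B n (by omega)

theorem pmEval_surjective : Function.Surjective (pmEval (A := A) M) := fun m =>
  ⟨PolynomialModule.single A 0 m, by simp [pmEval_single]⟩

theorem pm_exact : Function.Exact (pmD (A := A) M) (pmEval M) := by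
  have key : ∀ q : PolynomialModule A M, ∃ r, q = PolynomialModule.single A 0 (pmEval M q) + pmD M r := by
    intro q
    induction q using PolynomialModule.induction_linear with
    | zero => exact ⟨0, by simp⟩
    | add x y hx hy =>
      obtain ⟨r, hr⟩ := hx
      obtain ⟨s, hs⟩ := hy
      refine ⟨r + s, ?_⟩
      rw [map_add, map_add, PolynomialModule.single_add]
      nth_rw 1 [hr, hs]
      abel
    | single n m =>
      induction n generalizing m with
      | zero => exact ⟨0, by simp [pmEval_single]⟩
      | succ n ih =>
        obtain ⟨r, hr⟩ := ih ((X : A[X]) • m)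
        refine ⟨r + PolynomialModule.single A n m, ?_⟩
        rw [map_add, pmD_single, pmEval_single]
        rw [pmEval_single, smul_smul, ← pow_succ] at hr
        rw [← add_assoc, ← hr]; abel
  intro q
  constructor
  · intro hq
    obtain ⟨r, hr⟩ := key q
    exact ⟨r, by rw [hr, hq]; simp⟩
  · rintro ⟨r, rfl⟩
    induction r using PolynomialModule.induction_linear with
    | zero => simp
    | add x y hx hy => simp [hx, hy]
    | single n m =>
      rw [pmD_single, map_sub, pmEval_single, pmEval_single, smul_smul, ← pow_succ, sub_self]

end base

theorem PDle_polynomial (n : ℕ) (M : Type u) [AddCommGroup M] [Module A M] [Module A[X] M]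
    [IsScalarTower A A[X] M] (h : PDle A n M) : PDle A[X] (n+1) M := by
  induction n generalizing M with
  | zero =>
    rw [PDle_zero_iff] at h
    have := projective_PolynomialModule (A := A) M
    rw [PDle_succ_iff (pmD (A := A) M) (pmEval M) (pmD_injective M) (pmEval_surjective M)
      (pm_exact M), PDle_zero_iff]
    exact this
  | succ n ih =>
    let g : (M →₀ A[X]) →ₗ[A[X]] M := Finsupp.linearCombination A[X] id
    have hg : Function.Surjective g := fun m => ⟨Finsupp.single m 1, by simp [g]⟩
    have hex : Function.Exact (LinearMap.ker g).subtype g := by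
      intro x; simp
    rw [PDle_succ_iff (K := LinearMap.ker g) (LinearMap.ker g).subtype g (Submodule.subtype_injective _) hg hex]
    apply ih
    let f' : (LinearMap.ker g) →ₗ[A] (M →₀ A[X]) := (LinearMap.ker g).subtype.restrictScalars A
    have hP : Module.Projective A (M →₀ A[X]) := inferInstance
    exact (PDle_succ_iff f' (g.restrictScalars A) (Submodule.subtype_injective _) hg hex n).1 h

theorem PDle_mvPolynomial (m n : ℕ) : ∀ (M : Type u) [AddCommGroup M] [Module A M]
    [Module (MvPolynomial (Fin m) A) M] [IsScalarTower A (MvPolynomial (Fin m) A) M]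
    (_ : PDle A n M), PDle (MvPolynomial (Fin m) A) (n+m) M := by
  induction m with
  | zero =>
    intro M _ _ _ _ h
    refine PDle.of_semi (MvPolynomial.isEmptyAlgEquiv A (Fin 0)).symm.toRingEquiv
      (AddEquiv.refl M) ?_ h
    intro a x
    have : (MvPolynomial.isEmptyAlgEquiv A (Fin 0)).symm.toRingEquiv a =
      algebraMap A (MvPolynomial (Fin 0) A) a := by simp [MvPolynomial.algebraMap_eq]
    rw [this, algebraMap_smul]
    rfl
  | succ m ih =>
    intro M _ _ _ _ h
    let e := MvPolynomial.finSuccEquiv A m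
    let i1 : Module (MvPolynomial (Fin m) A)[X] M := Module.compHom M e.symm.toRingHom
    let i2 : Module (MvPolynomial (Fin m) A) M :=
      Module.compHom M (Polynomial.C : MvPolynomial (Fin m) A →+* _)
    have hs1 : ∀ (a : (MvPolynomial (Fin m) A)[X]) (x : M), a • x = e.symm a • x := fun _ _ => rfl
    have hs2 : ∀ (a : (MvPolynomial (Fin m) A)) (x : M), a • x = e.symm (Polynomial.C a) • x :=
      fun _ _ => rfl
    have : IsScalarTower A (MvPolynomial (Fin m) A) M := by
      constructor
      intro a b x
      rw [hs2, hs2]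
      have : e.symm (Polynomial.C (a • b)) = a • e.symm (Polynomial.C b) := by
        rw [← Polynomial.smul_C, map_smul]
      rw [this, smul_assoc]
    have : IsScalarTower (MvPolynomial (Fin m) A) (MvPolynomial (Fin m) A)[X] M := by
      constructor
      intro a b x
      rw [hs1, hs1, hs2, smul_smul, ← map_mul, Polynomial.smul_eq_C_mul]
    have h1 := PDle_polynomial (A := MvPolynomial (Fin m) A) (n+m) M (ih M h)
    refine PDle.of_semi e.symm.toRingEquiv (AddEquiv.refl M) ?_ h1
    intro a x
    rfl

end PD
end part1

section part2
section HomogTools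
open MvPolynomial

theorem hc_mul_homog {σ k : Type*} [CommRing k] {q : MvPolynomial σ k} {m : ℕ}
    (hq : q.IsHomogeneous m) (a : MvPolynomial σ k) (n : ℕ) :
    homogeneousComponent (n + m) (a * q) = homogeneousComponent n a * q := by
  conv_lhs => rw [← sum_homogeneousComponent a, Finset.sum_mul, map_sum]
  have : ∀ i ∈ Finset.range (a.totalDegree + 1),
      homogeneousComponent (n + m) (homogeneousComponent i a * q)
        = if i = n then homogeneousComponent n a * q else 0 := by
    intro i _
    rw [homogeneousComponent_of_mem (n := i + m)
      (((homogeneousComponent_isHomogeneous i a).mul hq))]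
    by_cases h : i = n
    · subst h; simp
    · rw [if_neg h, if_neg (by omega)]
  rw [Finset.sum_congr rfl this, Finset.sum_ite_eq']
  split_ifs with h
  · rfl
  · rw [homogeneousComponent_eq_zero, zero_mul]
    simp at h; omega

theorem hc_mul_homog_lt {σ k : Type*} [CommRing k] {q : MvPolynomial σ k} {m : ℕ}
    (hq : q.IsHomogeneous m) (a : MvPolynomial σ k) (n : ℕ) (h : n < m) :
    homogeneousComponent n (a * q) = 0 := by
  conv_lhs => rw [← sum_homogeneousComponent a, Finset.sum_mul, map_sum]
  refine Finset.sum_eq_zero fun i _ => ?_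
  rw [homogeneousComponent_of_mem (n := i + m)
      (((homogeneousComponent_isHomogeneous i a).mul hq))]
  rw [if_neg]; omega

theorem homogeneousSubmodule_eq_restrictSupport (d : ℕ) (k : Type*) [CommRing k] (t : ℕ) :
    homogeneousSubmodule (Fin d) k t =
      restrictSupport k (((Finset.univ : Finset (Fin d)).finsuppAntidiag t : Finset _) :
        Set (Fin d →₀ ℕ)) := by
  ext p
  rw [mem_homogeneousSubmodule, mem_restrictSupport_iff]
  constructor
  · intro h m hm
    have := h (mem_support_iff.1 hm)
    simp only [Finset.mem_coe, Finset.mem_finsuppAntidiag]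
    refine ⟨?_, by simp⟩
    rw [← this]
    simp [Finsupp.weight_apply, Finsupp.sum_fintype]
  · intro h m hm
    have := h (Finset.mem_coe.2 (mem_support_iff.2 hm))
    simp only [Finset.mem_coe, Finset.mem_finsuppAntidiag] at this
    rw [← this.1]
    simp [Finsupp.weight_apply, Finsupp.sum_fintype]

theorem finrank_homogeneousSubmodule' (d : ℕ) (k : Type*) [Field k] (t : ℕ) :
    Module.finrank k (homogeneousSubmodule (Fin d) k t) = (d + t - 1).choose t := by
  rw [homogeneousSubmodule_eq_restrictSupport,
    Module.finrank_eq_card_basis (basisRestrictSupport k _)]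
  have := Finset.card_finsuppAntidiag_nat_eq_choose (s := (Finset.univ : Finset (Fin d))) t
  simp only [Finset.card_univ, Fintype.card_fin] at this
  rw [← this]
  exact Fintype.card_coe _

instance finite_homogeneousSubmodule (d : ℕ) (k : Type*) [Field k] (t : ℕ) :
    Module.Finite k (homogeneousSubmodule (Fin d) k t) := by
  rw [homogeneousSubmodule_eq_restrictSupport]
  exact Module.Finite.of_basis (basisRestrictSupport k _)

/-- homogeneous coefficients for elements of an ideal generated by forms of degree `m` -/
theorem exists_homog_coeffs {σ k ι : Type*} [CommRing k] [Fintype ι] {F : ι → MvPolynomial σ k}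
    {m : ℕ} (hF : ∀ i, (F i).IsHomogeneous m) {n : ℕ} {g : MvPolynomial σ k}
    (hg : g.IsHomogeneous (n + m)) (h : g ∈ Ideal.span (Set.range F)) :
    ∃ c : ι → MvPolynomial σ k, (∀ i, (c i).IsHomogeneous n) ∧ g = ∑ i, c i * F i := by
  rw [Ideal.mem_span_range_iff_exists_fun] at h
  obtain ⟨c, hc⟩ := h
  refine ⟨fun i => homogeneousComponent n (c i), fun i => homogeneousComponent_isHomogeneous _ _, ?_⟩
  rw [← homogeneousComponent_eq_self hg, ← hc, map_sum]
  exact Finset.sum_congr rfl fun i _ => hc_mul_homog (hF i) _ _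

theorem eq_zero_of_mem_span_homog {σ k ι : Type*} [CommRing k] [Fintype ι]
    {F : ι → MvPolynomial σ k}
    {m : ℕ} (hF : ∀ i, (F i).IsHomogeneous m) {n : ℕ} (hn : n < m) {g : MvPolynomial σ k}
    (hg : g.IsHomogeneous n) (h : g ∈ Ideal.span (Set.range F)) : g = 0 := by
  rw [Ideal.mem_span_range_iff_exists_fun] at h
  obtain ⟨c, hc⟩ := h
  rw [← homogeneousComponent_eq_self hg, ← hc, map_sum]
  exact Finset.sum_eq_zero fun i _ => hc_mul_homog_lt (hF i) _ _ hn

/-- ideal stable under homogeneous components -/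
def HomogI {σ k : Type*} [CommRing k] (I : Ideal (MvPolynomial σ k)) : Prop :=
  ∀ n, ∀ g ∈ I, homogeneousComponent n g ∈ I

theorem HomogI.sup {σ k : Type*} [CommRing k] {I J : Ideal (MvPolynomial σ k)} (hI : HomogI I)
    (hJ : HomogI J) : HomogI (I ⊔ J) := by
  intro n g hg
  obtain ⟨a, ha, b, hb, rfl⟩ := Submodule.mem_sup.1 hg
  rw [map_add]
  exact Submodule.add_mem_sup (hI n a ha) (hJ n b hb)

theorem HomogI.span_singleton {σ k : Type*} [CommRing k] {q : MvPolynomial σ k} {m : ℕ}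
    (hq : q.IsHomogeneous m) : HomogI (Ideal.span {q}) := by
  intro n g hg
  obtain ⟨a, rfl⟩ := Ideal.mem_span_singleton'.1 hg
  by_cases h : n < m
  · rw [hc_mul_homog_lt hq _ _ h]; exact zero_mem _
  · obtain ⟨j, rfl⟩ : ∃ j, n = j + m := ⟨n - m, by omega⟩
    rw [hc_mul_homog hq]
    exact Ideal.mem_span_singleton'.2 ⟨_, rfl⟩

theorem HomogI.bot {σ k : Type*} [CommRing k] : HomogI (⊥ : Ideal (MvPolynomial σ k)) := by
  intro n g hg
  rw [Ideal.mem_bot] at hg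
  simp [hg]

end HomogTools

section KLevel
open MvPolynomial

/-- `u` is a nonzerodivisor modulo `I` -/
def RegM {T : Type*} [CommRing T] (I : Ideal T) (u : T) : Prop := ∀ g, u * g ∈ I → g ∈ I

theorem RegM.of_pow {T : Type*} [CommRing T] {I : Ideal T} {u v : T} (hu : RegM I u) {s : ℕ}
    (h : u ^ s ∈ I ⊔ Ideal.span {v}) : RegM I v := by
  intro g hg
  obtain ⟨a, ha, w, hw, e⟩ := Submodule.mem_sup.1 h
  obtain ⟨w, rfl⟩ := Ideal.mem_span_singleton'.1 hw
  have h1 : u ^ s * g ∈ I := by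
    rw [← e, show (a + w * v) * g = g * a + w * (v * g) by ring]
    exact I.add_mem (I.mul_mem_left _ ha) (I.mul_mem_left _ hg)
  clear h e
  induction s with
  | zero => simpa using h1
  | succ s ih =>
    apply ih
    apply hu
    rwa [← mul_assoc, ← pow_succ']

theorem RegM.perm {T : Type*} [CommRing T] {I : Ideal T} {Y F : T} (hY : RegM I Y)
    (hF : RegM (I ⊔ Ideal.span {Y}) F) : RegM (I ⊔ Ideal.span {F}) Y := by
  intro g hg
  obtain ⟨a, ha, w, hw, e⟩ := Submodule.mem_sup.1 hg
  obtain ⟨h, rfl⟩ := Ideal.mem_span_singleton'.1 hw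
  have h1 : h ∈ I ⊔ Ideal.span {Y} := by
    apply hF
    rw [show F * h = -a + g * Y by linear_combination e]
    exact Submodule.add_mem_sup (I.neg_mem ha) (Ideal.mem_span_singleton'.2 ⟨g, rfl⟩)
  obtain ⟨a', ha', w', hw', e'⟩ := Submodule.mem_sup.1 h1
  obtain ⟨h', rfl⟩ := Ideal.mem_span_singleton'.1 hw'
  have h2 : g - h' * F ∈ I := by
    apply hY
    rw [show Y * (g - h' * F) = a + F * a' by linear_combination -e - F * e']
    exact I.add_mem ha (I.mul_mem_left _ ha')
  rw [show g = (g - h' * F) + h' * F by ring]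
  exact Submodule.add_mem_sup h2 (Ideal.mem_span_singleton'.2 ⟨h', rfl⟩)

variable {k : Type*} [Field k]

/-- socle elements modulo `I` -/
def Soc (I : Ideal (MvPolynomial (Fin 3) k)) (φ : MvPolynomial (Fin 3) k) : Prop :=
  ∀ j, X j * φ ∈ I

theorem exch {I : Ideal (MvPolynomial (Fin 3) k)} (hI : HomogI I) {v φ : MvPolynomial (Fin 3) k}
    (i : Fin 3) (hv : v.IsHomogeneous 2) (hreg : RegM I v) {t : ℕ} (hφ : φ.IsHomogeneous t)
    (hs : Soc (I ⊔ Ideal.span {v}) φ) :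
    ∃ e : MvPolynomial (Fin 3) k, e.IsHomogeneous (t - 1) ∧ (t = 0 → e = 0) ∧
      Soc (I ⊔ Ideal.span {X i}) e ∧ X i * φ - e * v ∈ I := by
  obtain ⟨a, ha, w, hw, e⟩ := Submodule.mem_sup.1 (hs i)
  obtain ⟨e0, rfl⟩ := Ideal.mem_span_singleton'.1 hw
  -- choose homogeneous
  have key : ∃ e1 : MvPolynomial (Fin 3) k, e1.IsHomogeneous (t - 1) ∧ (t = 0 → e1 = 0) ∧
      X i * φ - e1 * v ∈ I := by
    have hX : (X i * φ).IsHomogeneous (t + 1) := by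
      rw [add_comm]; exact (isHomogeneous_X _ i).mul hφ
    have h1 : X i * φ = homogeneousComponent (t+1) a + homogeneousComponent (t+1) (e0 * v) := by
      rw [← map_add, e, homogeneousComponent_eq_self hX]
    rcases Nat.eq_zero_or_pos t with rfl | ht
    · refine ⟨0, isHomogeneous_zero _ _ _, fun _ => rfl, ?_⟩
      rw [h1, hc_mul_homog_lt hv _ _ (by omega)]
      simpa using hI _ _ ha
    · obtain ⟨t, rfl⟩ : ∃ j, t = j + 1 := ⟨t - 1, by omega⟩
      refine ⟨homogeneousComponent t e0, homogeneousComponent_isHomogeneous _ _, by simp, ?_⟩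
      rw [h1, show t + 1 + 1 = t + 2 from rfl, hc_mul_homog hv, add_sub_cancel_right]
      exact hI _ _ ha
  obtain ⟨e1, h1, h2, h3⟩ := key
  refine ⟨e1, h1, h2, ?_, h3⟩
  intro j
  obtain ⟨a', ha', w', hw', e'⟩ := Submodule.mem_sup.1 (hs j)
  obtain ⟨w, rfl⟩ := Ideal.mem_span_singleton'.1 hw'
  have h4 : X j * e1 - X i * w ∈ I := by
    apply hreg
    rw [show v * (X j * e1 - X i * w) = X i * a' - X j * (X i * φ - e1 * v) by
      linear_combination -X i * e']
    exact I.sub_mem (I.mul_mem_left _ ha') (I.mul_mem_left _ h3)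
  rw [show X j * e1 = (X j * e1 - X i * w) + w * X i by ring]
  exact Submodule.add_mem_sup h4 (Ideal.mem_span_singleton'.2 ⟨_, rfl⟩)

theorem exch_back {T : Type*} [CommRing T] {I : Ideal T} {u v φ e : T} (hu : RegM I u)
    (h : u * φ - e * v ∈ I) (he : e ∈ I ⊔ Ideal.span {u}) : φ ∈ I ⊔ Ideal.span {v} := by
  obtain ⟨a, ha, w, hw, e'⟩ := Submodule.mem_sup.1 he
  obtain ⟨w, rfl⟩ := Ideal.mem_span_singleton'.1 hw
  have : φ - w * v ∈ I := by
    apply hu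
    rw [show u * (φ - w * v) = (u * φ - e * v) + v * a by linear_combination -v * e']
    exact I.add_mem h (I.mul_mem_left _ ha)
  rw [show φ = (φ - w * v) + w * v by ring]
  exact Submodule.add_mem_sup this (Ideal.mem_span_singleton'.2 ⟨_, rfl⟩)

/-- three quadrics in good position -/
structure GoodF (F : Fin 3 → MvPolynomial (Fin 3) k) : Prop where
  hom : ∀ i, (F i).IsHomogeneous 2
  c3 : ∃ s : ℕ, (X 2 : MvPolynomial (Fin 3) k) ^ s ∈
    Ideal.span {X 0} ⊔ Ideal.span {X 1} ⊔ Ideal.span {F 2}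
  c2 : ∃ s : ℕ, (X 1 : MvPolynomial (Fin 3) k) ^ s ∈
    Ideal.span {X 0} ⊔ Ideal.span {F 2} ⊔ Ideal.span {F 1}
  c1 : ∀ j, ∃ s : ℕ, (X j : MvPolynomial (Fin 3) k) ^ s ∈
    Ideal.span {F 2} ⊔ Ideal.span {F 1} ⊔ Ideal.span {F 0}

theorem regM_X (s : Set (Fin 3)) (i : Fin 3) (hi : i ∉ s) :
    RegM (Ideal.span (X '' s : Set (MvPolynomial (Fin 3) k))) (X i) := by
  intro g hg
  rw [mem_ideal_span_X_image] at hg ⊢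
  intro m hm
  obtain ⟨j, hj, h⟩ := hg (m + Finsupp.single i 1) (by
    rw [mem_support_iff, mul_comm, coeff_mul_X]
    exact mem_support_iff.1 hm)
  refine ⟨j, hj, ?_⟩
  have : i ≠ j := fun h => hi (h ▸ hj)
  simpa [Finsupp.single_apply, this] using h

theorem span_X01 : (Ideal.span {X 0} ⊔ Ideal.span {X 1} : Ideal (MvPolynomial (Fin 3) k)) =
    Ideal.span (X '' {0, 1}) := by
  rw [Set.image_pair, ← Ideal.span_union]; rfl

theorem span_X0 : (Ideal.span {X 0} : Ideal (MvPolynomial (Fin 3) k)) =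
    Ideal.span (X '' {0}) := by
  rw [Set.image_singleton]

theorem X2_pow_notMem (s : ℕ) : (X 2 : MvPolynomial (Fin 3) k) ^ s ∉
    (Ideal.span {X 0} ⊔ Ideal.span {X 1} : Ideal (MvPolynomial (Fin 3) k)) := by
  rw [span_X01]
  intro h
  have h1 := regM_X (k := k) {0, 1} 2 (by decide)
  have : ∀ s : ℕ, (X 2 : MvPolynomial (Fin 3) k) ^ s ∈ Ideal.span (X '' {0, 1}) →
      (1 : MvPolynomial (Fin 3) k) ∈ Ideal.span (X '' {0, 1}) := by
    intro s
    induction s with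
    | zero => intro h; simpa using h
    | succ s ih => intro h; apply ih; apply h1; rwa [← pow_succ']
  have h2 := this s h
  rw [mem_ideal_span_X_image] at h2
  obtain ⟨i, -, hi⟩ := h2 0 (by simp [mem_support_iff])
  simp at hi

namespace GoodF
variable {F : Fin 3 → MvPolynomial (Fin 3) k}

theorem r1 (hF : GoodF F) : RegM (Ideal.span {X 0} ⊔ Ideal.span {X 1}) (F 2) := by
  obtain ⟨s, hs⟩ := hF.c3
  refine RegM.of_pow ?_ hs
  rw [span_X01]; exact regM_X _ _ (by decide)

theorem r1' (_ : GoodF F) : RegM (Ideal.span {X 0} ⊔ Ideal.span {X 1} : Ideal (MvPolynomial (Fin 3) k)) (X 2) := by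
  rw [span_X01]; exact regM_X _ _ (by decide)

theorem r2 (hF : GoodF F) : RegM (Ideal.span {X 0} ⊔ Ideal.span {F 2}) (X 1) := by
  refine RegM.perm ?_ hF.r1
  rw [span_X0]; exact regM_X _ _ (by decide)

theorem r3 (hF : GoodF F) : RegM (Ideal.span {X 0} ⊔ Ideal.span {F 2}) (F 1) := by
  obtain ⟨s, hs⟩ := hF.c2
  exact RegM.of_pow hF.r2 hs

theorem r4 (hF : GoodF F) : RegM (Ideal.span {F 2}) (X 0) := by
  have h0 : RegM (⊥ ⊔ Ideal.span {F 2} : Ideal (MvPolynomial (Fin 3) k)) (X 0) := by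
    refine RegM.perm ?_ ?_
    · intro g hg
      rw [Ideal.mem_bot] at hg ⊢
      exact (mul_eq_zero.1 hg).resolve_left (X_ne_zero _)
    · rw [bot_sup_eq]
      intro g hg
      have hp : (Ideal.span {X 0} : Ideal (MvPolynomial (Fin 3) k)).IsPrime :=
        (Ideal.span_singleton_prime (X_ne_zero _)).2 (X_prime)
      refine (hp.mem_or_mem hg).resolve_left ?_
      intro h
      obtain ⟨s, hs⟩ := hF.c3
      apply X2_pow_notMem (k := k) s
      refine (sup_le le_rfl ?_ : _ ⊔ Ideal.span {F 2} ≤ _) hs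
      exact le_trans ((Ideal.span_singleton_le_iff_mem _).2 h) le_sup_left
  rwa [bot_sup_eq] at h0

theorem r5 (hF : GoodF F) : RegM (Ideal.span {F 2} ⊔ Ideal.span {F 1}) (X 0) := by
  refine RegM.perm hF.r4 ?_
  rw [sup_comm]
  exact hF.r3

theorem r6 (hF : GoodF F) : RegM (Ideal.span {F 2} ⊔ Ideal.span {F 1}) (F 0) := by
  obtain ⟨s, hs⟩ := hF.c1 0
  exact hF.r5.of_pow hs

theorem homog_all (hF : GoodF F) : HomogI (Ideal.span {F 2} ⊔ Ideal.span {F 1}) :=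
  (HomogI.span_singleton (hF.hom 2)).sup (HomogI.span_singleton (hF.hom 1))

/-- full socle exchange -/
theorem chain (hF : GoodF F) {φ : MvPolynomial (Fin 3) k} {t : ℕ} (hφ : φ.IsHomogeneous t)
    (hs : Soc (Ideal.span {F 2} ⊔ Ideal.span {F 1} ⊔ Ideal.span {F 0}) φ) :
    ∃ e g c : MvPolynomial (Fin 3) k, c.IsHomogeneous (t - 3) ∧ (t < 3 → c = 0) ∧
      X 0 * φ - e * F 0 ∈ Ideal.span {F 2} ⊔ Ideal.span {F 1} ∧
      X 1 * e - g * F 1 ∈ Ideal.span {X 0} ⊔ Ideal.span {F 2} ∧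
      X 2 * g - c * F 2 ∈ Ideal.span {X 0} ⊔ Ideal.span {X 1} := by
  obtain ⟨e, he1, he2, he3, he4⟩ := exch hF.homog_all 0 (hF.hom 0) hF.r6 hφ hs
  have hX : ∀ i : Fin 3, HomogI (Ideal.span {(X i : MvPolynomial (Fin 3) k)}) := fun i =>
    HomogI.span_singleton (isHomogeneous_X _ i)
  have he3' : Soc (Ideal.span {X 0} ⊔ Ideal.span {F 2} ⊔ Ideal.span {F 1}) e := by
    rwa [show Ideal.span {X 0} ⊔ Ideal.span {F 2} ⊔ Ideal.span {F 1} =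
      Ideal.span {F 2} ⊔ Ideal.span {F 1} ⊔ Ideal.span {X 0} by ac_rfl]
  obtain ⟨g, hg1, hg2, hg3, hg4⟩ := exch ((hX 0).sup (HomogI.span_singleton (hF.hom 2))) 1
    (hF.hom 1) hF.r3 he1 he3'
  have hg3' : Soc (Ideal.span {X 0} ⊔ Ideal.span {X 1} ⊔ Ideal.span {F 2}) g := by
    rwa [show Ideal.span {X 0} ⊔ Ideal.span {X 1} ⊔ Ideal.span {F 2} =
      Ideal.span {X 0} ⊔ Ideal.span {F 2} ⊔ Ideal.span {X 1} by ac_rfl]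
  obtain ⟨c, hc1, hc2, hc3, hc4⟩ := exch ((hX 0).sup (hX 1)) 2 (hF.hom 2) hF.r1 hg1 hg3'
  refine ⟨e, g, c, ?_, ?_, he4, hg4, hc4⟩
  · rwa [show t - 3 = t - 1 - 1 - 1 by omega]
  · intro ht; exact hc2 (by omega)

theorem chain_back (hF : GoodF F) {φ e g c : MvPolynomial (Fin 3) k}
    (h1 : X 0 * φ - e * F 0 ∈ Ideal.span {F 2} ⊔ Ideal.span {F 1})
    (h2 : X 1 * e - g * F 1 ∈ Ideal.span {X 0} ⊔ Ideal.span {F 2})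
    (h3 : X 2 * g - c * F 2 ∈ Ideal.span {X 0} ⊔ Ideal.span {X 1})
    (hc : c ∈ (Ideal.span {X 0} ⊔ Ideal.span {X 1} ⊔ Ideal.span {X 2} :
      Ideal (MvPolynomial (Fin 3) k))) :
    φ ∈ Ideal.span {F 2} ⊔ Ideal.span {F 1} ⊔ Ideal.span {F 0} := by
  have hg := exch_back hF.r1' h3 hc
  rw [show Ideal.span {X 0} ⊔ Ideal.span {X 1} ⊔ Ideal.span {F 2} =
      Ideal.span {X 0} ⊔ Ideal.span {F 2} ⊔ Ideal.span {X 1} by ac_rfl] at hg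
  have he := exch_back hF.r2 h2 hg
  rw [show Ideal.span {X 0} ⊔ Ideal.span {F 2} ⊔ Ideal.span {F 1} =
      Ideal.span {F 2} ⊔ Ideal.span {F 1} ⊔ Ideal.span {X 0} by ac_rfl] at he
  exact exch_back hF.r5 h1 he

end GoodF
end KLevel
end part2

section part3
section KLevel2
open MvPolynomial

variable {k : Type*} [Field k]

theorem homog_pos_mem {c : MvPolynomial (Fin 3) k} {t : ℕ} (hc : c.IsHomogeneous t) (ht : 0 < t) :
    c ∈ (Ideal.span {X 0} ⊔ Ideal.span {X 1} ⊔ Ideal.span {X 2} :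
      Ideal (MvPolynomial (Fin 3) k)) := by
  have : (Ideal.span {X 0} ⊔ Ideal.span {X 1} ⊔ Ideal.span {X 2} :
      Ideal (MvPolynomial (Fin 3) k)) = Ideal.span (X '' Set.univ) := by
    rw [← Ideal.span_union, ← Ideal.span_union]
    congr 1
    ext x
    simp [Fin.exists_fin_succ, eq_comm]
    tauto
  rw [this, mem_ideal_span_X_image]
  intro m hm
  by_contra hcon
  push Not at hcon
  have h1 := hc (mem_support_iff.1 hm)
  have : m = 0 := by ext i; exact hcon i trivial
  subst this
  simp at h1
  omega

theorem homog_zero_C {c : MvPolynomial (Fin 3) k} (hc : c.IsHomogeneous 0) : c = C (coeff 0 c) := by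
  rw [← mem_homogeneousSubmodule, homogeneousSubmodule_zero] at hc
  obtain ⟨a, rfl⟩ := Submodule.mem_one.1 hc
  simp [algebraMap_eq]

theorem spanF_eq (F : Fin 3 → MvPolynomial (Fin 3) k) :
    Ideal.span (Set.range F) = Ideal.span {F 2} ⊔ Ideal.span {F 1} ⊔ Ideal.span {F 0} := by
  rw [← Ideal.span_union, ← Ideal.span_union]
  congr 1
  ext x
  simp [Fin.exists_fin_succ, eq_comm]

namespace GoodF
variable {F : Fin 3 → MvPolynomial (Fin 3) k}

theorem soc_ne3 (hF : GoodF F) {φ : MvPolynomial (Fin 3) k} {t : ℕ} (hφ : φ.IsHomogeneous t)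
    (ht : t ≠ 3) (hs : Soc (Ideal.span (Set.range F)) φ) : φ ∈ Ideal.span (Set.range F) := by
  rw [spanF_eq] at hs ⊢
  obtain ⟨e, g, c, hc, hc0, h1, h2, h3⟩ := hF.chain hφ hs
  refine hF.chain_back h1 h2 h3 ?_
  rcases lt_or_gt_of_ne ht with h | h
  · rw [hc0 h]; exact zero_mem _
  · exact homog_pos_mem hc (by omega)

theorem exists_high (hF : GoodF F) : ∃ s : ℕ, ∀ t, s ≤ t → ∀ φ : MvPolynomial (Fin 3) k,
    φ.IsHomogeneous t → φ ∈ Ideal.span (Set.range F) := by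
  have h := hF.c1
  rw [← spanF_eq] at h
  choose s hs using h
  refine ⟨s 0 + s 1 + s 2, fun t ht φ hφ => ?_⟩
  rw [φ.as_sum]
  refine Submodule.sum_mem _ fun m hm => ?_
  have hm' := hφ (mem_support_iff.1 hm)
  have hm' : m 0 + m 1 + m 2 = t := by
    rw [← hm']; simp [Finsupp.weight_apply, Finsupp.sum_fintype, Fin.sum_univ_three]
  obtain ⟨i, hi⟩ : ∃ i, s i ≤ m i := by
    by_contra hcon
    push Not at hcon
    have := hcon 0; have := hcon 1; have := hcon 2
    omega
  have : m = (m - Finsupp.single i (s i)) + Finsupp.single i (s i) := by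
    rw [tsub_add_cancel_of_le]
    simpa using hi
  rw [this, ← mul_one (coeff _ φ), ← monomial_mul, ← X_pow_eq_monomial]
  exact Ideal.mul_mem_left _ _ (hs i)

theorem high (hF : GoodF F) {t : ℕ} (ht : 4 ≤ t) {φ : MvPolynomial (Fin 3) k}
    (hφ : φ.IsHomogeneous t) : φ ∈ Ideal.span (Set.range F) := by
  obtain ⟨s, hs⟩ := hF.exists_high
  have : ∀ n t, 4 ≤ t → s ≤ t + n → ∀ φ : MvPolynomial (Fin 3) k,
      φ.IsHomogeneous t → φ ∈ Ideal.span (Set.range F) := by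
    intro n
    induction n with
    | zero => intro t _ h φ hφ; exact hs t h φ hφ
    | succ n ih =>
      intro t ht h φ hφ
      refine hF.soc_ne3 hφ (by omega) fun j => ?_
      exact ih (1 + t) (by omega) (by omega) _ ((isHomogeneous_X _ j).mul hφ)
  exact this s t ht (by omega) φ hφ

theorem soc3 (hF : GoodF F) {φ ψ : MvPolynomial (Fin 3) k} (hφ : φ.IsHomogeneous 3)
    (hψ : ψ.IsHomogeneous 3) (hn : ψ ∉ Ideal.span (Set.range F)) :
    ∃ a : k, φ - C a * ψ ∈ Ideal.span (Set.range F) := by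
  have hsoc : ∀ φ : MvPolynomial (Fin 3) k, φ.IsHomogeneous 3 → Soc (Ideal.span (Set.range F)) φ :=
    fun φ hφ j => hF.high (t := 1 + 3) (by omega) ((isHomogeneous_X _ j).mul hφ)
  have h1 := hsoc φ hφ
  have h2 := hsoc ψ hψ
  rw [spanF_eq] at h1 h2 hn ⊢
  obtain ⟨e, g, c, hc, -, a1, a2, a3⟩ := hF.chain hφ h1
  obtain ⟨e', g', c', hc', -, b1, b2, b3⟩ := hF.chain hψ h2
  have e1 := homog_zero_C hc
  have e2 := homog_zero_C hc'
  set x := coeff 0 c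
  set y := coeff 0 c'
  have hy : y ≠ 0 := by
    intro hy
    apply hn
    refine hF.chain_back b1 b2 b3 ?_
    rw [e2, hy, map_zero]; exact zero_mem _
  refine ⟨x / y, ?_⟩
  refine hF.chain_back (e := e - C (x/y) * e') (g := g - C (x/y) * g') (c := 0) ?_ ?_ ?_ (zero_mem _)
  · rw [show X 0 * (φ - C (x/y) * ψ) - (e - C (x/y) * e') * F 0
      = (X 0 * φ - e * F 0) - C (x/y) * (X 0 * ψ - e' * F 0) by ring]
    exact Ideal.sub_mem _ a1 (Ideal.mul_mem_left _ _ b1)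
  · rw [show X 1 * (e - C (x/y) * e') - (g - C (x/y) * g') * F 1
      = (X 1 * e - g * F 1) - C (x/y) * (X 1 * e' - g' * F 1) by ring]
    exact Ideal.sub_mem _ a2 (Ideal.mul_mem_left _ _ b2)
  · have h0 : c - C (x/y) * c' = 0 := by
      rw [e1, e2, ← C_mul, div_mul_cancel₀ _ hy, sub_self]
    rw [show X 2 * (g - C (x/y) * g') - 0 * F 2
      = (X 2 * g - c * F 2) - C (x/y) * (X 2 * g' - c' * F 2) + (c - C (x/y) * c') * F 2 by ring,
      h0, zero_mul, add_zero]
    exact Ideal.sub_mem _ a3 (Ideal.mul_mem_left _ _ b3)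

/-- the nine products -/
noncomputable def nine (F : Fin 3 → MvPolynomial (Fin 3) k) (p : Fin 3 × Fin 3) : MvPolynomial (Fin 3) k :=
  X p.1 * F p.2

theorem homog_one_eq {c : MvPolynomial (Fin 3) k} (hc : c.IsHomogeneous 1) :
    ∃ a : Fin 3 → k, c = ∑ i, C (a i) * X i := by
  rw [← mem_homogeneousSubmodule, homogeneousSubmodule_one_eq_span_X,
    Submodule.mem_span_range_iff_exists_fun] at hc
  obtain ⟨a, ha⟩ := hc
  exact ⟨a, by simp [← ha, smul_eq_C_mul]⟩

theorem linInd_nine (hF : GoodF F) : LinearIndependent k (nine F) := by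
  rw [linearIndependent_iff_card_le_finrank_span]
  set W := Submodule.span k (Set.range (nine F))
  have hmem : ∀ φ : MvPolynomial (Fin 3) k, φ.IsHomogeneous 3 → φ ∈ Ideal.span (Set.range F) →
      φ ∈ W := by
    intro φ hφ h
    obtain ⟨c, hc, rfl⟩ := exists_homog_coeffs (n := 1) hF.hom hφ h
    refine Submodule.sum_mem _ fun i _ => ?_
    obtain ⟨a, ha⟩ := homog_one_eq (hc i)
    rw [ha, Finset.sum_mul]
    refine Submodule.sum_mem _ fun j _ => ?_
    rw [mul_assoc, ← smul_eq_C_mul]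
    exact Submodule.smul_mem _ _ (Submodule.subset_span ⟨(j, i), rfl⟩)
  have h10 : Module.finrank k (homogeneousSubmodule (Fin 3) k 3) = 10 := by
    rw [finrank_homogeneousSubmodule']; decide
  have : ∃ ψ : MvPolynomial (Fin 3) k, homogeneousSubmodule (Fin 3) k 3 ≤ W ⊔ Submodule.span k {ψ} := by
    by_cases h : ∃ ψ : MvPolynomial (Fin 3) k, ψ.IsHomogeneous 3 ∧ ψ ∉ Ideal.span (Set.range F)
    · obtain ⟨ψ, h1, h2⟩ := h
      refine ⟨ψ, fun φ hφ => ?_⟩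
      obtain ⟨a, ha⟩ := hF.soc3 hφ h1 h2
      rw [show φ = (φ - C a * ψ) + a • ψ by rw [smul_eq_C_mul]; ring]
      refine Submodule.add_mem_sup (hmem _ ?_ ha) (Submodule.smul_mem _ _ (Submodule.mem_span_singleton_self _))
      rw [← mem_homogeneousSubmodule] at h1 ⊢
      rw [← smul_eq_C_mul]
      exact Submodule.sub_mem _ hφ (Submodule.smul_mem _ _ h1)
    · push Not at h
      exact ⟨0, fun φ hφ => Submodule.mem_sup_left (hmem _ hφ (h φ hφ))⟩
  obtain ⟨ψ, hψ⟩ := this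
  have : Module.Finite k W := Module.Finite.span_of_finite k (Set.finite_range _)
  have : Module.Finite k (Submodule.span k {ψ}) := Module.Finite.span_of_finite k (Set.finite_singleton _)
  have h1 := Submodule.finrank_mono hψ
  have h2 := Submodule.finrank_add_le_finrank_add_finrank W (Submodule.span k {ψ})
  have h3 := finrank_span_le_card (R := k) ({ψ} : Set (MvPolynomial (Fin 3) k))
  simp at h3
  simp only [Fintype.card_prod, Fintype.card_fin, Set.finrank]
  change _ ≤ Module.finrank k W
  omega

theorem exists_notMem3 (hF : GoodF F) : ∃ ψ : MvPolynomial (Fin 3) k, ψ.IsHomogeneous 3 ∧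
    ψ ∉ Ideal.span (Set.range F) := by
  by_contra hcon
  push Not at hcon
  have h1 : ∀ t, t ≤ 3 → ∀ φ : MvPolynomial (Fin 3) k, φ.IsHomogeneous (3 - t) →
      φ ∈ Ideal.span (Set.range F) := by
    intro t
    induction t with
    | zero => intro _ φ hφ; exact hcon φ hφ
    | succ t ih =>
      intro ht φ hφ
      refine hF.soc_ne3 hφ (by omega) fun j => ih (by omega) _ ?_
      rw [show 3 - t = 1 + (3 - (t+1)) by omega]
      exact (isHomogeneous_X _ j).mul hφ
  have h2 := h1 3 le_rfl 1 (isHomogeneous_one _ _)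
  exact one_ne_zero (eq_zero_of_mem_span_homog hF.hom (n := 0) (by omega) (isHomogeneous_one _ _) h2)

theorem noLinSyz (hF : GoodF F) {c : Fin 3 → MvPolynomial (Fin 3) k}
    (hc : ∀ i, (c i).IsHomogeneous 1) (h : ∑ i, c i * F i = 0) : ∀ i, c i = 0 := by
  choose a ha using fun i => homog_one_eq (hc i)
  have h1 := Fintype.linearIndependent_iff.1 hF.linInd_nine (fun p => a p.2 p.1) (by
    rw [← h, Fintype.sum_prod_type_right]
    refine Finset.sum_congr rfl fun i _ => ?_
    rw [ha i, Finset.sum_mul]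
    refine Finset.sum_congr rfl fun j _ => ?_
    simp [nine, smul_eq_C_mul, mul_assoc])
  intro i
  rw [ha i]
  exact Finset.sum_eq_zero fun j _ => by rw [h1 (j, i)]; simp

theorem linInd (hF : GoodF F) : LinearIndependent k F := by
  rw [Fintype.linearIndependent_iff]
  intro a h i
  have := hF.noLinSyz (c := fun i => C (a i) * X 0) (fun i => by
    simpa using (isHomogeneous_C (Fin 3) (a i)).mul (isHomogeneous_X k (0 : Fin 3))) (by
    have : ∑ i, C (a i) * X 0 * F i = X 0 * ∑ i, a i • F i := by
      rw [Finset.mul_sum]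
      exact Finset.sum_congr rfl fun i _ => by rw [smul_eq_C_mul]; ring
    rw [this, h, mul_zero]) i
  simpa [X_ne_zero] using this

theorem mem2 (hF : GoodF F) {φ : MvPolynomial (Fin 3) k} (hφ : φ.IsHomogeneous 2)
    (h : φ ∈ Ideal.span (Set.range F)) : ∃ a : Fin 3 → k, φ = ∑ i, C (a i) * F i := by
  obtain ⟨c, hc, rfl⟩ := exists_homog_coeffs (n := 0) hF.hom hφ h
  exact ⟨fun i => coeff 0 (c i), Finset.sum_congr rfl fun i _ => by rw [← homog_zero_C (hc i)]⟩

theorem k3 (hF : GoodF F) {l m m' : MvPolynomial (Fin 3) k} (hl : l.IsHomogeneous 1)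
    (hm : m.IsHomogeneous 1) (hm' : m'.IsHomogeneous 1) (hl0 : l ≠ 0) (hm0 : m ≠ 0)
    (h : l * m ∈ Ideal.span (Set.range F)) (h' : l * m' ∈ Ideal.span (Set.range F)) :
    ∃ a : k, m' = C a * m := by
  obtain ⟨a, ha⟩ := hF.mem2 (hl.mul hm) h
  obtain ⟨b, hb⟩ := hF.mem2 (hl.mul hm') h'
  have := hF.noLinSyz (c := fun i => C (a i) * m' - C (b i) * m) (fun i => by
    refine IsHomogeneous.sub ?_ ?_
    · simpa using (isHomogeneous_C (Fin 3) (a i)).mul hm'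
    · simpa using (isHomogeneous_C (Fin 3) (b i)).mul hm) (by
    have : ∑ i, (C (a i) * m' - C (b i) * m) * F i
      = m' * ∑ i, C (a i) * F i - m * ∑ i, C (b i) * F i := by
      rw [Finset.mul_sum, Finset.mul_sum, ← Finset.sum_sub_distrib]
      exact Finset.sum_congr rfl fun i _ => by ring
    rw [this, ← ha, ← hb]; ring)
  obtain ⟨i, hi⟩ : ∃ i, a i ≠ 0 := by
    by_contra hcon
    push Not at hcon
    apply mul_ne_zero hl0 hm0
    rw [ha]; simp [hcon]
  refine ⟨(a i)⁻¹ * b i, ?_⟩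
  have h2 : C (a i) * m' = C (b i) * m := sub_eq_zero.1 (this i)
  rw [C_mul, mul_assoc, ← h2, ← mul_assoc, ← C_mul, inv_mul_cancel₀ hi, C_1, one_mul]

/-- `ℓ ≠ 0`: two of the products `ℓ X_i` are independent modulo `(F)` -/
theorem pair1 (hF : GoodF F) {l : MvPolynomial (Fin 3) k} (hl : l.IsHomogeneous 1) (hl0 : l ≠ 0) :
    ∃ p q : Fin 3, ∀ a b : k, l * (C a * X p + C b * X q) ∈ Ideal.span (Set.range F) →
      a = 0 ∧ b = 0 := by
  have hX : ∀ (p q : Fin 3) (a b : k),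
      (C a * X p + C b * X q : MvPolynomial (Fin 3) k).IsHomogeneous 1 := by
    intro p q a b
    refine IsHomogeneous.add ?_ ?_
    · simpa using (isHomogeneous_C (Fin 3) a).mul (isHomogeneous_X k p)
    · simpa using (isHomogeneous_C (Fin 3) b).mul (isHomogeneous_X k q)
  have hco : ∀ (i j : Fin 3) (a : k), coeff (Finsupp.single i 1) (C a * X j : MvPolynomial (Fin 3) k)
      = if j = i then a else 0 := by
    intro i j a
    rw [coeff_C_mul, coeff_X]
    simp [Finsupp.single_left_inj]
  by_cases h : ∃ m : MvPolynomial (Fin 3) k, m.IsHomogeneous 1 ∧ m ≠ 0 ∧ l * m ∈ Ideal.span (Set.range F)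
  · obtain ⟨m, hm, hm0, hlm⟩ := h
    obtain ⟨c, hc⟩ := homog_one_eq hm
    obtain ⟨i, hi⟩ : ∃ i, c i ≠ 0 := by
      by_contra hcon
      push Not at hcon
      apply hm0; rw [hc]; simp [hcon]
    refine ⟨i + 1, i + 2, fun a b hab => ?_⟩
    obtain ⟨d, hd⟩ := hF.k3 hl hm (hX _ _ a b) hl0 hm0 hlm hab
    have hmi : ∀ j, coeff (Finsupp.single j 1) m = c j := by
      intro j
      rw [hc, coeff_sum]
      simp [hco]
    have hh : ∀ j, (if i + 1 = j then a else 0) + (if i + 2 = j then b else 0) = d * c j := by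
      intro j
      have := congrArg (coeff (Finsupp.single j 1)) hd
      rwa [coeff_add, hco, hco, coeff_C_mul, hmi] at this
    have hd0 : d = 0 := by
      have h0 := hh i
      rw [if_neg (by fin_cases i <;> decide), if_neg (by fin_cases i <;> decide), add_zero] at h0
      exact (mul_eq_zero.1 h0.symm).resolve_right hi
    have h1 := hh (i+1)
    have h2 := hh (i+2)
    rw [hd0, zero_mul, if_pos rfl, if_neg (by fin_cases i <;> decide), add_zero] at h1
    rw [hd0, zero_mul, if_neg (by fin_cases i <;> decide), if_pos rfl, zero_add] at h2
    exact ⟨h1, h2⟩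
  · refine ⟨0, 1, fun a b hab => ?_⟩
    push Not at h
    have h0 : (C a * X 0 + C b * X 1 : MvPolynomial (Fin 3) k) = 0 := by
      by_contra hne
      exact h _ (hX _ _ a b) hne hab
    have h1 := congrArg (coeff (Finsupp.single 0 1)) h0
    have h2 := congrArg (coeff (Finsupp.single 1 1)) h0
    rw [coeff_add, hco, hco] at h1 h2
    simpa using And.intro h1 h2

theorem pair2 (hF : GoodF F) {φ : MvPolynomial (Fin 3) k} {t : ℕ} (hφ : φ.IsHomogeneous t)
    (ht : t ≠ 3) (h : φ ∉ Ideal.span (Set.range F)) : ∃ j, X j * φ ∉ Ideal.span (Set.range F) := by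
  by_contra hcon
  push Not at hcon
  exact h (hF.soc_ne3 hφ ht hcon)

theorem exists_eval_ne (hF : GoodF F) (c : Fin 3 → k) {j : Fin 3} (hc : c j ≠ 0) :
    ∃ m, eval c (F m) ≠ 0 := by
  by_contra hcon
  push Not at hcon
  obtain ⟨s, hs⟩ := hF.c1 j
  rw [← spanF_eq, Ideal.mem_span_range_iff_exists_fun] at hs
  obtain ⟨a, ha⟩ := hs
  have := congrArg (eval c) ha
  simp [hcon] at this
  exact pow_ne_zero s hc this.symm

end GoodF
end KLevel2
end part3

section part4
section Tops
open MvPolynomial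

variable {k : Type*} [Field k]

/-- degrees of the eight basis elements -/
def d8 : Fin 8 → ℕ := ![0, 1, 1, 1, 2, 2, 2, 3]

structure TopData (F : Fin 3 → MvPolynomial (Fin 3) k) (e : Fin 8 → MvPolynomial (Fin 3) k) :
    Prop where
  hom : ∀ i, (e i).IsHomogeneous (d8 i)
  span : ∀ t φ, φ.IsHomogeneous t → ∃ α : Fin 8 → k, (∀ i, d8 i ≠ t → α i = 0) ∧
    φ - ∑ i, C (α i) * e i ∈ Ideal.span (Set.range F)

/-- independence modulo `(F)` -/
def IndMod (F : Fin 3 → MvPolynomial (Fin 3) k) {n : ℕ} (v : Fin n → MvPolynomial (Fin 3) k) :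
    Prop := ∀ a : Fin n → k, ∑ i, C (a i) * v i ∈ Ideal.span (Set.range F) → a = 0

/-- degree `t` part of `(F)` in `V_t` -/
noncomputable def Ft (F : Fin 3 → MvPolynomial (Fin 3) k) (t : ℕ) :
    Submodule k (homogeneousSubmodule (Fin 3) k t) :=
  ((Ideal.span (Set.range F)).restrictScalars k).comap (homogeneousSubmodule (Fin 3) k t).subtype

theorem mkQ_sum_smul {n t : ℕ} {F : Fin 3 → MvPolynomial (Fin 3) k}
    {v : Fin n → homogeneousSubmodule (Fin 3) k t} {a : Fin n → k} :
    (Ft F t).mkQ (∑ i, a i • v i) = ∑ i, a i • (Ft F t).mkQ (v i) := by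
  rw [map_sum]
  exact Finset.sum_congr rfl fun i _ => map_smul _ _ _

theorem IndMod_iff (F : Fin 3 → MvPolynomial (Fin 3) k) {n t : ℕ}
    (v : Fin n → homogeneousSubmodule (Fin 3) k t) :
    IndMod F (fun i => (v i : MvPolynomial (Fin 3) k)) ↔
      LinearIndependent k (fun i => (Ft F t).mkQ (v i)) := by
  rw [Fintype.linearIndependent_iff]
  unfold IndMod
  refine forall_congr' fun a => ?_
  have : (∑ i, a i • (Ft F t).mkQ (v i) = 0) ↔
      ∑ i, C (a i) * (v i : MvPolynomial (Fin 3) k) ∈ Ideal.span (Set.range F) := by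
    rw [← mkQ_sum_smul, Submodule.mkQ_apply, Submodule.Quotient.mk_eq_zero]
    simp [Ft, smul_eq_C_mul]
  rw [this, _root_.funext_iff]
  rfl

theorem GoodF.finrank_quot {F : Fin 3 → MvPolynomial (Fin 3) k} (hF : GoodF F) {t : ℕ}
    (ht : t = 1 ∨ t = 2) : Module.finrank k (homogeneousSubmodule (Fin 3) k t ⧸ Ft F t) = 3 := by
  have h := Submodule.finrank_quotient_add_finrank (Ft F t)
  rw [finrank_homogeneousSubmodule'] at h
  rcases ht with rfl | rfl
  · have : Ft F 1 = ⊥ := by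
      rw [eq_bot_iff]
      intro x hx
      have := eq_zero_of_mem_span_homog hF.hom (n := 1) (by omega) x.2 hx
      simpa using this
    rw [this] at h ⊢
    simpa using h
  · have h3 : Module.finrank k (Ft F 2) = 3 := by
      rw [← Submodule.finrank_map_subtype_eq]
      have : (Ft F 2).map (homogeneousSubmodule (Fin 3) k 2).subtype = Submodule.span k (Set.range F) := by
        apply le_antisymm
        · rintro _ ⟨x, hx, rfl⟩
          obtain ⟨a, ha⟩ := hF.mem2 x.2 hx
          simp only [Submodule.subtype_apply, ha]
          refine Submodule.sum_mem _ fun i _ => ?_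
          rw [← smul_eq_C_mul]
          exact Submodule.smul_mem _ _ (Submodule.subset_span ⟨i, rfl⟩)
        · rw [Submodule.span_le]
          rintro _ ⟨i, rfl⟩
          exact ⟨⟨F i, hF.hom i⟩, Ideal.subset_span ⟨i, rfl⟩, rfl⟩
      rw [this, finrank_span_eq_card hF.linInd]; simp
    rw [h3] at h
    simp [Nat.choose] at h
    exact h

theorem GoodF.extend {F : Fin 3 → MvPolynomial (Fin 3) k} (hF : GoodF F) {t : ℕ}
    (ht : t = 1 ∨ t = 2) {n : ℕ} (hn : n < 3) {v : Fin n → MvPolynomial (Fin 3) k}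
    (hv : ∀ i, (v i).IsHomogeneous t) (hi : IndMod F v) :
    ∃ x : MvPolynomial (Fin 3) k, x.IsHomogeneous t ∧ IndMod F (Fin.snoc v x : Fin (n+1) → _) := by
  have h1 := (IndMod_iff F (fun i => (⟨v i, hv i⟩ : homogeneousSubmodule (Fin 3) k t))).1 hi
  obtain ⟨y, hy⟩ := exists_linearIndependent_snoc_of_lt_finrank h1 (by rw [hF.finrank_quot ht]; exact hn)
  obtain ⟨x, rfl⟩ := (Ft F t).mkQ_surjective y
  refine ⟨x, x.2, ?_⟩
  have h2 := (IndMod_iff F (Fin.snoc (α := fun _ => homogeneousSubmodule (Fin 3) k t)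
    (fun i => (⟨v i, hv i⟩ : homogeneousSubmodule (Fin 3) k t)) x)).2 (by
      have e : (fun i => (Ft F t).mkQ (Fin.snoc (α := fun _ => homogeneousSubmodule (Fin 3) k t)
        (fun i => (⟨v i, hv i⟩ : homogeneousSubmodule (Fin 3) k t)) x i)) = Fin.snoc
        (α := fun _ => homogeneousSubmodule (Fin 3) k t ⧸ Ft F t)
        (fun i => (Ft F t).mkQ ⟨v i, hv i⟩) ((Ft F t).mkQ x) := by
        funext i
        refine Fin.lastCases ?_ (fun j => ?_) i <;> simp
      rw [e]
      exact hy)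
  convert h2 using 1
  funext i
  refine Fin.lastCases ?_ (fun j => ?_) i <;> simp

theorem GoodF.spans {F : Fin 3 → MvPolynomial (Fin 3) k} (hF : GoodF F) {t : ℕ}
    (ht : t = 1 ∨ t = 2) {v : Fin 3 → MvPolynomial (Fin 3) k}
    (hv : ∀ i, (v i).IsHomogeneous t) (hi : IndMod F v) {φ : MvPolynomial (Fin 3) k}
    (hφ : φ.IsHomogeneous t) :
    ∃ a : Fin 3 → k, φ - ∑ i, C (a i) * v i ∈ Ideal.span (Set.range F) := by
  have h1 := (IndMod_iff F (fun i => (⟨v i, hv i⟩ : homogeneousSubmodule (Fin 3) k t))).1 hi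
  have h2 := h1.span_eq_top_of_card_eq_finrank (by rw [hF.finrank_quot ht]; simp)
  have h3 : (Ft F t).mkQ ⟨φ, hφ⟩ ∈ Submodule.span k (Set.range fun i => (Ft F t).mkQ
    (⟨v i, hv i⟩ : homogeneousSubmodule (Fin 3) k t)) := by rw [h2]; trivial
  rw [Submodule.mem_span_range_iff_exists_fun] at h3
  obtain ⟨a, ha⟩ := h3
  refine ⟨a, ?_⟩
  rw [← mkQ_sum_smul, eq_comm, ← sub_eq_zero, ← map_sub, Submodule.mkQ_apply,
    Submodule.Quotient.mk_eq_zero] at ha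
  simpa [Ft, smul_eq_C_mul] using ha

theorem TopData.of {F : Fin 3 → MvPolynomial (Fin 3) k} (hF : GoodF F)
    {u v : Fin 3 → MvPolynomial (Fin 3) k} {w : MvPolynomial (Fin 3) k}
    (hu : ∀ i, (u i).IsHomogeneous 1) (hv : ∀ i, (v i).IsHomogeneous 2) (hw : w.IsHomogeneous 3)
    (iu : IndMod F u) (iv : IndMod F v) (iw : w ∉ Ideal.span (Set.range F)) :
    TopData F ![1, u 0, u 1, u 2, v 0, v 1, v 2, w] := by
  constructor
  · intro i
    fin_cases i
    exacts [isHomogeneous_one _ _, hu 0, hu 1, hu 2, hv 0, hv 1, hv 2, hw]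
  · intro t φ hφ
    match t, hφ with
    | 0, hφ =>
      refine ⟨![coeff 0 φ, 0, 0, 0, 0, 0, 0, 0], ?_, ?_⟩
      · intro i hi; fin_cases i <;> simp_all [d8]
      · simp only [Fin.sum_univ_eight]
        simp [← homog_zero_C hφ]
    | 1, hφ =>
      obtain ⟨a, ha⟩ := hF.spans (Or.inl rfl) hu iu hφ
      refine ⟨![0, a 0, a 1, a 2, 0, 0, 0, 0], ?_, ?_⟩
      · intro i hi; fin_cases i <;> simp_all [d8]
      · simp only [Fin.sum_univ_eight]
        simpa [Fin.sum_univ_three] using ha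
    | 2, hφ =>
      obtain ⟨a, ha⟩ := hF.spans (Or.inr rfl) hv iv hφ
      refine ⟨![0, 0, 0, 0, a 0, a 1, a 2, 0], ?_, ?_⟩
      · intro i hi; fin_cases i <;> simp_all [d8]
      · simp only [Fin.sum_univ_eight]
        simpa [Fin.sum_univ_three] using ha
    | 3, hφ =>
      obtain ⟨a, ha⟩ := hF.soc3 hφ hw iw
      refine ⟨![0, 0, 0, 0, 0, 0, 0, a], ?_, ?_⟩
      · intro i hi; fin_cases i <;> simp_all [d8]
      · simp only [Fin.sum_univ_eight]
        simpa using ha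
    | t + 4, hφ =>
      refine ⟨0, fun _ _ => rfl, ?_⟩
      simpa using hF.high (t := t + 4) (by omega) hφ

theorem IndMod_one {F : Fin 3 → MvPolynomial (Fin 3) k} {v : MvPolynomial (Fin 3) k}
    (h : v ∉ Ideal.span (Set.range F)) : IndMod F ![v] := by
  intro a ha
  simp only [Finset.univ_unique, Finset.sum_singleton, Fin.default_eq_zero] at ha
  funext i
  obtain rfl : i = 0 := Subsingleton.elim _ _
  by_contra h0
  apply h
  have := Ideal.mul_mem_left _ (C (a 0)⁻¹) ha
  rwa [← mul_assoc, ← C_mul, inv_mul_cancel₀ h0, C_1, one_mul] at this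

theorem GoodF.IndMod_X {F : Fin 3 → MvPolynomial (Fin 3) k} (hF : GoodF F) :
    IndMod F (X : Fin 3 → MvPolynomial (Fin 3) k) := by
  intro a ha
  have h : (∑ i, C (a i) * X i : MvPolynomial (Fin 3) k).IsHomogeneous 1 :=
    IsHomogeneous.sum _ _ _ fun i _ => by
      simpa using (isHomogeneous_C (Fin 3) (a i)).mul (isHomogeneous_X k i)
  have h0 := eq_zero_of_mem_span_homog hF.hom (by omega) h ha
  funext i
  have := congrArg (coeff (Finsupp.single i 1)) h0
  rw [coeff_sum] at this
  simpa [coeff_X, Finsupp.single_left_inj] using this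

end Tops
end part4

section part5
section RLevel
open MvPolynomial

/-- polynomials of degree `< t` -/
noncomputable def LL (R : Type*) [CommRing R] (t : ℕ) : Submodule R (MvPolynomial (Fin 3) R) :=
  restrictSupport R {m | m.degree < t}

section LLsec
variable {R : Type*} [CommRing R]

theorem mem_LL {t : ℕ} {p : MvPolynomial (Fin 3) R} :
    p ∈ LL R t ↔ ∀ m ∈ p.support, m.degree < t := by
  rw [LL, mem_restrictSupport_iff]; rfl

theorem LL_mono {a b : ℕ} (h : a ≤ b) : LL R a ≤ LL R b := by
  intro p hp
  rw [mem_LL] at *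
  exact fun m hm => (hp m hm).trans_le h

theorem LL_mul {a b : ℕ} {p q : MvPolynomial (Fin 3) R} (hp : p ∈ LL R (a + 1)) (hq : q ∈ LL R b) :
    p * q ∈ LL R (a + b) := by
  classical
  rw [mem_LL] at *
  intro m hm
  obtain ⟨x, hx, y, hy, rfl⟩ := Finset.mem_add.1 (support_mul p q hm)
  rw [map_add]
  have := hp x hx; have := hq y hy
  omega

theorem homog_mem_LL {t : ℕ} {p : MvPolynomial (Fin 3) R} (hp : p.IsHomogeneous t) :
    p ∈ LL R (t + 1) := by
  rw [mem_LL]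
  intro m hm
  have h1 := hp (mem_support_iff.1 hm)
  have : m.degree = t := by
    rw [← h1]; simp [Finsupp.weight_apply, Finsupp.sum_fintype, Finsupp.degree_eq_sum]
  omega

theorem monomial_mem_LL {t : ℕ} {m : Fin 3 →₀ ℕ} (h : m.degree < t) (r : R) :
    monomial m r ∈ LL R t := by
  rw [mem_LL]
  intro x hx
  have := Finset.mem_singleton.1 (support_monomial_subset hx)
  rwa [this]

theorem exists_mem_LL (p : MvPolynomial (Fin 3) R) : ∃ t, p ∈ LL R t := by
  refine ⟨p.support.sup Finsupp.degree + 1, mem_LL.2 fun m hm => ?_⟩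
  exact Nat.lt_succ_of_le (Finset.le_sup (f := Finsupp.degree) hm)

theorem LL_zero {p : MvPolynomial (Fin 3) R} (h : p ∈ LL R 0) : p = 0 := by
  rw [mem_LL] at h
  rw [← support_eq_empty, Finset.eq_empty_iff_forall_notMem]
  intro m hm
  exact absurd (h m hm) (by omega)

theorem LL_le_of_monomials {t : ℕ} {W : Submodule R (MvPolynomial (Fin 3) R)}
    (h : ∀ m : Fin 3 →₀ ℕ, m.degree < t → monomial m 1 ∈ W) : LL R t ≤ W := by
  intro p hp
  rw [mem_LL] at hp
  rw [p.as_sum]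
  refine Submodule.sum_mem _ fun m hm => ?_
  rw [← mul_one (coeff m p), ← smul_eq_mul, ← smul_monomial]
  exact Submodule.smul_mem _ _ (h m (hp m hm))

instance LL_finite (t : ℕ) : Module.Finite R (LL R t) := by
  have : Finite {m : Fin 3 →₀ ℕ | m.degree < t} := by
    refine Set.Finite.subset (s := ⋃ i ∈ Finset.range t,
      ((Finset.univ : Finset (Fin 3)).finsuppAntidiag i : Set (Fin 3 →₀ ℕ))) ?_ ?_
    · exact Set.Finite.biUnion (Finset.finite_toSet _) fun i _ => Finset.finite_toSet _
    · intro m hm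
      simp only [Set.mem_iUnion]
      refine ⟨m.degree, by simpa using hm, ?_⟩
      simp [Finsupp.degree_eq_sum]
  exact Module.Finite.of_basis (basisRestrictSupport R _)

end LLsec

variable {k : Type*} [Field k] {R : Type*} [CommRing R] [Algebra k R]

/-- `p` has degree `≤ t` with degree-`t` part `φ` (defined over `k`) -/
structure PTop (R : Type*) [CommRing R] [Algebra k R] (t : ℕ) (φ : MvPolynomial (Fin 3) k)
    (p : MvPolynomial (Fin 3) R) : Prop where
  hom : φ.IsHomogeneous t
  low : p - map (algebraMap k R) φ ∈ LL R t

theorem map_mem_LL {t : ℕ} {φ : MvPolynomial (Fin 3) k} (h : φ.IsHomogeneous t) :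
    map (algebraMap k R) φ ∈ LL R (t + 1) := homog_mem_LL (h.map _)

theorem PTop.mem {t : ℕ} {φ : MvPolynomial (Fin 3) k} {p : MvPolynomial (Fin 3) R}
    (h : PTop R t φ p) : p ∈ LL R (t + 1) := by
  have := (LL R (t+1)).add_mem (LL_mono (Nat.le_succ t) h.low) (map_mem_LL h.hom)
  simpa using this

theorem PTop.mul {a b : ℕ} {φ ψ : MvPolynomial (Fin 3) k} {p q : MvPolynomial (Fin 3) R}
    (hp : PTop R a φ p) (hq : PTop R b ψ q) : PTop R (a + b) (φ * ψ) (p * q) := by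
  refine ⟨hp.hom.mul hq.hom, ?_⟩
  rw [map_mul, show p * q - map (algebraMap k R) φ * map (algebraMap k R) ψ =
    p * (q - map (algebraMap k R) ψ) +
      map (algebraMap k R) ψ * (p - map (algebraMap k R) φ) by ring]
  refine (LL R _).add_mem (LL_mul hp.mem hq.low) ?_
  rw [add_comm a b]
  exact LL_mul (map_mem_LL hq.hom) hp.low

theorem PTop.self {t : ℕ} {φ : MvPolynomial (Fin 3) k} (h : φ.IsHomogeneous t) :
    PTop R t φ (map (algebraMap k R) φ) := ⟨h, by simp⟩

theorem PTop.X (i : Fin 3) : PTop R 1 (X i : MvPolynomial (Fin 3) k) (MvPolynomial.X i) :=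
  ⟨isHomogeneous_X _ _, by simp⟩

theorem PTop.one : PTop R 0 (1 : MvPolynomial (Fin 3) k) 1 :=
  ⟨isHomogeneous_one _ _, by simp⟩

/-- parity class of an exponent -/
def par (m : Fin 3 →₀ ℕ) : Fin 8 :=
  if m 0 % 2 = 0 then
    if m 1 % 2 = 0 then (if m 2 % 2 = 0 then 0 else 3) else (if m 2 % 2 = 0 then 2 else 6)
  else
    if m 1 % 2 = 0 then (if m 2 % 2 = 0 then 1 else 5) else (if m 2 % 2 = 0 then 4 else 7)

/-- squarefree exponents -/
noncomputable def rep (i : Fin 8) : Fin 3 →₀ ℕ := Finsupp.equivFunOnFinite.symm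
  ((![![0, 0, 0], ![1, 0, 0], ![0, 1, 0], ![0, 0, 1], ![1, 1, 0], ![1, 0, 1], ![0, 1, 1],
    ![1, 1, 1]] : Fin 8 → Fin 3 → ℕ) i)

theorem rep_le (i : Fin 8) (j : Fin 3) : rep i j ≤ 1 := by
  fin_cases i <;> fin_cases j <;> simp [rep]

theorem par_rep (i : Fin 8) : par (rep i) = i := by
  fin_cases i <;> simp [rep, par]

theorem rep_inj : Function.Injective rep := fun i j h => by rw [← par_rep i, h, par_rep]

theorem d8_par (m : Fin 3 →₀ ℕ) : d8 (par m) = m 0 % 2 + m 1 % 2 + m 2 % 2 := by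
  have h0 := Nat.mod_two_eq_zero_or_one (m 0)
  have h1 := Nat.mod_two_eq_zero_or_one (m 1)
  have h2 := Nat.mod_two_eq_zero_or_one (m 2)
  rcases h0 with h0 | h0 <;> rcases h1 with h1 | h1 <;> rcases h2 with h2 | h2 <;>
    simp [par, h0, h1, h2, d8]

theorem par_add (m : Fin 3 →₀ ℕ) (i : Fin 3) : par (m + Finsupp.single i 2) = par m := by
  fin_cases i <;> simp [par, Finsupp.single_apply]

/-- twisted monomials -/
noncomputable def mon (f : Fin 3 → MvPolynomial (Fin 3) R) (E : Fin 8 → MvPolynomial (Fin 3) R)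
    (m : Fin 3 →₀ ℕ) : MvPolynomial (Fin 3) R := (∏ i, f i ^ (m i / 2)) * E (par m)

noncomputable def Psi (f : Fin 3 → MvPolynomial (Fin 3) R) (E : Fin 8 → MvPolynomial (Fin 3) R) :
    MvPolynomial (Fin 3) R →ₗ[R] MvPolynomial (Fin 3) R :=
  (basisMonomials (Fin 3) R).constr R (mon f E)

theorem Psi_monomial (f : Fin 3 → MvPolynomial (Fin 3) R) (E : Fin 8 → MvPolynomial (Fin 3) R)
    (m : Fin 3 →₀ ℕ) : Psi f E (monomial m 1) = mon f E m := by
  have := (basisMonomials (Fin 3) R).constr_basis R (mon f E) m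
  rwa [coe_basisMonomials] at this

theorem mon_rep (f : Fin 3 → MvPolynomial (Fin 3) R) (E : Fin 8 → MvPolynomial (Fin 3) R)
    (i : Fin 8) : mon f E (rep i) = E i := by
  rw [mon, par_rep, Finset.prod_eq_one, one_mul]
  intro j _
  have := rep_le i j
  rw [show rep i j / 2 = 0 by omega, pow_zero]

theorem Psi_sq_mul (f : Fin 3 → MvPolynomial (Fin 3) R) (E : Fin 8 → MvPolynomial (Fin 3) R)
    (i : Fin 3) (h : MvPolynomial (Fin 3) R) : Psi f E (X i ^ 2 * h) = f i * Psi f E h := by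
  have key : (Psi f E) ∘ₗ (LinearMap.mulLeft R (X i ^ 2)) = (LinearMap.mulLeft R (f i)) ∘ₗ Psi f E := by
    refine (basisMonomials (Fin 3) R).ext fun m => ?_
    simp only [coe_basisMonomials, LinearMap.comp_apply, LinearMap.mulLeft_apply]
    rw [X_pow_eq_monomial, monomial_mul, one_mul, add_comm, Psi_monomial, Psi_monomial, mon, mon,
      par_add, ← mul_assoc]
    congr 1
    rw [← Finset.mul_prod_erase _ _ (Finset.mem_univ i), ← Finset.mul_prod_erase _ _ (Finset.mem_univ i),
      ← mul_assoc]
    congr 1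
    · simp [pow_succ', Nat.add_div_right]
    · refine Finset.prod_congr rfl fun j hj => ?_
      have : i ≠ j := fun h => by simp [h] at hj
      simp [Finsupp.single_apply, this]
  exact LinearMap.congr_fun key h

section Basis
variable {F : Fin 3 → MvPolynomial (Fin 3) k} {e : Fin 8 → MvPolynomial (Fin 3) k}
  {f : Fin 3 → MvPolynomial (Fin 3) R} {E : Fin 8 → MvPolynomial (Fin 3) R}

theorem pow_mem_LL {a : ℕ} {p : MvPolynomial (Fin 3) R} (h : p ∈ LL R (a + 1)) (n : ℕ) :
    p ^ n ∈ LL R (a * n + 1) := by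
  induction n with
  | zero => simpa using homog_mem_LL (isHomogeneous_one (Fin 3) R)
  | succ n ih =>
    rw [pow_succ', show a * (n + 1) + 1 = a + (a * n + 1) by ring]
    exact LL_mul h ih

theorem mon_mem (hf : ∀ i, PTop R 2 (F i) (f i)) (hE : ∀ i, PTop R (d8 i) (e i) (E i))
    (m : Fin 3 →₀ ℕ) : mon f E m ∈ LL R (m.degree + 1) := by
  rw [mon, Fin.prod_univ_three]
  have h0 := pow_mem_LL (hf 0).mem (m 0 / 2)
  have h1 := pow_mem_LL (hf 1).mem (m 1 / 2)
  have h2 := pow_mem_LL (hf 2).mem (m 2 / 2)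
  have h01 := LL_mul h0 h1
  rw [← add_assoc] at h01
  have h012 := LL_mul h01 h2
  rw [← add_assoc] at h012
  have h3 := LL_mul h012 (hE (par m)).mem
  rw [d8_par] at h3
  have : m.degree = m 0 + m 1 + m 2 := by
    rw [Finsupp.degree_eq_sum, Fin.sum_univ_three]
  refine LL_mono ?_ h3
  omega

theorem Psi_mem (hf : ∀ i, PTop R 2 (F i) (f i)) (hE : ∀ i, PTop R (d8 i) (e i) (E i))
    {t : ℕ} {p : MvPolynomial (Fin 3) R} (hp : p ∈ LL R t) : Psi f E p ∈ LL R t := by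
  have : LL R t ≤ (LL R t).comap (Psi f E) := by
    apply LL_le_of_monomials
    intro m hm
    rw [Submodule.mem_comap, Psi_monomial]
    exact LL_mono hm (mon_mem hf hE m)
  exact this hp

theorem Psi_surj (hF : ∀ i, (F i).IsHomogeneous 2) (he : TopData F e)
    (hf : ∀ i, PTop R 2 (F i) (f i)) (hE : ∀ i, PTop R (d8 i) (e i) (E i)) (t : ℕ) :
    LL R t ≤ (LL R t).map (Psi f E) := by
  induction t using Nat.strong_induction_on with
  | _ t ih =>
  apply LL_le_of_monomials
  intro m hm
  set d := m.degree with hd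
  have hmono : (monomial m 1 : MvPolynomial (Fin 3) R) = map (algebraMap k R) (monomial m 1) := by
    simp
  have hhom : (monomial m 1 : MvPolynomial (Fin 3) k).IsHomogeneous d :=
    isHomogeneous_monomial _ rfl
  obtain ⟨α, hα, hmem⟩ := he.span d _ hhom
  have hlow : ∀ p ∈ LL R d, p ∈ (LL R t).map (Psi f E) := fun p hp =>
    Submodule.map_mono (LL_mono hm.le) (ih d hm hp)
  -- the E-part
  have hEpart : ∑ i, algebraMap k R (α i) • E i ∈ (LL R t).map (Psi f E) := by
    refine Submodule.sum_mem _ fun i _ => ?_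
    by_cases hi : d8 i = d
    · refine Submodule.smul_mem _ _ ⟨monomial (rep i) 1, monomial_mem_LL ?_ _, ?_⟩
      · rw [Finsupp.degree_eq_sum, Fin.sum_univ_three]
        have h := d8_par (rep i)
        rw [par_rep] at h
        have := rep_le i 0; have := rep_le i 1; have := rep_le i 2
        omega
      · rw [Psi_monomial, mon_rep]
    · rw [hα i hi, map_zero, zero_smul]; exact zero_mem _
  have hElow : ∑ i, algebraMap k R (α i) • E i -
      map (algebraMap k R) (∑ i, C (α i) * e i) ∈ LL R d := by
    rw [map_sum, ← Finset.sum_sub_distrib]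
    refine Submodule.sum_mem _ fun i _ => ?_
    by_cases hi : d8 i = d
    · rw [map_mul, map_C, ← smul_eq_C_mul, ← smul_sub]
      exact Submodule.smul_mem _ _ (hi ▸ (hE i).low)
    · rw [hα i hi]; simp
  set φ := (monomial m 1 : MvPolynomial (Fin 3) k) - ∑ i, C (α i) * e i with hφ
  have hφhom : φ.IsHomogeneous d := by
    refine hhom.sub (IsHomogeneous.sum _ _ _ fun i _ => ?_)
    by_cases hi : d8 i = d
    · rw [← hi]; simpa using (isHomogeneous_C (Fin 3) (α i)).mul (he.hom i)
    · rw [hα i hi]; simpa using isHomogeneous_zero _ _ _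
  -- the ideal part
  have hIpart : map (algebraMap k R) φ ∈ (LL R t).map (Psi f E) := by
    by_cases hd2 : d < 2
    · rw [eq_zero_of_mem_span_homog hF hd2 hφhom hmem, map_zero]; exact zero_mem _
    · obtain ⟨d', hd'⟩ : ∃ d', d = d' + 2 := ⟨d - 2, by omega⟩
      rw [hd'] at hφhom
      obtain ⟨c, hc, hsum⟩ := exists_homog_coeffs hF hφhom hmem
      have h1 : ∑ i, map (algebraMap k R) (c i) * f i ∈ (LL R t).map (Psi f E) := by
        refine Submodule.sum_mem _ fun i _ => ?_
        obtain ⟨h, hh, hh'⟩ := ih (d' + 1) (by omega) (map_mem_LL (R := R) (hc i))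
        refine ⟨X i ^ 2 * h, ?_, ?_⟩
        · refine LL_mono (show 2 + (d' + 1) ≤ t by omega) (LL_mul ?_ hh)
          simpa using homog_mem_LL ((isHomogeneous_X R i).pow 2)
        · rw [Psi_sq_mul, hh', mul_comm]
      have h2 : map (algebraMap k R) φ - ∑ i, map (algebraMap k R) (c i) * f i ∈ LL R d := by
        rw [hsum, map_sum, ← Finset.sum_sub_distrib]
        refine Submodule.sum_mem _ fun i _ => ?_
        rw [map_mul, ← mul_sub, ← neg_mem_iff, ← mul_neg, neg_sub, hd']
        exact LL_mul (map_mem_LL (hc i)) (hf i).low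
      have := Submodule.add_mem _ (hlow _ h2) h1
      simpa using this
  have h3 := Submodule.sub_mem _ (Submodule.add_mem _ hIpart hEpart) (hlow _ hElow)
  rw [hmono]
  convert h3 using 1
  rw [hφ, map_sub]
  ring

theorem Psi_inj (hF : ∀ i, (F i).IsHomogeneous 2) (he : TopData F e)
    (hf : ∀ i, PTop R 2 (F i) (f i)) (hE : ∀ i, PTop R (d8 i) (e i) (E i)) :
    Function.Injective (Psi f E) := by
  rw [← LinearMap.ker_eq_bot, LinearMap.ker_eq_bot']
  intro p hp
  obtain ⟨t, ht⟩ := exists_mem_LL p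
  let g : LL R t →ₗ[R] LL R t := (Psi f E).restrict fun x hx => Psi_mem hf hE hx
  have hg : Function.Surjective g := by
    rintro ⟨y, hy⟩
    obtain ⟨x, hx, rfl⟩ := Psi_surj hF he hf hE t hy
    exact ⟨⟨x, hx⟩, rfl⟩
  have hi := OrzechProperty.injective_of_surjective_endomorphism g hg
  have : (⟨p, ht⟩ : LL R t) = 0 := hi (by
    rw [map_zero]
    exact Subtype.ext hp)
  exact congrArg Subtype.val this

/-- Theorem R1, independence -/
theorem R1_indep (hF : ∀ i, (F i).IsHomogeneous 2) (he : TopData F e)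
    (hf : ∀ i, PTop R 2 (F i) (f i)) (hE : ∀ i, PTop R (d8 i) (e i) (E i)) (r : Fin 8 → R)
    (h : ∑ i, r i • E i ∈ Ideal.span (Set.range f)) : r = 0 := by
  rw [Ideal.mem_span_range_iff_exists_fun] at h
  obtain ⟨c, hc⟩ := h
  have hs : ∀ p, ∃ q, Psi f E q = p := by
    intro p
    obtain ⟨t, ht⟩ := exists_mem_LL p
    obtain ⟨q, -, hq⟩ := Psi_surj hF he hf hE t ht
    exact ⟨q, hq⟩
  choose q hq using fun i => hs (c i)
  have h1 : Psi f E (∑ i, r i • monomial (rep i) 1) = Psi f E (∑ i, X i ^ 2 * q i) := by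
    rw [map_sum, map_sum]
    simp only [map_smul, Psi_monomial, mon_rep, Psi_sq_mul, hq]
    rw [← hc]
    exact Finset.sum_congr rfl fun i _ => mul_comm _ _
  have h2 := Psi_inj hF he hf hE h1
  funext j
  have h3 := congrArg (coeff (rep j)) h2
  rw [coeff_sum, coeff_sum] at h3
  simp only [coeff_smul, coeff_monomial, rep_inj.eq_iff] at h3
  simp only [smul_eq_mul, mul_ite, mul_one, mul_zero, Finset.sum_ite_eq', Finset.mem_univ, if_true] at h3
  rw [h3]
  refine Finset.sum_eq_zero fun i _ => ?_
  rw [X_pow_eq_monomial, coeff_monomial_mul', if_neg]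
  intro hle
  have := hle i
  have := rep_le j i
  simp at *
  omega

/-- Theorem R1, spanning with degree control -/
theorem R1_span (hF : ∀ i, (F i).IsHomogeneous 2) (he : TopData F e)
    (hf : ∀ i, PTop R 2 (F i) (f i)) (hE : ∀ i, PTop R (d8 i) (e i) (E i)) {t : ℕ}
    {g : MvPolynomial (Fin 3) R} (hg : g ∈ LL R t) :
    ∃ r : Fin 8 → R, (∀ i, t ≤ d8 i → r i = 0) ∧
      g - ∑ i, r i • E i ∈ Ideal.span (Set.range f) := by
  let W : Submodule R (MvPolynomial (Fin 3) R) :=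
    { carrier := {g | ∃ r : Fin 8 → R, (∀ i, t ≤ d8 i → r i = 0) ∧
        g - ∑ i, r i • E i ∈ Ideal.span (Set.range f)}
      zero_mem' := ⟨0, by simp, by simp⟩
      add_mem' := by
        rintro a b ⟨r, h1, h2⟩ ⟨s, h3, h4⟩
        refine ⟨r + s, fun i hi => by simp [h1 i hi, h3 i hi], ?_⟩
        have := Ideal.add_mem _ h2 h4
        convert this using 1
        simp only [Pi.add_apply, add_smul, Finset.sum_add_distrib]
        ring
      smul_mem' := by
        rintro c a ⟨r, h1, h2⟩
        refine ⟨c • r, fun i hi => by simp [h1 i hi], ?_⟩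
        have := Ideal.mul_mem_left _ (C c) h2
        convert this using 1
        rw [mul_sub, ← smul_eq_C_mul, ← smul_eq_C_mul, Finset.smul_sum]
        simp [smul_smul] }
  obtain ⟨q, hq, rfl⟩ := Psi_surj hF he hf hE t hg
  have : LL R t ≤ W.comap (Psi f E) := by
    apply LL_le_of_monomials
    intro m hm
    rw [Submodule.mem_comap, Psi_monomial]
    by_cases hsq : ∃ i, 2 ≤ m i
    · obtain ⟨i, hi⟩ := hsq
      refine ⟨0, by simp, ?_⟩
      simp only [Pi.zero_apply, zero_smul, Finset.sum_const_zero, sub_zero]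
      rw [mon, ← Finset.mul_prod_erase _ _ (Finset.mem_univ i)]
      obtain ⟨n, hn⟩ : ∃ n, m i / 2 = n + 1 := ⟨m i / 2 - 1, by omega⟩
      rw [hn, pow_succ', mul_assoc, mul_assoc]
      exact Ideal.mul_mem_right _ _ (Ideal.subset_span ⟨i, rfl⟩)
    · push Not at hsq
      refine ⟨Pi.single (par m) 1, ?_, ?_⟩
      · intro i hi
        rw [Pi.single_eq_of_ne]
        rintro rfl
        rw [d8_par] at hi
        rw [Finsupp.degree_eq_sum, Fin.sum_univ_three] at hm
        have := hsq 0; have := hsq 1; have := hsq 2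
        omega
      · rw [Finset.sum_eq_single (par m)]
        · rw [mon, Finset.prod_eq_one]
          · simp
          · intro j _
            have := hsq j
            rw [show m j / 2 = 0 by omega, pow_zero]
        · intro j _ hj
          simp [Pi.single_eq_of_ne hj]
        · simp
  exact this hq

end Basis
end RLevel
end part5

section part6
section T6
open MvPolynomial

theorem GoodF.map {k K : Type*} [Field k] [Field K] (φ : k →+* K)
    {F : Fin 3 → MvPolynomial (Fin 3) k} (hF : GoodF F) :
    GoodF (fun i => MvPolynomial.map φ (F i)) := by
  have key : ∀ {I : Ideal (MvPolynomial (Fin 3) k)} {i : Fin 3} {s : ℕ},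
      (X i : MvPolynomial (Fin 3) k) ^ s ∈ I →
      (X i : MvPolynomial (Fin 3) K) ^ s ∈ I.map (MvPolynomial.map φ) := by
    intro I i s h
    simpa using Ideal.mem_map_of_mem (MvPolynomial.map φ) h
  refine ⟨fun i => (hF.hom i).map φ, ?_, ?_, ?_⟩
  · obtain ⟨s, hs⟩ := hF.c3
    refine ⟨s, ?_⟩
    simpa [Ideal.map_sup, Ideal.map_span] using key hs
  · obtain ⟨s, hs⟩ := hF.c2
    refine ⟨s, ?_⟩
    simpa [Ideal.map_sup, Ideal.map_span] using key hs
  · intro j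
    obtain ⟨s, hs⟩ := hF.c1 j
    refine ⟨s, ?_⟩
    simpa [Ideal.map_sup, Ideal.map_span] using key hs

theorem LL_map {R K : Type*} [CommRing R] [CommRing K] (φ : R →+* K) {t : ℕ}
    {p : MvPolynomial (Fin 3) R} (h : p ∈ LL R t) : MvPolynomial.map φ p ∈ LL K t := by
  rw [mem_LL] at *
  exact fun m hm => h m (support_map_subset _ _ hm)

theorem linear_decomp {R : Type*} [CommRing R] {p : MvPolynomial (Fin 3) R} (h : p ∈ LL R 2) :
    p - ∑ i, C (coeff (Finsupp.single i 1) p) * X i ∈ LL R 1 := by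
  rw [mem_LL] at *
  intro m hm
  by_contra hcon
  rw [mem_support_iff, coeff_sub, coeff_sum] at hm
  apply hm
  have h1 : ∀ i, coeff m (C (coeff (Finsupp.single i 1) p) * X i : MvPolynomial (Fin 3) R) =
      if Finsupp.single i 1 = m then coeff (Finsupp.single i 1) p else 0 := by
    intro i
    rw [coeff_C_mul, coeff_X]; simp
  simp only [h1]
  by_cases hm2 : m ∈ p.support
  · have hdeg : m.degree = 1 := by have := h m hm2; omega
    obtain ⟨i, rfl⟩ : ∃ i, m = Finsupp.single i 1 := by
      rw [Finsupp.degree_eq_sum, Fin.sum_univ_three] at hdeg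
      have h3 : m 0 = 1 ∧ m 1 = 0 ∧ m 2 = 0 ∨ m 0 = 0 ∧ m 1 = 1 ∧ m 2 = 0 ∨
          m 0 = 0 ∧ m 1 = 0 ∧ m 2 = 1 := by omega
      rcases h3 with h3 | h3 | h3
      · exact ⟨0, by ext i; fin_cases i <;> simp [h3]⟩
      · exact ⟨1, by ext i; fin_cases i <;> simp [h3]⟩
      · exact ⟨2, by ext i; fin_cases i <;> simp [h3]⟩
    simp [Finsupp.single_left_inj]
  · rw [notMem_support_iff.1 hm2, Finset.sum_eq_zero, sub_zero]
    intro i _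
    split_ifs with hi
    · rw [hi]; exact notMem_support_iff.1 hm2
    · rfl

theorem LL_one_eq {R : Type*} [CommRing R] {p : MvPolynomial (Fin 3) R} (h : p ∈ LL R 1) :
    p = C (coeff 0 p) := by
  rw [mem_LL] at h
  ext m
  rw [coeff_C]
  split_ifs with hm
  · rw [hm]
  · by_contra hcon
    have := h m (mem_support_iff.2 hcon)
    apply hm
    have : m.degree = 0 := by omega
    rw [Finsupp.degree_eq_zero_iff] at this
    exact this.symm

variable {k : Type*} [Field k] {R : Type*} [CommRing R] [IsDomain R] [Algebra k R]
  {F : Fin 3 → MvPolynomial (Fin 3) k} {f : Fin 3 → MvPolynomial (Fin 3) R}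

/-- the four multiples of a linear polynomial are independent -/
theorem four_indep (hF : GoodF F) (hf : ∀ i, PTop R 2 (F i) (f i))
    {l : MvPolynomial (Fin 3) R} (hl : l ∈ LL R 2) (hl1 : l ∉ LL R 1) :
    ∃ m : Fin 4 → MvPolynomial (Fin 3) R, ∀ r : Fin 4 → R,
      ∑ i, r i • (m i * l) ∈ Ideal.span (Set.range f) → r = 0 := by
  let K := FractionRing R
  let φ : R →+* K := algebraMap R K
  have hφ : Function.Injective φ := IsFractionRing.injective R K
  let ψ : k →+* K := φ.comp (algebraMap k R)
  have hFK := hF.map ψ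
  set FK : Fin 3 → MvPolynomial (Fin 3) K := fun i => map ψ (F i) with hFKdef
  set fK : Fin 3 → MvPolynomial (Fin 3) K := fun i => map φ (f i) with hfKdef
  have hfK : ∀ i, PTop K 2 (FK i) (fK i) := by
    intro i
    refine ⟨hFK.hom i, ?_⟩
    have := LL_map φ (hf i).low
    rw [map_sub, map_map] at this
    rw [Algebra.algebraMap_self, MvPolynomial.map_id]
    exact this
  set a : Fin 3 → K := fun i => φ (coeff (Finsupp.single i 1) l)
  set lam : MvPolynomial (Fin 3) K := ∑ i, C (a i) * X i with hlam
  have hlamhom : lam.IsHomogeneous 1 := IsHomogeneous.sum _ _ _ fun i _ => by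
      simpa using (isHomogeneous_C (Fin 3) (a i)).mul (isHomogeneous_X K i)
  have hlK : PTop K 1 lam (map φ l) := by
    refine ⟨hlamhom, ?_⟩
    have := LL_map φ (linear_decomp hl)
    rw [map_sub, map_sum] at this
    simpa [hlam, a] using this
  have hlam0 : lam ≠ 0 := by
    intro h0
    apply hl1
    have h1 := linear_decomp hl
    rw [Finset.sum_eq_zero, sub_zero] at h1
    · exact h1
    · intro i _
      have h2 := congrArg (coeff (Finsupp.single i 1)) h0
      rw [hlam, coeff_sum] at h2
      have h3 : a i = 0 := by simpa [coeff_X, Finsupp.single_left_inj] using h2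
      have h4 := hφ (h3.trans (map_zero φ).symm)
      rw [h4]; simp
  have hlamF : lam ∉ Ideal.span (Set.range FK) := fun h =>
    hlam0 (eq_zero_of_mem_span_homog hFK.hom (by omega) hlamhom h)
  obtain ⟨p, q, hpq⟩ := hFK.pair1 hlamhom hlam0
  obtain ⟨i, hi⟩ := hFK.pair2 hlamhom (by omega) hlamF
  obtain ⟨j, hj⟩ := hFK.pair2 ((isHomogeneous_X K i).mul hlamhom) (by omega) hi
  have iu1 := IndMod_one hlamF
  obtain ⟨u1, hu1, iu1⟩ := hFK.extend (Or.inl rfl) (by omega) (fun i => by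
    obtain rfl : i = 0 := Subsingleton.elim _ _; exact hlamhom) iu1
  obtain ⟨u2, hu2, iu2⟩ := hFK.extend (t := 1) (Or.inl rfl) (by omega) (fun i => by
    fin_cases i
    · exact hlamhom
    · exact hu1) iu1
  have iv : IndMod FK ![X p * lam, X q * lam] := by
    intro c hc
    simp only [Fin.sum_univ_two, Matrix.cons_val_zero, Matrix.cons_val_one] at hc
    have := hpq (c 0) (c 1) (by convert hc using 1; ring)
    funext i
    fin_cases i
    exacts [this.1, this.2]
  have hXp : ∀ p : Fin 3, (X p * lam).IsHomogeneous 2 := fun p => (isHomogeneous_X K p).mul hlamhom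
  obtain ⟨v2, hv2, iv2⟩ := hFK.extend (t := 2) (Or.inr rfl) (by omega) (fun i => by
    fin_cases i
    · exact hXp p
    · exact hXp q) iv
  have hu : ∀ i, ((Fin.snoc (Fin.snoc ![lam] u1 : Fin 2 → _) u2 : Fin 3 → MvPolynomial (Fin 3) K) i).IsHomogeneous 1 := by
    intro i
    fin_cases i
    exacts [hlamhom, hu1, hu2]
  have hv : ∀ i, ((Fin.snoc ![X p * lam, X q * lam] v2 : Fin 3 → MvPolynomial (Fin 3) K) i).IsHomogeneous 2 := by
    intro i
    fin_cases i
    exacts [hXp p, hXp q, hv2]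
  have hT := TopData.of hFK hu hv ((isHomogeneous_X K j).mul (hXp i)) iu2 iv2 hj
  set E : Fin 8 → MvPolynomial (Fin 3) K :=
    ![1, map φ l, map (algebraMap K K) u1, map (algebraMap K K) u2, X p * map φ l, X q * map φ l,
      map (algebraMap K K) v2, X j * (X i * map φ l)] with hEdef
  have hE : ∀ n, PTop K (d8 n) ((![1, (Fin.snoc (Fin.snoc ![lam] u1 : Fin 2 → _) u2 : Fin 3 → MvPolynomial (Fin 3) K) 0,
    (Fin.snoc (Fin.snoc ![lam] u1 : Fin 2 → _) u2 : Fin 3 → MvPolynomial (Fin 3) K) 1,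
    (Fin.snoc (Fin.snoc ![lam] u1 : Fin 2 → _) u2 : Fin 3 → MvPolynomial (Fin 3) K) 2,
    (Fin.snoc ![X p * lam, X q * lam] v2 : Fin 3 → MvPolynomial (Fin 3) K) 0,
    (Fin.snoc ![X p * lam, X q * lam] v2 : Fin 3 → MvPolynomial (Fin 3) K) 1,
    (Fin.snoc ![X p * lam, X q * lam] v2 : Fin 3 → MvPolynomial (Fin 3) K) 2, X j * (X i * lam)] : Fin 8 → _) n) (E n) := by
    intro n
    fin_cases n
    exacts [PTop.one, hlK, PTop.self hu1, PTop.self hu2, (PTop.X p).mul hlK, (PTop.X q).mul hlK,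
      PTop.self hv2, (PTop.X j).mul ((PTop.X i).mul hlK)]
  refine ⟨![1, X p, X q, X j * X i], fun r hr => ?_⟩
  have h1 := R1_indep hFK.hom hT hfK hE ![0, φ (r 0), 0, 0, φ (r 1), φ (r 2), 0, φ (r 3)] (by
    have h2 := Ideal.mem_map_of_mem (map φ) hr
    rw [Ideal.map_span, ← Set.range_comp] at h2
    change _ ∈ Ideal.span (Set.range fK) at h2
    refine (congrArg (· ∈ Ideal.span (Set.range fK)) ?_).mpr h2
    rw [Fin.sum_univ_eight, map_sum, Fin.sum_univ_four]
    simp [hEdef, smul_eq_C_mul, mul_assoc])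
  funext n
  apply hφ
  rw [Pi.zero_apply, map_zero]
  fin_cases n
  · exact congrFun h1 1
  · exact congrFun h1 4
  · exact congrFun h1 5
  · exact congrFun h1 7

end T6
end part6

section part7
section modlem

theorem exists_primitive {R : Type*} [CommRing R] [IsDomain R] [UniqueFactorizationMonoid R]
    (x : Fin 8 → R) (hx : x ≠ 0) : ∃ (g : R) (y : Fin 8 → R), g ≠ 0 ∧ (∀ i, x i = g * y i) ∧
      ∀ c d, (∀ i, c ∣ d * y i) → c ∣ d := by
  classical
  letI := UniqueFactorizationMonoid.normalizationMonoid (α := R)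
  letI := UniqueFactorizationMonoid.toNormalizedGCDMonoid R
  obtain ⟨y, hy, hy1⟩ := Finset.extract_gcd (s := Finset.univ) x Finset.univ_nonempty
  refine ⟨_, y, ?_, fun i => hy i (Finset.mem_univ _), ?_⟩
  · intro h0
    apply hx
    funext i
    rw [hy i (Finset.mem_univ _), h0, zero_mul, Pi.zero_apply]
  · intro c d h
    have h1 : c ∣ Finset.univ.gcd (fun i => d * y i) := Finset.dvd_gcd fun i _ => h i
    have h2 := Finset.gcd_mul_left' (s := Finset.univ) (f := y) d
    rw [hy1, mul_one] at h2
    exact h1.trans h2.dvd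

variable {R : Type u} [CommRing R] [IsDomain R] {M : Type u} [AddCommGroup M] [Module R M]

theorem PDle_span_of_li {n : ℕ} (v : Fin n → M) (hv : LinearIndependent R v) (N : Submodule R M)
    (hN : N = Submodule.span R (Set.range v)) : PDle R 0 N := by
  subst hN
  rw [PDle_zero_iff]
  exact Module.Projective.of_basis (Module.Basis.span hv)

theorem PDle_four [UniqueFactorizationMonoid R] (v : Fin 3 → M) (hv : LinearIndependent R v)
    (p q : R) (N : Submodule R M)
    (hN : N = Submodule.span R (Set.range ![v 0, v 1, p • v 2, q • v 2])) : PDle R 1 N := by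
  rw [Fintype.linearIndependent_iff] at hv
  have hv' : ∀ a b c : R, a • v 0 + b • v 1 + c • v 2 = 0 → a = 0 ∧ b = 0 ∧ c = 0 := by
    intro a b c h
    have := hv ![a, b, c] (by simpa [Fin.sum_univ_three] using h)
    exact ⟨this 0, this 1, this 2⟩
  by_cases hpq : p = 0 ∧ q = 0
  · refine PDle.mono (m := 0) ?_ (by omega)
    refine PDle_span_of_li ![v 0, v 1] ?_ N ?_
    · rw [Fintype.linearIndependent_iff]
      intro g hg i
      have := hv' (g 0) (g 1) 0 (by simpa [Fin.sum_univ_two] using hg)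
      fin_cases i
      exacts [this.1, this.2.1]
    · rw [hN, hpq.1, hpq.2]
      apply le_antisymm
      · rw [Submodule.span_le]
        rintro _ ⟨i, rfl⟩
        fin_cases i
        · exact Submodule.subset_span ⟨0, rfl⟩
        · exact Submodule.subset_span ⟨1, rfl⟩
        · simp
        · simp
      · rw [Submodule.span_le]
        rintro _ ⟨i, rfl⟩
        fin_cases i
        · exact Submodule.subset_span ⟨0, rfl⟩
        · exact Submodule.subset_span ⟨1, rfl⟩
  -- reduced factors
  obtain ⟨g, p', q', hg, rfl, rfl, hsolve⟩ : ∃ g p' q' : R, g ≠ 0 ∧ p = g * p' ∧ q = g * q' ∧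
      ∀ c d, c * p' + d * q' = 0 → ∃ t, c = t * q' ∧ d = t * -p' := by
    have aux : ∀ p q : R, p ≠ 0 → ∃ g p' q' : R, g ≠ 0 ∧ p = g * p' ∧ q = g * q' ∧
      ∀ c d, c * p' + d * q' = 0 → ∃ t, c = t * q' ∧ d = t * -p' := by
      intro p q hp
      obtain ⟨p', q', g, h1, h2, h3⟩ := UniqueFactorizationMonoid.exists_reduced_factors p hp q
      have hp' : p' ≠ 0 := by rintro rfl; simp at h2; exact hp h2.symm
      refine ⟨g, p', q', ?_, h2.symm, h3.symm, ?_⟩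
      · rintro rfl; simp at h2; exact hp h2.symm
      · intro c d h
        have hd : p' ∣ q' * d := ⟨-c, by linear_combination h⟩
        obtain ⟨s, rfl⟩ := h1.dvd_of_dvd_mul_left hd
        refine ⟨-s, ?_, by ring⟩
        apply mul_right_cancel₀ hp'
        linear_combination h
    by_cases hp : p = 0
    · have hq : q ≠ 0 := fun h => hpq ⟨hp, h⟩
      obtain ⟨g, q', p', h1, h2, h3, h4⟩ := aux q p hq
      refine ⟨g, p', q', h1, h3, h2, fun c d h => ?_⟩
      obtain ⟨t, ht, ht'⟩ := h4 d c (by linear_combination h)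
      exact ⟨-t, by linear_combination ht', by linear_combination ht⟩
    · exact aux p q hp
  have hpq' : p' ≠ 0 ∨ q' ≠ 0 := by
    by_contra hcon
    push Not at hcon
    exact hpq ⟨by simp [hcon.1], by simp [hcon.2]⟩
  set w : Fin 4 → M := ![v 0, v 1, (g * p') • v 2, (g * q') • v 2] with hw
  let G : (Fin 4 → R) →ₗ[R] M := Fintype.linearCombination R w
  have hG : LinearMap.range G = N := by rw [hN, Fintype.range_linearCombination]
  let G' : (Fin 4 → R) →ₗ[R] N := G.codRestrict N (fun x => hG ▸ LinearMap.mem_range_self G x)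
  let i : R →ₗ[R] (Fin 4 → R) := LinearMap.toSpanSingleton R _ ![0, 0, q', -p']
  refine (PDle_succ_iff i G' ?_ ?_ ?_ 0).2 ?_
  · rw [injective_iff_map_eq_zero]
    intro t ht
    have h2 := congrFun ht 2
    have h3 := congrFun ht 3
    simp [i, LinearMap.toSpanSingleton] at h2 h3
    rcases hpq' with h | h
    · exact h3.resolve_right h
    · exact h2.resolve_right h
  · rintro ⟨x, hx⟩
    rw [← hG] at hx
    obtain ⟨y, rfl⟩ := hx
    exact ⟨y, rfl⟩
  · intro x
    have hGx : G x = x 0 • v 0 + x 1 • v 1 + (g * (x 2 * p' + x 3 * q')) • v 2 := by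
      simp only [G, Fintype.linearCombination_apply, Fin.sum_univ_four, hw]
      simp
      module
    have h0 : G' x = 0 ↔ G x = 0 := by
      rw [Subtype.ext_iff]; rfl
    rw [h0, hGx]
    constructor
    · intro h
      obtain ⟨h0, h1, h2⟩ := hv' _ _ _ h
      obtain ⟨t, ht, ht'⟩ := hsolve _ _ ((mul_eq_zero.1 h2).resolve_left hg)
      refine ⟨t, ?_⟩
      funext j
      fin_cases j <;> simp [i, LinearMap.toSpanSingleton, h0, h1, ht, ht']
    · rintro ⟨t, rfl⟩
      have : t * q' * p' + -(t * p' * q') = 0 := by ring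
      simp [i, LinearMap.toSpanSingleton, this]
  · rw [PDle_zero_iff]; infer_instance

end modlem
end part7

section part8
section ringctx
set_option linter.unusedSectionVars false
open MvPolynomial

variable {k : Type*} [Field k] {R : Type*} [CommRing R] [IsDomain R] [Algebra k R]
  {F : Fin 3 → MvPolynomial (Fin 3) k} {f : Fin 3 → MvPolynomial (Fin 3) R}

theorem mk_sum_smul {n : ℕ} (J : Ideal (MvPolynomial (Fin 3) R)) (r : Fin n → R)
    (v : Fin n → MvPolynomial (Fin 3) R) :
    (Ideal.Quotient.mk J (∑ i, r i • v i)) = ∑ i, r i • Ideal.Quotient.mk J (v i) := by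
  rw [map_sum]; rfl

theorem exists_basis8 (hF : GoodF F) (hf : ∀ i, PTop R 2 (F i) (f i))
    {e : Fin 8 → MvPolynomial (Fin 3) k} (he : TopData F e) {E : Fin 8 → MvPolynomial (Fin 3) R}
    (hE : ∀ i, PTop R (d8 i) (e i) (E i)) :
    ∃ b : Module.Basis (Fin 8) R (MvPolynomial (Fin 3) R ⧸ Ideal.span (Set.range f)),
      ∀ i, b i = Ideal.Quotient.mk _ (E i) := by
  have hli : LinearIndependent R (fun i => Ideal.Quotient.mk (Ideal.span (Set.range f)) (E i)) := by
    rw [Fintype.linearIndependent_iff]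
    intro r hr i
    rw [← mk_sum_smul, Ideal.Quotient.eq_zero_iff_mem] at hr
    exact congrFun (R1_indep hF.hom he hf hE r hr) i
  refine ⟨Module.Basis.mk hli ?_, fun i => by rw [Module.Basis.mk_apply]⟩
  rintro x -
  obtain ⟨g, rfl⟩ := Ideal.Quotient.mk_surjective x
  obtain ⟨t, ht⟩ := exists_mem_LL g
  obtain ⟨r, -, hr⟩ := R1_span hF.hom he hf hE ht
  rw [Submodule.mem_span_range_iff_exists_fun]
  refine ⟨r, ?_⟩
  rw [← mk_sum_smul]
  exact (Ideal.Quotient.eq.2 hr).symm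

theorem exists_basis8' (hF : GoodF F) (hf : ∀ i, PTop R 2 (F i) (f i)) :
    ∃ b : Module.Basis (Fin 8) R (MvPolynomial (Fin 3) R ⧸ Ideal.span (Set.range f)), True := by
  obtain ⟨w, hw, hw'⟩ := hF.exists_notMem3
  obtain ⟨v0, hv0, iv0⟩ := hF.extend (t := 2) (n := 0) (v := ![]) (Or.inr rfl) (by omega)
    (fun i => i.elim0) (fun a _ => Subsingleton.elim _ _)
  obtain ⟨v1, hv1, iv1⟩ := hF.extend (t := 2) (Or.inr rfl) (by omega) (fun i => by
    fin_cases i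
    exact hv0) iv0
  obtain ⟨v2, hv2, iv2⟩ := hF.extend (t := 2) (Or.inr rfl) (by omega) (fun i => by
    fin_cases i
    exacts [hv0, hv1]) iv1
  have hT := TopData.of hF (fun i => isHomogeneous_X k i) (fun i => by
    fin_cases i
    exacts [hv0, hv1, hv2]) hw hF.IndMod_X iv2 hw'
  obtain ⟨b, -⟩ := exists_basis8 hF hf hT (fun i => PTop.self (hT.hom i))
  exact ⟨b, trivial⟩

/-- the standing hypotheses -/
structure Ctx (F : Fin 3 → MvPolynomial (Fin 3) k) (f : Fin 3 → MvPolynomial (Fin 3) R)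
    (p : Ideal (MvPolynomial (Fin 3) R)) : Prop where
  hF : GoodF F
  hf : ∀ i, PTop R 2 (F i) (f i)
  prime : p.IsPrime
  hfp : ∀ i, f i ∈ p
  hR : ∀ r : R, C r ∈ p → r = 0
  h5 : 5 ≤ Module.finrank R (MvPolynomial (Fin 3) R ⧸ p)

namespace Ctx
variable [IsNoetherianRing R] {p : Ideal (MvPolynomial (Fin 3) R)}

theorem le (h : Ctx F f p) : Ideal.span (Set.range f) ≤ p := by
  rw [Ideal.span_le]; rintro _ ⟨i, rfl⟩; exact h.hfp i

theorem rankU (h : Ctx F f p) {n : ℕ} (v : Fin n → MvPolynomial (Fin 3) R) (hv : ∀ i, v i ∈ p)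
    (hi : ∀ r : Fin n → R, ∑ i, r i • v i ∈ Ideal.span (Set.range f) → r = 0) : n ≤ 3 := by
  obtain ⟨b, -⟩ := exists_basis8' h.hF h.hf
  have : Module.Finite R (MvPolynomial (Fin 3) R ⧸ Ideal.span (Set.range f)) :=
    Module.Finite.of_basis b
  let π : (MvPolynomial (Fin 3) R ⧸ Ideal.span (Set.range f)) →ₗ[R] (MvPolynomial (Fin 3) R ⧸ p) :=
    (Ideal.Quotient.factorₐ R h.le).toLinearMap
  have hπ : Function.Surjective π := Ideal.Quotient.factor_surjective h.le
  have h8 : Module.finrank R (MvPolynomial (Fin 3) R ⧸ Ideal.span (Set.range f)) = 8 := by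
    rw [Module.finrank_eq_card_basis b]; simp
  have h1 := Submodule.finrank_quotient_add_finrank (LinearMap.ker π)
  have h2 := (π.quotKerEquivOfSurjective hπ).finrank_eq
  have h5 := h.h5
  have : Module.IsTorsionFree R (MvPolynomial (Fin 3) R ⧸ Ideal.span (Set.range f)) :=
    (Module.Free.of_basis b).instIsTorsionFree
  have hli : LinearIndependent R (fun i => Ideal.Quotient.mk (Ideal.span (Set.range f)) (v i)) := by
    rw [Fintype.linearIndependent_iff]
    intro r hr i
    rw [← mk_sum_smul, Ideal.Quotient.eq_zero_iff_mem] at hr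
    exact congrFun (hi r hr) i
  have hker : ∀ i, Ideal.Quotient.mk (Ideal.span (Set.range f)) (v i) ∈ LinearMap.ker π := by
    intro i
    rw [LinearMap.mem_ker]
    change Ideal.Quotient.mk p (v i) = 0
    rw [Ideal.Quotient.eq_zero_iff_mem]
    exact hv i
  have hrk : Submodule.span R (Set.range (fun i => Ideal.Quotient.mk (Ideal.span (Set.range f)) (v i)))
      ≤ LinearMap.ker π := by
    rw [Submodule.span_le]; rintro _ ⟨i, rfl⟩; exact hker i
  have h3 : LinearIndependent R (fun i => (⟨_, hker i⟩ : LinearMap.ker π)) := by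
    apply LinearIndependent.of_comp (LinearMap.ker π).subtype
    exact hli
  have h4 : n ≤ Module.finrank R (LinearMap.ker π) := by
    simpa using h3.fintype_card_le_finrank
  omega

theorem U3 (h : Ctx F f p) (v : Fin 3 → MvPolynomial (Fin 3) R) (hv : ∀ i, v i ∈ p)
    (hi : ∀ r : Fin 3 → R, ∑ i, r i • v i ∈ Ideal.span (Set.range f) → r = 0)
    {x : MvPolynomial (Fin 3) R} (hx : x ∈ p) : ∃ (c : R) (r : Fin 3 → R), c ≠ 0 ∧
      c • x - ∑ i, r i • v i ∈ Ideal.span (Set.range f) := by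
  by_contra hcon
  push Not at hcon
  have := h.rankU (Fin.cons x v : Fin 4 → _) (fun i => by
    refine Fin.cases ?_ (fun i => ?_) i
    · exact hx
    · exact hv i) (fun r hr => by
      rw [Fin.sum_univ_succ] at hr
      simp only [Fin.cons_zero, Fin.cons_succ] at hr
      have h0 : r 0 = 0 := by
        by_contra h0
        apply hcon (r 0) (fun i => - r i.succ) h0
        simpa using hr
      rw [h0, zero_smul, zero_add] at hr
      have := hi (fun i => r i.succ) hr
      funext i
      refine Fin.cases ?_ (fun i => ?_) i
      · exact h0
      · exact congrFun this i)
  omega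

theorem T6 (h : Ctx F f p) {l : MvPolynomial (Fin 3) R} (hl : l ∈ LL R 2) (hlp : l ∈ p) : l = 0 := by
  by_cases hl1 : l ∈ LL R 1
  · rw [LL_one_eq hl1] at hlp ⊢
    rw [h.hR _ hlp, C_0]
  · obtain ⟨m, hm⟩ := four_indep h.hF h.hf hl hl1
    have := h.rankU (fun i => m i * l) (fun i => p.mul_mem_left _ hlp) hm
    omega

end Ctx

theorem mem_top (hf : ∀ i, PTop R 2 (F i) (f i)) {t : ℕ} {φ : MvPolynomial (Fin 3) k}
    {q : MvPolynomial (Fin 3) R} (hq : PTop R (t + 2) φ q) (hφ : φ ∈ Ideal.span (Set.range F)) :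
    ∃ g ∈ LL R (t + 2), q - g ∈ Ideal.span (Set.range f) := by
  obtain ⟨c, hc, hs⟩ := exists_homog_coeffs (fun i => (hf i).hom) hq.hom hφ
  refine ⟨q - ∑ i, map (algebraMap k R) (c i) * f i, ?_, ?_⟩
  · have : q - ∑ i, map (algebraMap k R) (c i) * f i = (q - map (algebraMap k R) φ) -
        ∑ i, map (algebraMap k R) (c i) * (f i - map (algebraMap k R) (F i)) := by
      rw [hs, map_sum]
      simp only [map_mul, mul_sub, Finset.sum_sub_distrib]
      ring
    rw [this]
    exact (LL R _).sub_mem hq.low (Submodule.sum_mem _ fun i _ => LL_mul (map_mem_LL (hc i)) (hf i).low)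
  · rw [sub_sub_cancel]
    exact Ideal.sum_mem _ fun i _ => Ideal.mul_mem_left _ _ (Ideal.subset_span ⟨i, rfl⟩)

theorem Ctx.mem_of_top [IsNoetherianRing R] {p : Ideal (MvPolynomial (Fin 3) R)} (h : Ctx F f p)
    {φ : MvPolynomial (Fin 3) k} {q : MvPolynomial (Fin 3) R} (hqp : q ∈ p) (hq : PTop R 2 φ q)
    (hφ : φ ∈ Ideal.span (Set.range F)) : q ∈ Ideal.span (Set.range f) := by
  obtain ⟨g, hg, hgq⟩ := mem_top (t := 0) h.hf hq hφ
  have hgp : g ∈ p := by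
    have := p.sub_mem hqp (h.le hgq)
    simpa using this
  have := h.T6 hg hgp
  simpa [this] using hgq

end ringctx
end part8

section part9
section quot
set_option linter.unusedSectionVars false
open MvPolynomial

variable {k : Type*} [Field k] {R : Type*} [CommRing R] [IsDomain R] [Algebra k R]
  {F : Fin 3 → MvPolynomial (Fin 3) k} {f : Fin 3 → MvPolynomial (Fin 3) R}

/-- restriction to a line -/
noncomputable def theta (γ β : Fin 3 → R) : MvPolynomial (Fin 3) R →ₐ[R] Polynomial R :=
  aeval (fun i => Polynomial.C (γ i) * Polynomial.X + Polynomial.C (β i))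

theorem theta_X (γ β : Fin 3 → R) (i : Fin 3) :
    theta γ β (X i) = Polynomial.C (γ i) * Polynomial.X + Polynomial.C (β i) := by
  simp [theta]

theorem theta_monomial (γ β : Fin 3 → R) (m : Fin 3 →₀ ℕ) (r : R) :
    theta γ β (monomial m r) = Polynomial.C r *
      ((Polynomial.C (γ 0) * Polynomial.X + Polynomial.C (β 0)) ^ (m 0) *
      (Polynomial.C (γ 1) * Polynomial.X + Polynomial.C (β 1)) ^ (m 1) *
      (Polynomial.C (γ 2) * Polynomial.X + Polynomial.C (β 2)) ^ (m 2)) := by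
  rw [theta, aeval_monomial, Finsupp.prod_fintype _ _ (by simp), Fin.prod_univ_three]
  rfl

theorem theta_natDegree (γ β : Fin 3 → R) (m : Fin 3 →₀ ℕ) (r : R) :
    (theta γ β (monomial m r)).natDegree ≤ m.degree := by
  have hL : ∀ i n, ((Polynomial.C (γ i) * Polynomial.X + Polynomial.C (β i)) ^ n).natDegree ≤ n := by
    intro i n
    refine (Polynomial.natDegree_pow_le_of_le (m := 1) n ?_).trans (by omega)
    exact Polynomial.natDegree_linear_le
  rw [theta_monomial]
  refine (Polynomial.natDegree_C_mul_le _ _).trans ?_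
  rw [Finsupp.degree_eq_sum, Fin.sum_univ_three]
  exact Polynomial.natDegree_mul_le_of_le (Polynomial.natDegree_mul_le_of_le (hL _ _) (hL _ _)) (hL _ _)

theorem theta_coeff (γ β : Fin 3 → R) (m : Fin 3 →₀ ℕ) (r : R) :
    (theta γ β (monomial m r)).coeff m.degree = eval γ (monomial m r) := by
  have hL0 : ∀ i, (Polynomial.C (γ i) * Polynomial.X + Polynomial.C (β i)).natDegree ≤ 1 :=
    fun i => Polynomial.natDegree_linear_le
  have hL : ∀ i n, ((Polynomial.C (γ i) * Polynomial.X + Polynomial.C (β i)) ^ n).natDegree ≤ n := by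
    intro i n
    exact (Polynomial.natDegree_pow_le_of_le (m := 1) n (hL0 i)).trans (by omega)
  have hc : ∀ i n, ((Polynomial.C (γ i) * Polynomial.X + Polynomial.C (β i)) ^ n).coeff n = γ i ^ n := by
    intro i n
    have := Polynomial.coeff_pow_of_natDegree_le (m := n) (hL0 i)
    rw [mul_one] at this
    rw [this]; simp
  rw [theta_monomial, Polynomial.coeff_C_mul, Finsupp.degree_eq_sum, Fin.sum_univ_three,
    Polynomial.coeff_mul_add_eq_of_natDegree_le (Polynomial.natDegree_mul_le_of_le (hL _ _) (hL _ _)) (hL _ _),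
    Polynomial.coeff_mul_add_eq_of_natDegree_le (hL _ _) (hL _ _), hc, hc, hc, eval_monomial,
    Finsupp.prod_fintype _ _ (by simp), Fin.prod_univ_three]

theorem theta_LL (γ β : Fin 3 → R) {t : ℕ} {p : MvPolynomial (Fin 3) R} (h : p ∈ LL R t) :
    theta γ β p ∈ Polynomial.degreeLT R t := by
  have : LL R t ≤ (Polynomial.degreeLT R t).comap (theta γ β).toLinearMap := by
    apply LL_le_of_monomials
    intro m hm
    rw [Submodule.mem_comap, AlgHom.toLinearMap_apply, Polynomial.mem_degreeLT]
    refine lt_of_le_of_lt Polynomial.degree_le_natDegree ?_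
    exact_mod_cast lt_of_le_of_lt (theta_natDegree γ β m 1) hm
  exact this h

theorem theta_homog (γ β : Fin 3 → R) {t : ℕ} {p : MvPolynomial (Fin 3) R} (h : p.IsHomogeneous t) :
    (theta γ β p).coeff t = eval γ p := by
  rw [p.as_sum, map_sum, map_sum, Polynomial.finsetSum_coeff]
  refine Finset.sum_congr rfl fun m hm => ?_
  have h1 := h (mem_support_iff.1 hm)
  have : m.degree = t := by
    rw [Finsupp.degree_eq_weight_one]; exact h1
  rw [← this, theta_coeff]

theorem quot_lemma (hF : GoodF F) (hf : ∀ i, PTop R 2 (F i) (f i)) (c : Fin 3 → k) (β : Fin 3 → R)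
    {j : Fin 3} (hc : c j = 1) (hβ : β j = 0) (g : MvPolynomial (Fin 3) R) :
    ∃ (a b : R) (h : Fin 3 → MvPolynomial (Fin 3) R),
      g - (C a + C b * X j + ∑ i, h i * (X i - C (algebraMap k R (c i)) * X j - C (β i))) ∈
        Ideal.span (Set.range f) := by
  set γ : Fin 3 → R := fun i => algebraMap k R (c i) with hγ
  set l : Fin 3 → MvPolynomial (Fin 3) R := fun i => X i - C (algebraMap k R (c i)) * X j - C (β i)
    with hl
  obtain ⟨m, hm⟩ := hF.exists_eval_ne c (j := j) (by rw [hc]; exact one_ne_zero)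
  let σ : MvPolynomial (Fin 3) R →ₐ[R] MvPolynomial (Fin 3) R :=
    (Polynomial.aeval (X j)).comp (theta γ β)
  have hσ : ∀ g, g - σ g ∈ Ideal.span (Set.range l) := by
    intro g
    rw [← Ideal.Quotient.eq]
    have : (Ideal.Quotient.mkₐ R (Ideal.span (Set.range l))) =
        (Ideal.Quotient.mkₐ R (Ideal.span (Set.range l))).comp σ := by
      apply MvPolynomial.algHom_ext
      intro i
      rw [AlgHom.comp_apply, AlgHom.comp_apply, theta_X]
      simp only [map_add, map_mul, Polynomial.aeval_X, Polynomial.aeval_C]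
      rw [← map_mul, ← map_add]
      refine Ideal.Quotient.eq.2 (Ideal.subset_span ⟨i, ?_⟩)
      simp only [hl, hγ, algebraMap_eq]
      ring
    exact DFunLike.congr_fun this g
  -- the quadratic polynomial
  set P := theta γ β (f m) with hP
  have hcoef : P.coeff 2 = algebraMap k R (eval c (F m)) := by
    have h1 := theta_LL γ β (hf m).low
    rw [map_sub, Polynomial.mem_degreeLT] at h1
    have h2 := Polynomial.coeff_eq_zero_of_degree_lt h1
    rw [Polynomial.coeff_sub, sub_eq_zero, theta_homog _ _ ((hf m).hom.map _)] at h2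
    rw [hP, h2, hγ]
    rw [MvPolynomial.eval_map]
    exact (MvPolynomial.eval₂_comp_left (algebraMap k R) (RingHom.id k) c (F m)).symm
  have hdeg : P.natDegree ≤ 2 := by
    have h1 := theta_LL γ β (hf m).mem
    rw [Polynomial.mem_degreeLT] at h1
    rw [Polynomial.natDegree_le_iff_degree_le]
    exact Order.le_of_lt_succ (by exact_mod_cast h1)
  have hunit : IsUnit (P.coeff 2) := by
    rw [hcoef]
    exact (IsUnit.mk0 _ hm).map (algebraMap k R)
  obtain ⟨w, hw⟩ := hunit
  have hmonic : (Polynomial.C (↑(w⁻¹) : R) * P).Monic := by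
    refine Polynomial.monic_of_natDegree_le_of_coeff_eq_one 2 ?_ ?_
    · exact (Polynomial.natDegree_C_mul_le _ _).trans hdeg
    · rw [Polynomial.coeff_C_mul, ← hw]; simp
  set Q := Polynomial.C (↑(w⁻¹) : R) * P with hQ
  set G := theta γ β g with hG
  have hdiv := Polynomial.modByMonic_add_div G Q
  have hrem : (G %ₘ Q).degree < 2 := by
    refine lt_of_lt_of_le (Polynomial.degree_modByMonic_lt _ hmonic) ?_
    exact Polynomial.degree_le_of_natDegree_le ((Polynomial.natDegree_C_mul_le _ _).trans hdeg)
  have hrem2 : G %ₘ Q = Polynomial.C ((G %ₘ Q).coeff 1) * Polynomial.X + Polynomial.C ((G %ₘ Q).coeff 0) :=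
    Polynomial.eq_X_add_C_of_degree_le_one (Order.le_of_lt_succ (by exact_mod_cast hrem))
  set a := (G %ₘ Q).coeff 0
  set b := (G %ₘ Q).coeff 1
  have hσg : σ g = C a + C b * X j + (C (↑(w⁻¹) : R) * Polynomial.aeval (X j) (G /ₘ Q)) * σ (f m) := by
    change Polynomial.aeval (X j) G = _
    have hd := congrArg (Polynomial.aeval (X j : MvPolynomial (Fin 3) R)) hdiv
    rw [← hd, hrem2]
    nth_rewrite 1 [hQ]
    simp only [map_add, map_mul, Polynomial.aeval_C, Polynomial.aeval_X, algebraMap_eq]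
    change _ = C a + C b * X j + (C (↑(w⁻¹) : R) * _) * (Polynomial.aeval (X j) P)
    ring
  have key : g - (C a + C b * X j + (C (↑(w⁻¹) : R) * Polynomial.aeval (X j) (G /ₘ Q)) * f m)
      ∈ Ideal.span (Set.range l) := by
    have h1 := hσ g
    have h2 := Ideal.mul_mem_left _ (C (↑(w⁻¹) : R) * Polynomial.aeval (X j) (G /ₘ Q)) (hσ (f m))
    have h3 := Ideal.sub_mem _ h1 h2
    rw [hσg] at h3
    convert h3 using 1
    ring
  obtain ⟨h, hh⟩ := (Ideal.mem_span_range_iff_exists_fun).1 key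
  refine ⟨a, b, h, ?_⟩
  have : g - (C a + C b * X j + ∑ i, h i * l i) =
      (C (↑(w⁻¹) : R) * Polynomial.aeval (X j) (G /ₘ Q)) * f m := by
    rw [hh]; ring
  change g - (C a + C b * X j + ∑ i, h i * l i) ∈ _
  rw [this]
  exact Ideal.mul_mem_left _ _ (Ideal.subset_span ⟨m, rfl⟩)

end quot
end part9

section part10
section core
set_option linter.unusedSectionVars false
open MvPolynomial

variable {k : Type*} [Field k] {R : Type u} [CommRing R] [IsDomain R] [Algebra k R]
  {F : Fin 3 → MvPolynomial (Fin 3) k} {f : Fin 3 → MvPolynomial (Fin 3) R}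

theorem basis8_coord (hF : GoodF F) (hf : ∀ i, PTop R 2 (F i) (f i))
    {e : Fin 8 → MvPolynomial (Fin 3) k} (he : TopData F e) {E : Fin 8 → MvPolynomial (Fin 3) R}
    (hE : ∀ i, PTop R (d8 i) (e i) (E i))
    (b : Module.Basis (Fin 8) R (MvPolynomial (Fin 3) R ⧸ Ideal.span (Set.range f)))
    (hb : ∀ i, b i = Ideal.Quotient.mk _ (E i)) {t : ℕ} {g : MvPolynomial (Fin 3) R}
    (hg : g ∈ LL R t) {i : Fin 8} (hi : t ≤ d8 i) : b.repr (Ideal.Quotient.mk _ g) i = 0 := by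
  obtain ⟨r, h0, hr⟩ := R1_span hF.hom he hf hE hg
  have h1 := Ideal.Quotient.eq.2 hr
  rw [mk_sum_smul] at h1
  simp only [← hb] at h1
  rw [h1, b.repr_sum_self]
  exact h0 i hi

/-- adapted basis -/
theorem setup (hF : GoodF F) (hf : ∀ i, PTop R 2 (F i) (f i))
    {φ4 φ5 φ6 : MvPolynomial (Fin 3) k} (hind : IndMod F ![φ4, φ5, φ6]) {j : Fin 3}
    (hj : X j * φ4 ∉ Ideal.span (Set.range F)) {q4 q5 q6 : MvPolynomial (Fin 3) R}
    (h4 : PTop R 2 φ4 q4) (h5 : PTop R 2 φ5 q5) (h6 : PTop R 2 φ6 q6) :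
    ∃ b : Module.Basis (Fin 8) R (MvPolynomial (Fin 3) R ⧸ Ideal.span (Set.range f)),
      b 4 = Ideal.Quotient.mk _ q4 ∧ b 5 = Ideal.Quotient.mk _ q5 ∧
      b 7 = Ideal.Quotient.mk _ (X j * q4) ∧
      ∀ g ∈ LL R 3, b.repr (Ideal.Quotient.mk _ g) 7 = 0 := by
  have hT := TopData.of hF (u := X) (fun i => isHomogeneous_X k i) (v := ![φ4, φ5, φ6]) (fun i => by
    fin_cases i
    exacts [h4.hom, h5.hom, h6.hom]) ((isHomogeneous_X k j).mul h4.hom) hF.IndMod_X hind hj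
  have hE : ∀ i, PTop R (d8 i) ((![1, X 0, X 1, X 2, φ4, φ5, φ6, X j * φ4] : Fin 8 → _) i)
      ((![1, X 0, X 1, X 2, q4, q5, q6, X j * q4] : Fin 8 → MvPolynomial (Fin 3) R) i) := by
    intro i
    fin_cases i
    exacts [PTop.one, PTop.X 0, PTop.X 1, PTop.X 2, h4, h5, h6, (PTop.X j).mul h4]
  obtain ⟨b, hb⟩ := exists_basis8 hF hf hT hE
  exact ⟨b, hb 4, hb 5, hb 7, fun g hg => basis8_coord hF hf hT hE b hb hg (le_refl 3)⟩

variable [IsNoetherianRing R]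

/-- kernel of the projection -/
noncomputable def NN (f : Fin 3 → MvPolynomial (Fin 3) R) (I : Ideal (MvPolynomial (Fin 3) R)) :
    Submodule R (MvPolynomial (Fin 3) R ⧸ Ideal.span (Set.range f)) :=
  (I.map (Ideal.Quotient.mk (Ideal.span (Set.range f)))).restrictScalars R

theorem mem_NN {I : Ideal (MvPolynomial (Fin 3) R)} (hI : Ideal.span (Set.range f) ≤ I)
    (g : MvPolynomial (Fin 3) R) : Ideal.Quotient.mk _ g ∈ NN f I ↔ g ∈ I := by
  change Ideal.Quotient.mk _ g ∈ I.map (Ideal.Quotient.mk (Ideal.span (Set.range f))) ↔ _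
  rw [Ideal.mem_map_iff_of_surjective _ Ideal.Quotient.mk_surjective]
  constructor
  · rintro ⟨y, hy, h⟩
    have := hI (Ideal.Quotient.eq.1 h)
    have := I.sub_mem hy this
    simpa using this
  · exact fun h => ⟨g, h, rfl⟩

theorem core_red (hF : GoodF F) (hf : ∀ i, PTop R 2 (F i) (f i))
    {I : Ideal (MvPolynomial (Fin 3) R)} (hI : Ideal.span (Set.range f) ≤ I)
    (h : PDle R 1 (NN f I)) : PDle R 2 (MvPolynomial (Fin 3) R ⧸ I) := by
  obtain ⟨b, -⟩ := exists_basis8' hF hf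
  have : Module.Projective R (MvPolynomial (Fin 3) R ⧸ Ideal.span (Set.range f)) :=
    Module.Projective.of_basis b
  let π : (MvPolynomial (Fin 3) R ⧸ Ideal.span (Set.range f)) →ₗ[R] (MvPolynomial (Fin 3) R ⧸ I) :=
    (Ideal.Quotient.factorₐ R hI).toLinearMap
  refine (PDle_succ_iff (K := NN f I) (NN f I).subtype π (NN f I).injective_subtype
    (Ideal.Quotient.factor_surjective hI) ?_ 1).2 h
  intro x
  obtain ⟨g, rfl⟩ := Ideal.Quotient.mk_surjective x
  have h1 : π (Ideal.Quotient.mk _ g) = 0 ↔ g ∈ I := by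
    change Ideal.Quotient.mk I g = 0 ↔ _
    rw [Ideal.Quotient.eq_zero_iff_mem]
  rw [h1, ← mem_NN hI]
  simp

variable {p : Ideal (MvPolynomial (Fin 3) R)}

theorem mk_smul (J : Ideal (MvPolynomial (Fin 3) R)) (r : R) (v : MvPolynomial (Fin 3) R) :
    (Ideal.Quotient.mk J (r • v)) = r • Ideal.Quotient.mk J v := rfl

theorem core_B1 (h : Ctx F f p) {I : Ideal (MvPolynomial (Fin 3) R)}
    (hI : Ideal.span (Set.range f) ≤ I) (hIp : I ≤ p) {φ4 φ5 φ6 : MvPolynomial (Fin 3) k}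
    (hind : IndMod F ![φ4, φ5, φ6]) {j : Fin 3}
    (hj : X j * φ4 ∉ Ideal.span (Set.range F)) {q4 q5 : MvPolynomial (Fin 3) R}
    (h4 : PTop R 2 φ4 q4) (h5 : PTop R 2 φ5 q5) (h6 : φ6.IsHomogeneous 2) (hq4 : q4 ∈ I)
    (hq5 : q5 ∈ I) : PDle R 0 (NN f I) := by
  obtain ⟨b, hb4, hb5, hb7, -⟩ := setup h.hF h.hf hind hj h4 h5 (PTop.self h6)
  have hli : LinearIndependent R ![b 4, b 5, b 7] := by
    have := b.linearIndependent.comp (![4, 5, 7] : Fin 3 → Fin 8) (by decide)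
    convert this using 1
    funext i; fin_cases i <;> rfl
  have hX : X j * q4 ∈ I := I.mul_mem_left _ hq4
  refine PDle_span_of_li _ hli _ (le_antisymm ?_ ?_)
  · intro x hx
    obtain ⟨g, rfl⟩ := Ideal.Quotient.mk_surjective x
    rw [mem_NN hI] at hx
    obtain ⟨c, r, hc, hr⟩ := h.U3 ![q4, q5, X j * q4] (fun i => by
      fin_cases i
      exacts [hIp hq4, hIp hq5, hIp hX]) (fun r hr => by
        rw [← Ideal.Quotient.eq_zero_iff_mem, mk_sum_smul] at hr
        rw [Fintype.linearIndependent_iff] at hli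
        funext i
        refine hli r ?_ i
        rw [← hr, Fin.sum_univ_three, Fin.sum_univ_three]
        simp [hb4, hb5, hb7]) (hIp hx)
    have h1 := Ideal.Quotient.eq.2 hr
    rw [mk_sum_smul, Fin.sum_univ_three, mk_smul] at h1
    set x := Ideal.Quotient.mk (Ideal.span (Set.range f)) g
    simp only [Matrix.cons_val_zero, Matrix.cons_val_one, Matrix.cons_val_two, Matrix.head_cons,
      Matrix.tail_cons] at h1
    change c • x = r 0 • _ + r 1 • _ + r 2 • Ideal.Quotient.mk _ (X j * q4) at h1
    rw [← hb4, ← hb5, ← hb7] at h1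
    have hz : ∀ i : Fin 8, i ≠ 4 → i ≠ 5 → i ≠ 7 → b.repr x i = 0 := by
      intro i i4 i5 i7
      have h2 := congrArg (fun y => b.repr y i) h1
      simp [Finsupp.single_apply, Ne.symm i4, Ne.symm i5, Ne.symm i7] at h2
      exact h2.resolve_left hc
    have hx' := b.sum_repr x
    rw [Fin.sum_univ_eight, hz 0 (by decide) (by decide) (by decide),
      hz 1 (by decide) (by decide) (by decide), hz 2 (by decide) (by decide) (by decide),
      hz 3 (by decide) (by decide) (by decide), hz 6 (by decide) (by decide) (by decide)] at hx'
    rw [← hx', Submodule.mem_span_range_iff_exists_fun]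
    refine ⟨![b.repr x 4, b.repr x 5, b.repr x 7], ?_⟩
    simp [Fin.sum_univ_three]
  · rw [Submodule.span_le]
    rintro _ ⟨i, rfl⟩
    fin_cases i
    · change b 4 ∈ _
      rw [hb4]; exact (mem_NN hI _).2 hq4
    · change b 5 ∈ _
      rw [hb5]; exact (mem_NN hI _).2 hq5
    · change b 7 ∈ _
      rw [hb7]; exact (mem_NN hI _).2 hX

end core
end part10

section part11
section coreB2
set_option linter.unusedSectionVars false
open MvPolynomial

variable {k : Type*} [Field k] {R : Type u} [CommRing R] [IsDomain R] [Algebra k R]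
  {F : Fin 3 → MvPolynomial (Fin 3) k} {f : Fin 3 → MvPolynomial (Fin 3) R}
  [IsNoetherianRing R] {p : Ideal (MvPolynomial (Fin 3) R)}

theorem exists_c (hF : GoodF F) {φ : MvPolynomial (Fin 3) k} (hφ : φ.IsHomogeneous 2) {j : Fin 3}
    (hj : X j * φ ∉ Ideal.span (Set.range F)) : ∃ c : Fin 3 → k, c j = 1 ∧
      ∀ i, (X i - C (c i) * X j) * φ ∈ Ideal.span (Set.range F) := by
  have hX : ∀ i, (X i * φ).IsHomogeneous 3 := fun i => (isHomogeneous_X k i).mul hφ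
  choose a ha using fun i => hF.soc3 (hX i) (hX j) hj
  refine ⟨Function.update a j 1, by simp, fun i => ?_⟩
  by_cases hi : i = j
  · subst hi; simp
  · rw [Function.update_of_ne hi]
    convert ha i using 1
    ring

theorem core_B2 [UniqueFactorizationMonoid R] (h : Ctx F f p) {I : Ideal (MvPolynomial (Fin 3) R)}
    {φ4 φ5 φ6 : MvPolynomial (Fin 3) k} (hind : IndMod F ![φ4, φ5, φ6]) {j : Fin 3}
    (hj : X j * φ4 ∉ Ideal.span (Set.range F)) {q : MvPolynomial (Fin 3) R}
    (h4 : PTop R 2 φ4 q) (h5 : φ5.IsHomogeneous 2) (h6 : φ6.IsHomogeneous 2) (hq : q ∈ p)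
    (hI : I = Ideal.span (Set.range f) ⊔ Ideal.span {q}) : PDle R 1 (NN f I) := by
  have hJI : Ideal.span (Set.range f) ≤ I := hI ▸ le_sup_left
  have hqI : q ∈ I := by rw [hI]; exact Ideal.mem_sup_right (Ideal.mem_span_singleton_self q)
  obtain ⟨b, hb4, -, hb7, hco⟩ := setup h.hF h.hf hind hj h4 (PTop.self h5) (PTop.self h6)
  obtain ⟨c, hcj, hc⟩ := exists_c h.hF h4.hom hj
  set mk := Ideal.Quotient.mk (Ideal.span (Set.range f)) with hmk
  -- coordinate 7 vanishes
  have hs7 : ∀ i, b.repr (mk ((X i - C (algebraMap k R (c i)) * X j) * q)) 7 = 0 := by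
    intro i
    have hlin : PTop R 1 (X i - C (c i) * X j : MvPolynomial (Fin 3) k)
        (X i - C (algebraMap k R (c i)) * X j : MvPolynomial (Fin 3) R) := by
      have h1 : (X i - C (c i) * X j : MvPolynomial (Fin 3) k).IsHomogeneous 1 :=
        (isHomogeneous_X k i).sub (by
          simpa using (isHomogeneous_C (Fin 3) (c i)).mul (isHomogeneous_X k j))
      have h2 := PTop.self (R := R) h1
      simpa using h2
    obtain ⟨g, hg, hgs⟩ := mem_top (t := 1) h.hf (hlin.mul h4) (hc i)
    rw [hmk, Ideal.Quotient.eq.2 hgs]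
    exact hco g hg
  set β : Fin 3 → R := fun i => b.repr (mk ((X i - C (algebraMap k R (c i)) * X j) * q)) 4 with hβ
  have hβj : β j = 0 := by simp [hβ, hcj]
  set l : Fin 3 → MvPolynomial (Fin 3) R := fun i => X i - C (algebraMap k R (c i)) * X j - C (β i)
    with hl
  have hlj : l j = 0 := by simp [hl, hcj, hβj]
  have hmkl : ∀ i, mk (l i * q) = mk ((X i - C (algebraMap k R (c i)) * X j) * q) - β i • b 4 := by
    intro i
    rw [hb4, hmk, ← mk_smul, ← map_sub]
    congr 1
    rw [hl, smul_eq_C_mul]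
    ring
  have hr4 : ∀ i, b.repr (mk (l i * q)) 4 = 0 := by
    intro i
    rw [hmkl]
    simp [hβ]
  have hr7 : ∀ i, b.repr (mk (l i * q)) 7 = 0 := by
    intro i
    rw [hmkl, map_sub, Finsupp.sub_apply, hs7]
    simp
  -- decomposition of elements of N
  have hdec : ∀ x ∈ NN f I, ∃ (a a' : R) (g : Fin 3 → MvPolynomial (Fin 3) R),
      x = a • b 4 + a' • b 7 + ∑ i, mk (g i * (l i * q)) := by
    intro x hx
    obtain ⟨y, rfl⟩ := Ideal.Quotient.mk_surjective x
    rw [mem_NN hJI, hI, Submodule.mem_sup] at hx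
    obtain ⟨y1, hy1, y2, hy2, rfl⟩ := hx
    obtain ⟨z, rfl⟩ := Ideal.mem_span_singleton'.1 hy2
    obtain ⟨a, a', g, hg⟩ := quot_lemma h.hF h.hf c β hcj hβj z
    refine ⟨a, a', g, ?_⟩
    rw [hb4, hb7, hmk, ← mk_smul, ← mk_smul, ← map_sum, ← map_add, ← map_add, Ideal.Quotient.eq]
    have := Ideal.add_mem _ hy1 (Ideal.mul_mem_right q _ hg)
    convert this using 1
    rw [smul_eq_C_mul, smul_eq_C_mul, sub_mul, add_mul, Finset.sum_mul]
    simp only [mul_assoc, hl]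
    ring
  have hb4N : b 4 ∈ NN f I := by rw [hb4]; exact (mem_NN hJI _).2 hqI
  have hb7N : b 7 ∈ NN f I := by rw [hb7]; exact (mem_NN hJI _).2 (I.mul_mem_left _ hqI)
  have hrN : ∀ i, mk (l i * q) ∈ NN f I := fun i => (mem_NN hJI _).2 (I.mul_mem_left _ hqI)
  by_cases hall : ∀ i, mk (l i * q) = 0
  · refine PDle.mono (m := 0) ?_ (by omega)
    refine PDle_span_of_li ![b 4, b 7] ?_ _ (le_antisymm ?_ ?_)
    · have := b.linearIndependent.comp (![4, 7] : Fin 2 → Fin 8) (by decide)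
      have e : (b ∘ ![4, 7] : Fin 2 → _) = ![b 4, b 7] := by
        funext i; fin_cases i <;> rfl
      rw [e] at this
      exact this
    · intro x hx
      obtain ⟨a, a', g, rfl⟩ := hdec x hx
      rw [Finset.sum_eq_zero (fun i _ => by rw [map_mul, hall i, mul_zero]), add_zero]
      exact Submodule.add_mem _ (Submodule.smul_mem _ _ (Submodule.subset_span ⟨0, rfl⟩))
        (Submodule.smul_mem _ _ (Submodule.subset_span ⟨1, rfl⟩))
    · rw [Submodule.span_le]
      rintro _ ⟨i, rfl⟩
      fin_cases i
      exacts [hb4N, hb7N]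
  · push Not at hall
    obtain ⟨i0, hi0⟩ := hall
    obtain ⟨g0, y, hg0, hy, hprim⟩ := exists_primitive (fun i => b.repr (mk (l i0 * q)) i) (by
      intro h0
      apply hi0
      apply b.repr.injective
      ext i
      rw [map_zero]
      exact congrFun h0 i)
    obtain ⟨v, hv⟩ := Ideal.Quotient.mk_surjective (∑ i, y i • b i)
    change mk v = _ at hv
    have hvy : ∀ i, b.repr (mk v) i = y i := by
      intro i; rw [hv, b.repr_sum_self]
    have hgv : mk (l i0 * q) = g0 • mk v := by
      apply b.repr.injective
      ext i
      rw [map_smul, Finsupp.smul_apply, hvy, smul_eq_mul]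
      exact hy i
    have hvp : v ∈ p := by
      rw [hmk, ← mk_smul, Ideal.Quotient.eq] at hgv
      have h1 := p.sub_mem (p.mul_mem_left (l i0) hq) (h.le hgv)
      rw [sub_sub_cancel, smul_eq_C_mul] at h1
      rcases h.prime.mem_or_mem h1 with h2 | h2
      · exact absurd (h.hR _ h2) hg0
      · exact h2
    have hy4 : y 4 = 0 := by
      have := hy 4
      rw [hr4] at this
      exact (mul_eq_zero.1 this.symm).resolve_left hg0
    have hy7 : y 7 = 0 := by
      have := hy 7
      rw [hr7] at this
      exact (mul_eq_zero.1 this.symm).resolve_left hg0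
    have hv0 : ∃ i, y i ≠ 0 := by
      by_contra hcon
      push Not at hcon
      apply hi0
      rw [hgv, hv]
      simp [hcon]
    have hli' : ∀ a a' a'' : R, a • b 4 + a' • b 7 + a'' • mk v = 0 → a = 0 ∧ a' = 0 ∧ a'' = 0 := by
      intro a a' a'' h0
      have h1 := fun i => congrArg (fun y => b.repr y i) h0
      simp only [map_add, map_smul, Finsupp.add_apply, Finsupp.smul_apply, hvy, smul_eq_mul,
        Module.Basis.repr_self, map_zero, Finsupp.zero_apply] at h1
      have e4 := h1 4
      have e7 := h1 7
      simp [hy4] at e4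
      simp [hy7] at e7
      obtain ⟨i, hi⟩ := hv0
      have ei := h1 i
      rw [e4, e7] at ei
      simp at ei
      exact ⟨e4, e7, ei.resolve_right hi⟩
    have hli : LinearIndependent R ![b 4, b 7, mk v] := by
      rw [Fintype.linearIndependent_iff]
      intro r hr
      have := hli' (r 0) (r 1) (r 2) (by simpa [Fin.sum_univ_three] using hr)
      intro i
      fin_cases i
      exacts [this.1, this.2.1, this.2.2]
    have hU : ∀ g ∈ p, ∃ d : R, mk g = b.repr (mk g) 4 • b 4 + b.repr (mk g) 7 • b 7 + d • mk v := by
      intro g hg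
      obtain ⟨c0, r, hc0, hr⟩ := h.U3 ![q, X j * q, v] (fun i => by
        fin_cases i
        exacts [hq, p.mul_mem_left _ hq, hvp]) (fun r hr => by
          rw [← Ideal.Quotient.eq_zero_iff_mem, mk_sum_smul, Fin.sum_univ_three] at hr
          have := hli' (r 0) (r 1) (r 2) (by rw [hb4, hb7]; exact hr)
          funext i
          fin_cases i
          exacts [this.1, this.2.1, this.2.2]) hg
      have h1 := Ideal.Quotient.eq.2 hr
      rw [mk_sum_smul, Fin.sum_univ_three, mk_smul] at h1
      change c0 • mk g = r 0 • mk q + r 1 • mk (X j * q) + r 2 • mk v at h1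
      rw [hmk, ← hb4, ← hb7, ← hmk] at h1
      have h2 := fun i => congrArg (fun y => b.repr y i) h1
      simp only [map_add, map_smul, Finsupp.add_apply, Finsupp.smul_apply, hvy, smul_eq_mul,
        Module.Basis.repr_self] at h2
      have h3 : ∀ i, i ≠ 4 → i ≠ 7 → c0 * b.repr (mk g) i = r 2 * y i := by
        intro i i4 i7
        rw [h2 i]
        simp [Ne.symm i4, Ne.symm i7]
      obtain ⟨d, hd⟩ := hprim c0 (r 2) (fun i => by
        by_cases i4 : i = 4
        · subst i4; rw [hy4]; simp
        by_cases i7 : i = 7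
        · subst i7; rw [hy7]; simp
        rw [← h3 i i4 i7]
        exact dvd_mul_right _ _)
      refine ⟨d, ?_⟩
      apply b.repr.injective
      ext i
      simp only [map_add, map_smul, Finsupp.add_apply, Finsupp.smul_apply, hvy, smul_eq_mul,
        Module.Basis.repr_self]
      by_cases i4 : i = 4
      · subst i4; simp [hy4]
      by_cases i7 : i = 7
      · subst i7; simp [hy7]
      have h5 := h3 i i4 i7
      simp only [Finsupp.single_eq_of_ne i4, Finsupp.single_eq_of_ne i7]
      apply mul_left_cancel₀ hc0
      rw [h5, hd]
      ring
    have hrd : ∀ i, ∃ d : R, mk (l i * q) = d • mk v := by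
      intro i
      obtain ⟨d, hd⟩ := hU (l i * q) (p.mul_mem_left _ hq)
      refine ⟨d, ?_⟩
      rw [hr4, hr7] at hd
      simpa using hd
    choose d hd using hrd
    have hdj : d j • mk v = 0 := by rw [← hd, hlj]; simp
    have hsum : ∀ x : Fin 3 → MvPolynomial (Fin 3) R ⧸ Ideal.span (Set.range f),
        ∑ i, x i = x j + x (j+1) + x (j+2) := by
      intro x
      rw [Fin.sum_univ_three]
      fin_cases j
      · rfl
      · change _ = x 1 + x 2 + x 0; abel
      · change _ = x 2 + x 0 + x 1; abel
    refine PDle_four ![b 4, b 7, mk v] hli (d (j+1)) (d (j+2)) _ (le_antisymm ?_ ?_)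
    · change _ ≤ Submodule.span R (Set.range ![b 4, b 7, d (j+1) • mk v, d (j+2) • mk v])
      intro x hx
      obtain ⟨a, a', g, rfl⟩ := hdec x hx
      set W := Submodule.span R (Set.range ![b 4, b 7, d (j+1) • mk v, d (j+2) • mk v])
      have w4 : b 4 ∈ W := Submodule.subset_span ⟨0, rfl⟩
      have w7 : b 7 ∈ W := Submodule.subset_span ⟨1, rfl⟩
      have w1 : d (j+1) • mk v ∈ W := Submodule.subset_span ⟨2, rfl⟩
      have w2 : d (j+2) • mk v ∈ W := Submodule.subset_span ⟨3, rfl⟩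
      have hterm : ∀ i, d i • mk v ∈ W → mk (g i * (l i * q)) ∈ W := by
        intro i hi
        have e1 : mk (g i * (l i * q)) = d i • mk (g i * v) := by
          rw [map_mul, hd i, mul_smul_comm, map_mul]
        obtain ⟨d', hd'⟩ := hU (g i * v) (p.mul_mem_left _ hvp)
        rw [e1, hd', smul_add, smul_add, smul_comm (d i) d']
        exact W.add_mem (W.add_mem (W.smul_mem _ (W.smul_mem _ w4)) (W.smul_mem _ (W.smul_mem _ w7)))
          (W.smul_mem _ hi)
      rw [hsum]
      refine W.add_mem (W.add_mem (W.smul_mem _ w4) (W.smul_mem _ w7)) (W.add_mem (W.add_mem ?_ ?_) ?_)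
      · exact hterm _ (hdj ▸ W.zero_mem)
      · exact hterm _ w1
      · exact hterm _ w2
    · rw [Submodule.span_le]
      rintro _ ⟨i, rfl⟩
      fin_cases i
      · exact hb4N
      · exact hb7N
      · change d (j+1) • mk v ∈ _
        rw [← hd]; exact hrN _
      · change d (j+2) • mk v ∈ _
        rw [← hd]; exact hrN _

theorem core_thm [UniqueFactorizationMonoid R] (h : Ctx F f p) {ι : Type*}
    (q : ι → MvPolynomial (Fin 3) R) (φ : ι → MvPolynomial (Fin 3) k) (hqp : ∀ i, q i ∈ p)
    (hφ : ∀ i, PTop R 2 (φ i) (q i)) {I : Ideal (MvPolynomial (Fin 3) R)}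
    (hI : I = Ideal.span (Set.range f) ⊔ Ideal.span (Set.range q)) :
    PDle R 2 (MvPolynomial (Fin 3) R ⧸ I) := by
  have hJI : Ideal.span (Set.range f) ≤ I := hI ▸ le_sup_left
  have hqI : ∀ i, q i ∈ I := fun i => by
    rw [hI]; exact Ideal.mem_sup_right (Ideal.subset_span ⟨i, rfl⟩)
  have hIp : I ≤ p := by
    rw [hI]
    refine sup_le h.le ?_
    rw [Ideal.span_le]; rintro _ ⟨i, rfl⟩; exact hqp i
  apply core_red h.hF h.hf hJI
  by_cases hA : ∀ i, φ i ∈ Ideal.span (Set.range F)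
  · have hIJ : I = Ideal.span (Set.range f) := by
      refine le_antisymm ?_ hJI
      rw [hI]
      refine sup_le le_rfl ?_
      rw [Ideal.span_le]; rintro _ ⟨i, rfl⟩
      exact h.mem_of_top (hqp i) (hφ i) (hA i)
    refine PDle.mono (m := 0) ?_ (by omega)
    refine PDle_span_of_li (n := 0) ![] (linearIndependent_empty_type) _ ?_
    rw [eq_comm, Submodule.span_eq_bot.2 (by rintro _ ⟨i, rfl⟩; exact i.elim0), eq_comm, eq_bot_iff]
    intro x hx
    obtain ⟨g, rfl⟩ := Ideal.Quotient.mk_surjective x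
    rw [mem_NN hJI, hIJ] at hx
    rw [Submodule.mem_bot, Ideal.Quotient.eq_zero_iff_mem]
    exact hx
  push Not at hA
  obtain ⟨i4, hi4⟩ := hA
  obtain ⟨j, hj⟩ := h.hF.pair2 (hφ i4).hom (by omega) hi4
  by_cases hB : ∀ i, ∃ a : k, φ i - C a * φ i4 ∈ Ideal.span (Set.range F)
  · have h0 := IndMod_one hi4
    obtain ⟨v1, hv1, iv1⟩ := h.hF.extend (t := 2) (Or.inr rfl) (by omega) (fun i => by
      fin_cases i
      exact (hφ i4).hom) h0
    obtain ⟨v2, hv2, iv2⟩ := h.hF.extend (t := 2) (Or.inr rfl) (by omega) (fun i => by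
      fin_cases i
      exacts [(hφ i4).hom, hv1]) iv1
    have hind : IndMod F ![φ i4, v1, v2] := by
      convert iv2 using 1
      funext i; fin_cases i <;> rfl
    refine core_B2 h hind hj (hφ i4) hv1 hv2 (hqp i4) (le_antisymm ?_ ?_)
    · rw [hI]
      refine sup_le le_sup_left ?_
      rw [Ideal.span_le]; rintro _ ⟨i, rfl⟩
      obtain ⟨a, ha⟩ := hB i
      have h1 : q i - C (algebraMap k R a) * q i4 ∈ Ideal.span (Set.range f) := by
        refine h.mem_of_top (p.sub_mem (hqp i) (p.mul_mem_left _ (hqp i4))) ⟨?_, ?_⟩ ha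
        · exact (hφ i).hom.sub (by
            simpa using (isHomogeneous_C (Fin 3) a).mul (hφ i4).hom)
        · have e1 := (LL R 2).sub_mem (hφ i).low ((LL R 2).smul_mem (algebraMap k R a) (hφ i4).low)
          convert e1 using 1
          rw [smul_eq_C_mul, map_sub, map_mul, map_C]
          ring
      have h2 : q i = (q i - C (algebraMap k R a) * q i4) + C (algebraMap k R a) * q i4 := by ring
      rw [SetLike.mem_coe, h2]
      exact Ideal.add_mem _ (Ideal.mem_sup_left h1) (Ideal.mem_sup_right
        (Ideal.mul_mem_left _ _ (Ideal.mem_span_singleton_self _)))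
    · refine sup_le hJI ?_
      rw [Ideal.span_le, Set.singleton_subset_iff]
      exact hqI i4
  · push Not at hB
    obtain ⟨i5, hi5⟩ := hB
    have h0 : IndMod F ![φ i4, φ i5] := by
      intro a ha
      simp only [Fin.sum_univ_two, Matrix.cons_val_zero, Matrix.cons_val_one] at ha
      have a1 : a 1 = 0 := by
        by_contra a1
        apply hi5 (-(a 1)⁻¹ * a 0)
        have := Ideal.mul_mem_left _ (C (a 1)⁻¹) ha
        convert this using 1
        rw [mul_add, ← mul_assoc, ← mul_assoc, ← C_mul, ← C_mul, inv_mul_cancel₀ a1, neg_mul, C_neg]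
        simp; ring
      rw [a1] at ha
      simp only [C_0, zero_mul, add_zero] at ha
      have := IndMod_one hi4 ![a 0] (by simpa using ha)
      funext i
      fin_cases i
      · exact congrFun this 0
      · exact a1
    obtain ⟨v2, hv2, iv2⟩ := h.hF.extend (t := 2) (Or.inr rfl) (by omega) (fun i => by
      fin_cases i
      exacts [(hφ i4).hom, (hφ i5).hom]) h0
    have hind : IndMod F ![φ i4, φ i5, v2] := by
      convert iv2 using 1
      funext i; fin_cases i <;> rfl
    exact (core_B1 h hJI hIp hind hj (hφ i4) (hφ i5) hv2 (hqI i4) (hqI i5)).mono (by omega)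

end coreB2
end part11

section part12
section heights
set_option linter.unusedSectionVars false

/-- every prime over `b` has height at least `t` -/
def HtGe {S : Type*} [CommRing S] (b : Ideal S) (t : ℕ) : Prop :=
  ∀ P : Ideal S, P.IsPrime → b ≤ P → (t : ℕ∞) ≤ P.height

theorem htge_step {k S : Type*} [Field k] [Infinite k] [CommRing S] [IsNoetherianRing S] [Algebra k S]
    {ι : Type*} [Finite ι] (W : Submodule k S) (c : ι → Ideal S) (t : ι → ℕ)
    (hs : ∀ i, ∃ s : Set S, s.Finite ∧ s.ncard ≤ t i ∧ c i = Ideal.span s)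
    (h : ∀ i, HtGe (c i) (t i))
    (hW : ∀ i, HtGe (Ideal.span (W : Set S)) (t i + 1)) :
    ∃ w ∈ W, ∀ i, HtGe (c i ⊔ Ideal.span {w}) (t i + 1) := by
  classical
  have hfin : ∀ i, Finite (c i).minimalPrimes := fun i =>
    Set.finite_coe_iff.2 (Ideal.finite_minimalPrimes_of_isNoetherianRing S (c i))
  let q : (Σ i, (c i).minimalPrimes) → Subspace k W := fun x =>
    ((x.2.1).restrictScalars k).comap W.subtype
  have hq : ⋃ x, (q x : Set W) ≠ Set.univ := by
    intro hcon
    obtain ⟨⟨i, P, hP⟩, hx⟩ := Subspace.exists_eq_top_of_iUnion_eq_univ hcon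
    have hPp : P.IsPrime := hP.1.1
    obtain ⟨s, hs1, hs2, hs3⟩ := hs i
    have h1 : P.height ≤ t i := by
      rw [hs3] at hP
      exact (Ideal.height_le_card_of_mem_minimalPrimes_span hs1 hP).trans (by exact_mod_cast hs2)
    have h2 := hW i P hPp (by
      rw [Ideal.span_le]
      intro w hw
      have : (⟨w, hw⟩ : W) ∈ q ⟨i, P, hP⟩ := by rw [hx]; trivial
      exact this)
    have := h2.trans h1
    norm_cast at this
    omega
  obtain ⟨w, hw⟩ := (Set.ne_univ_iff_exists_notMem _).1 hq
  simp only [Set.mem_iUnion, not_exists] at hw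
  refine ⟨w, w.2, fun i Q hQ hle => ?_⟩
  obtain ⟨P, hP, hPQ⟩ := Ideal.exists_minimalPrimes_le (le_sup_left.trans hle)
  have hPp : P.IsPrime := hP.1.1
  have hwQ : (w : S) ∈ Q := hle (Submodule.mem_sup_right (Ideal.mem_span_singleton_self _))
  have hwP : (w : S) ∉ P := hw ⟨i, P, hP⟩
  have hlt : P < Q := lt_of_le_of_ne hPQ (by rintro rfl; exact hwP hwQ)
  have := Ideal.height_add_one_le_of_lt_of_isPrime hlt
  refine le_trans ?_ this
  push_cast
  gcongr
  exact h i P hPp hP.1.2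

theorem htge_seq {k S : Type*} [Field k] [Infinite k] [CommRing S] [IsNoetherianRing S] [Algebra k S]
    {ι : Type*} [Finite ι] (W : Submodule k S) (c : ι → Ideal S) (t : ι → ℕ) (M : ℕ)
    (hs : ∀ i, ∃ s : Set S, s.Finite ∧ s.ncard ≤ t i ∧ c i = Ideal.span s)
    (h : ∀ i, HtGe (c i) (t i))
    (hW : HtGe (Ideal.span (W : Set S)) M) (m : ℕ) :
    ∃ z : ℕ → S, (∀ j, z j ∈ W) ∧ ∀ i j, j ≤ m → t i + j ≤ M →
      HtGe (c i ⊔ Ideal.span (z '' Set.Iio j)) (t i + j) := by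
  classical
  induction m with
  | zero =>
    refine ⟨fun _ => 0, fun _ => zero_mem _, fun i j hj _ => ?_⟩
    obtain rfl : j = 0 := by omega
    have : Set.Iio (0:ℕ) = ∅ := by ext; simp
    simpa [this] using h i
  | succ m ih =>
    obtain ⟨z, hz, hz'⟩ := ih
    obtain ⟨w, hw, hw'⟩ := htge_step (ι := {i // t i + m + 1 ≤ M}) W
      (fun i => c i ⊔ Ideal.span (z '' Set.Iio m)) (fun i => t i + m) (fun i => by
        obtain ⟨s, h1, h2, h3⟩ := hs i
        refine ⟨s ∪ z '' Set.Iio m, h1.union ((Set.finite_Iio m).image z), ?_, ?_⟩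
        · refine (Set.ncard_union_le _ _).trans ?_
          have := Set.ncard_image_le (f := z) (Set.finite_Iio m)
          have h4 : (Set.Iio m).ncard = m := by simp [Set.ncard_eq_toFinset_card']
          omega
        · rw [Ideal.span_union, h3]) (fun i => hz' i m le_rfl (by have := i.2; omega))
      (fun i P hP hle => le_trans (by exact_mod_cast i.2) (hW P hP hle))
    refine ⟨Function.update z m w, fun j => ?_, fun i j hj hM => ?_⟩
    · by_cases hj : j = m
      · subst hj; simpa
      · simpa [Function.update_of_ne hj] using hz j
    · have him : ∀ a, a ≤ m → Function.update z m w '' Set.Iio a = z '' Set.Iio a := fun a ha =>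
        Set.image_congr fun x hx => Function.update_of_ne (by
          have : x < a := hx
          omega) _ _
      rcases Nat.lt_or_ge m j with hjm | hjm
      · obtain rfl : j = m + 1 := by omega
        have h1 := hw' ⟨i, by omega⟩
        have h2 : Set.Iio (m+1) = insert m (Set.Iio m) := by
          ext x; simp
        rw [h2, Set.image_insert_eq, him m le_rfl, Function.update_self, Set.insert_eq,
          Ideal.span_union, sup_comm (Ideal.span {w}), ← sup_assoc]
        exact h1
      · rw [him j hjm]; exact hz' i j hjm hM

open MvPolynomial

theorem height_vars {k : Type*} [Field k] {N : ℕ} {P : Ideal (MvPolynomial (Fin N) k)}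
    (_hP : P.IsPrime) (hX : ∀ i, X i ∈ P) : (N : ℕ∞) ≤ P.height := by
  let φ : ℕ → MvPolynomial (Fin N) k →ₐ[k] MvPolynomial (Fin N) k := fun j =>
    aeval (fun i => if i.1 < j then 0 else X i)
  let q : ℕ → Ideal (MvPolynomial (Fin N) k) := fun j => RingHom.ker (φ j)
  have hq : ∀ j, (q j).IsPrime := fun j => RingHom.ker_isPrime _
  have hlt : ∀ j, j < N → q j < q (j + 1) := by
    intro j hj
    refine lt_of_le_of_ne ?_ ?_
    · intro x hx
      have hx : φ j x = 0 := hx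
      have h1 : φ (j+1) = (φ (j+1)).comp (φ j) := by
        apply MvPolynomial.algHom_ext
        intro i
        simp only [φ, AlgHom.comp_apply, aeval_X]
        by_cases h : i.1 < j
        · rw [if_pos h, if_pos (by omega), map_zero]
        · rw [if_neg h, aeval_X]
      change φ (j+1) x = 0
      rw [h1, AlgHom.comp_apply, hx, map_zero]
    · intro h
      have h1 : X ⟨j, hj⟩ ∈ q (j+1) := by
        change φ (j+1) _ = 0
        simp [φ]
      rw [← h] at h1
      have h2 : φ j (X ⟨j, hj⟩) = 0 := h1
      simp [φ] at h2
  have hht : ∀ j, j ≤ N → (j : ℕ∞) ≤ (q j).height := by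
    intro j
    induction j with
    | zero => intro _; simp
    | succ j ih =>
      intro hj
      have := hq j
      have := hq (j+1)
      refine le_trans ?_ (Ideal.height_add_one_le_of_lt_of_isPrime (hlt j (by omega)))
      push_cast
      gcongr
      exact ih (by omega)
  refine (hht N le_rfl).trans (Ideal.height_mono ?_)
  intro x hx
  have hx : φ N x = 0 := hx
  have h1 : (Ideal.Quotient.mkₐ k P) = (Ideal.Quotient.mkₐ k P).comp (φ N) := by
    apply MvPolynomial.algHom_ext
    intro i
    simp only [φ, AlgHom.comp_apply, aeval_X, if_pos i.2, map_zero]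
    exact Ideal.Quotient.eq_zero_iff_mem.2 (hX i)
  rw [← Ideal.Quotient.eq_zero_iff_mem]
  change (Ideal.Quotient.mkₐ k P) x = 0
  rw [h1, AlgHom.comp_apply, hx, map_zero]

theorem height_le_N {k : Type*} [Field k] {N : ℕ} {P : Ideal (MvPolynomial (Fin N) k)}
    (hP : P.IsPrime) : P.height ≤ (N : ℕ∞) := by
  have h1 := Ideal.height_le_ringKrullDim_of_isPrime (I := P)
  rw [MvPolynomial.ringKrullDim_of_isNoetherianRing, ringKrullDim_eq_zero_of_field] at h1
  simp at h1
  exact_mod_cast h1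

attribute [local instance] MvPolynomial.gradedAlgebra

theorem vars_mem_of_htge {k : Type*} [Field k] {N : ℕ} {b : Ideal (MvPolynomial (Fin N) k)}
    (hb : b.IsHomogeneous (homogeneousSubmodule (Fin N) k)) (h : HtGe b N) (i : Fin N) :
    X i ∈ b.radical := by
  rw [Ideal.radical_eq_sInf, Submodule.mem_sInf]
  rintro (P : Ideal _) ⟨hbP, hP⟩
  set Q := (Ideal.homogeneousCore (homogeneousSubmodule (Fin N) k) P).toIdeal with hQ
  have hQp : Q.IsPrime := hP.homogeneousCore
  have hQP : Q ≤ P := Ideal.toIdeal_homogeneousCore_le _ _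
  have hbQ : b ≤ Q := by
    rw [← hb.toIdeal_homogeneousCore_eq_self]
    exact Ideal.homogeneousCore_mono _ hbP
  set m : Ideal (MvPolynomial (Fin N) k) := RingHom.ker (constantCoeff (R := k) (σ := Fin N)) with hm
  have hmp : m.IsPrime := RingHom.ker_isPrime _
  have hQm : Q ≤ m := by
    intro x hx
    have h0 : homogeneousComponent 0 x ∈ Q := by
      have := (Ideal.homogeneousCore (homogeneousSubmodule (Fin N) k) P).isHomogeneous 0 hx
      rw [← MvPolynomial.decomposition.decompose'_apply]
      exact this
    rw [homogeneousComponent_zero] at h0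
    by_contra hne
    apply hQp.ne_top
    rw [Ideal.eq_top_iff_one]
    have hne : coeff 0 x ≠ 0 := hne
    have := Q.mul_mem_left (C (coeff 0 x)⁻¹) h0
    rwa [← C_mul, inv_mul_cancel₀ hne, C_1] at this
  have h1 : (N : ℕ∞) ≤ Q.height := h Q hQp hbQ
  have h2 : Q = m := by
    by_contra hne
    have := Ideal.height_add_one_le_of_lt_of_isPrime (lt_of_le_of_ne hQm hne)
    have h3 := (add_le_add_left h1 1).trans (this.trans (height_le_N hmp))
    norm_cast at h3
    omega
  apply hQP
  rw [h2]
  change constantCoeff (X i) = 0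
  simp
end heights
end part12

section part13
section coords
set_option linter.unusedSectionVars false
open MvPolynomial
attribute [local instance] MvPolynomial.gradedAlgebra

variable {k : Type u} [Field k] 

section ptopextra
variable {R : Type*} [CommRing R] [Algebra k R]
theorem PTop.add {t : ℕ} {φ ψ : MvPolynomial (Fin 3) k} {p q : MvPolynomial (Fin 3) R}
    (hp : PTop R t φ p) (hq : PTop R t ψ q) : PTop R t (φ + ψ) (p + q) := by
  refine ⟨hp.hom.add hq.hom, ?_⟩
  have := (LL R t).add_mem hp.low hq.low
  rwa [show p + q - map (algebraMap k R) (φ + ψ) = (p - map (algebraMap k R) φ) +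
    (q - map (algebraMap k R) ψ) by rw [map_add]; ring]

theorem PTop.zero {t : ℕ} : PTop R t (0 : MvPolynomial (Fin 3) k) 0 :=
  ⟨isHomogeneous_zero _ _ _, by simp⟩

theorem PTop.smul {t : ℕ} {φ : MvPolynomial (Fin 3) k} {p : MvPolynomial (Fin 3) R}
    (c : k) (hp : PTop R t φ p) : PTop R t (c • φ) (c • p) := by
  have h := (PTop.self (R := R) (isHomogeneous_C (Fin 3) c)).mul hp
  rw [zero_add] at h
  convert h using 1
  · rw [smul_eq_C_mul]
  · rw [map_C, ← smul_eq_C_mul, algebraMap_smul]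
end ptopextra

theorem linear_in_radical {N : ℕ} {b : Ideal (MvPolynomial (Fin N) k)}
    (hb : b.IsHomogeneous (homogeneousSubmodule (Fin N) k)) (h : HtGe b N)
    {l : MvPolynomial (Fin N) k} (hl : l ∈ homogeneousSubmodule (Fin N) k 1) :
    ∃ s, l ^ s ∈ b := by
  rw [homogeneousSubmodule_one_eq_span_X] at hl
  have : Submodule.span k (Set.range X) ≤ (b.radical).restrictScalars k := by
    rw [Submodule.span_le]
    rintro _ ⟨i, rfl⟩
    exact vars_mem_of_htge hb h i
  exact this hl

theorem span_linear {N : ℕ} {z : Fin N → MvPolynomial (Fin N) k}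
    (hz : ∀ i, z i ∈ homogeneousSubmodule (Fin N) k 1) (h : HtGe (Ideal.span (Set.range z)) N) :
    Submodule.span k (Set.range z) = homogeneousSubmodule (Fin N) k 1 := by
  have hle : Submodule.span k (Set.range z) ≤ homogeneousSubmodule (Fin N) k 1 := by
    rw [Submodule.span_le]; rintro _ ⟨i, rfl⟩; exact hz i
  apply Submodule.eq_of_le_of_finrank_le hle
  rw [finrank_homogeneousSubmodule']
  have hN : (N + 1 - 1).choose 1 = N := by simp
  rw [hN]
  obtain ⟨b, hb1, hb2, hb3⟩ := exists_linearIndependent k (Set.range z)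
  have hbf : b.Finite := (Set.finite_range z).subset hb1
  have := hbf.fintype
  have hc := finrank_span_set_eq_card hb3
  rw [← hb2, hc, ← Set.ncard_eq_toFinset_card']
  have hspan : Ideal.span b = Ideal.span (Set.range z) := by
    apply le_antisymm (Ideal.span_mono hb1)
    rw [Ideal.span_le]
    intro x hx
    have : x ∈ Submodule.span k b := by rw [hb2]; exact Submodule.subset_span hx
    exact Submodule.span_le_restrictScalars k (MvPolynomial (Fin N) k) b this
  set m : Ideal (MvPolynomial (Fin N) k) := RingHom.ker (constantCoeff (R := k) (σ := Fin N)) with hm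
  have hmp : m.IsPrime := RingHom.ker_isPrime _
  have hbm : Ideal.span b ≤ m := by
    rw [Ideal.span_le]
    intro x hx
    obtain ⟨i, rfl⟩ := hb1 hx
    change constantCoeff (z i) = 0
    by_contra hne
    have := hz i hne
    simp at this
  obtain ⟨P, hP, -⟩ := Ideal.exists_minimalPrimes_le hbm
  have h1 := Ideal.height_le_card_of_mem_minimalPrimes_span hbf hP
  have h2 := h P hP.1.1 (by rw [← hspan]; exact hP.1.2)
  exact_mod_cast h2.trans h1

theorem surj_endo_inj {A : Type*} [CommRing A] [IsNoetherianRing A] (f : A →+* A)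
    (hf : Function.Surjective f) : Function.Injective f := by
  have hsucc : ∀ n x, (f ^ (n+1)) x = f ((f ^ n) x) := fun n x => by
    rw [pow_succ', RingHom.mul_def]; rfl
  have hmono : Monotone fun n : ℕ => RingHom.ker (f ^ n) := by
    refine monotone_nat_of_le_succ fun n x hx => ?_
    have hx : (f ^ n) x = 0 := hx
    change (f ^ (n+1)) x = 0
    rw [hsucc, hx, map_zero]
  obtain ⟨n, hn⟩ := monotone_stabilizes_iff_noetherian.2 ‹IsNoetherianRing A› ⟨_, hmono⟩
  have hsn : Function.Surjective (f ^ n) := by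
    rw [RingHom.coe_pow]; exact hf.iterate n
  rw [injective_iff_map_eq_zero]
  intro x hx
  obtain ⟨y, rfl⟩ := hsn x
  have h1 : y ∈ RingHom.ker (f ^ (n+1)) := by
    change (f ^ (n+1)) y = 0
    rw [hsucc, hx]
  have h2 : RingHom.ker (f ^ n) = RingHom.ker (f ^ (n+1)) := hn (n+1) (Nat.le_succ n)
  rw [← h2] at h1
  exact h1

/-- the change of coordinates -/
theorem exists_theta {d : ℕ} {z : Fin (d+3) → MvPolynomial (Fin (d+3)) k}
    (h : Submodule.span k (Set.range z) = homogeneousSubmodule (Fin (d+3)) k 1) :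
    ∃ Θ : MvPolynomial (Fin (d+3)) k ≃ₐ[k] MvPolynomial (Fin 3) (MvPolynomial (Fin d) k),
      (∀ i, Θ (z (Fin.castAdd 3 i)) = C (X i)) ∧ ∀ i, Θ (z (Fin.natAdd d i)) = X i := by
  have hsurj : Function.Surjective (aeval z : MvPolynomial (Fin (d+3)) k →ₐ[k] _) := by
    rw [← AlgHom.range_eq_top, eq_top_iff, ← adjoin_range_X, Algebra.adjoin_le_iff]
    rintro _ ⟨i, rfl⟩
    have hi : (X i : MvPolynomial (Fin (d+3)) k) ∈ Submodule.span k (Set.range z) := by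
      rw [h]; exact isHomogeneous_X _ _
    have hle : Submodule.span k (Set.range z) ≤
        Subalgebra.toSubmodule (aeval z : MvPolynomial (Fin (d+3)) k →ₐ[k] _).range := by
      rw [Submodule.span_le]
      rintro _ ⟨j, rfl⟩
      exact ⟨X j, aeval_X z j⟩
    exact hle hi
  have hinj : Function.Injective (aeval z : MvPolynomial (Fin (d+3)) k →ₐ[k] _) :=
    surj_endo_inj
      (aeval z : MvPolynomial (Fin (d+3)) k →ₐ[k] MvPolynomial (Fin (d+3)) k).toRingHom hsurj
  let E : MvPolynomial (Fin (d+3)) k ≃ₐ[k] MvPolynomial (Fin (d+3)) k :=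
    AlgEquiv.ofBijective (aeval z) ⟨hinj, hsurj⟩
  have hE : ∀ i, E.symm (z i) = X i := fun i => by
    rw [AlgEquiv.symm_apply_eq]
    exact (aeval_X z i).symm
  let e : Fin (d+3) ≃ Fin 3 ⊕ Fin d := finSumFinEquiv.symm.trans (Equiv.sumComm _ _)
  refine ⟨(E.symm.trans (renameEquiv k e)).trans (sumAlgEquiv k (Fin 3) (Fin d)), fun i => ?_,
    fun i => ?_⟩
  · simp [hE, e]
  · simp [hE, e]

end coords
end part13

section part14
section coords2
set_option linter.unusedSectionVars false
open MvPolynomial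
attribute [local instance] MvPolynomial.gradedAlgebra

variable {k : Type u} [Field k] 

theorem exists_coord [Infinite k] {d : ℕ} (V : Submodule k (MvPolynomial (Fin (d+3)) k))
    (hV : V ≤ homogeneousSubmodule (Fin (d+3)) k 2)
    (hht : HtGe (Ideal.span (V : Set (MvPolynomial (Fin (d+3)) k))) 3) :
    ∃ (Θ : MvPolynomial (Fin (d+3)) k ≃ₐ[k] MvPolynomial (Fin 3) (MvPolynomial (Fin d) k))
      (g : Fin 3 → MvPolynomial (Fin (d+3)) k) (F : Fin 3 → MvPolynomial (Fin 3) k),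
      (∀ i, g i ∈ V) ∧ HtGe (Ideal.span (Set.range g)) 3 ∧ GoodF F ∧
      (∀ i, PTop (MvPolynomial (Fin d) k) 2 (F i) (Θ (g i))) ∧
      (∀ q ∈ homogeneousSubmodule (Fin (d+3)) k 2,
        ∃ φ : MvPolynomial (Fin 3) k, PTop (MvPolynomial (Fin d) k) 2 φ (Θ q)) ∧
      (∀ i, Θ.symm (C (X i)) ∈ homogeneousSubmodule (Fin (d+3)) k 1) := by
  have hzero : Set.Iio (0:ℕ) = ∅ := by ext; simp
  obtain ⟨g, hgV, hg⟩ := htge_seq (ι := Unit) V (fun _ => ⊥) (fun _ => 0) 3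
    (fun _ => ⟨∅, Set.finite_empty, by simp, by simp⟩) (fun _ P _ _ => by simp) hht 3
  obtain ⟨z, hz1, hz⟩ := htge_seq (ι := Fin 4) (homogeneousSubmodule (Fin (d+3)) k 1)
    (fun i => Ideal.span (g '' Set.Iio i.1)) (fun i => i.1) (d+3)
    (fun i => ⟨g '' Set.Iio i.1, (Set.finite_Iio _).image g, (Set.ncard_image_le
      (Set.finite_Iio _)).trans (by simp [Set.ncard_eq_toFinset_card']), rfl⟩)
    (fun i => by simpa using hg () i.1 (by omega) (by omega))
    (fun P hP hle => height_vars hP fun i => hle (Ideal.subset_span (isHomogeneous_X k i))) (d+3)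
  have hz' : ∀ i j, i < 4 → i + j ≤ d + 3 →
      HtGe (Ideal.span (g '' Set.Iio i) ⊔ Ideal.span (z '' Set.Iio j)) (i + j) :=
    fun i j hi hij => hz ⟨i, hi⟩ j (by omega) hij
  clear hz
  let z' : Fin (d+3) → MvPolynomial (Fin (d+3)) k := fun i => z i
  have hr : Set.range z' = z '' Set.Iio (d+3) := by
    ext x
    constructor
    · rintro ⟨i, rfl⟩; exact ⟨i, i.2, rfl⟩
    · rintro ⟨i, hi, rfl⟩; exact ⟨⟨i, hi⟩, rfl⟩
  have hspan : Submodule.span k (Set.range z') = homogeneousSubmodule (Fin (d+3)) k 1 := by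
    apply span_linear (fun i => hz1 i)
    have := hz' 0 (d+3) (by omega) (by omega)
    rw [hr]
    simpa [hzero] using this
  obtain ⟨Θ, hΘ1, hΘ2⟩ := exists_theta hspan
  let ρ : MvPolynomial (Fin (d+3)) k →ₐ[k] MvPolynomial (Fin 3) k :=
    (mapAlgHom (aeval (fun _ => 0) : MvPolynomial (Fin d) k →ₐ[k] k)).comp Θ.toAlgHom
  have hρ1 : ∀ i : ℕ, i < d → ρ (z i) = 0 := by
    intro i hi
    have := hΘ1 ⟨i, hi⟩
    change MvPolynomial.map _ (Θ (z' (Fin.castAdd 3 ⟨i, hi⟩))) = 0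
    rw [this, map_C]
    simp
  have hρ2 : ∀ i : Fin 3, ρ (z (d + i)) = X i := by
    intro i
    have := hΘ2 i
    change MvPolynomial.map _ (Θ (z' (Fin.natAdd d i))) = _
    rw [this, map_X]
  have hP1 : ∀ l ∈ homogeneousSubmodule (Fin (d+3)) k 1,
      PTop (MvPolynomial (Fin d) k) 1 (ρ l) (Θ l) := by
    intro l hl
    rw [← hspan] at hl
    induction hl using Submodule.span_induction with
    | mem x hx =>
      obtain ⟨i, rfl⟩ := hx
      induction i using Fin.addCases with
      | left i =>
        rw [hΘ1, show ρ (z' (Fin.castAdd 3 i)) = 0 from hρ1 i i.2]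
        refine ⟨isHomogeneous_zero _ _ _, ?_⟩
        rw [map_zero, sub_zero]
        exact homog_mem_LL (isHomogeneous_C _ _)
      | right i =>
        rw [hΘ2, show ρ (z' (Fin.natAdd d i)) = X i from hρ2 i]
        exact PTop.X i
    | zero => rw [map_zero, map_zero]; exact PTop.zero
    | add x y _ _ hx hy => rw [map_add, map_add]; exact hx.add hy
    | smul a x _ hx => rw [map_smul, map_smul]; exact hx.smul a
  have hP2 : ∀ l ∈ homogeneousSubmodule (Fin (d+3)) k 2,
      PTop (MvPolynomial (Fin d) k) 2 (ρ l) (Θ l) := by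
    intro l hl
    rw [← homogeneousSubmodule_one_pow, pow_two] at hl
    induction hl using Submodule.mul_induction_on' with
    | mem_mul_mem x hx y hy =>
      rw [map_mul, map_mul]
      exact (hP1 x hx).mul (hP1 y hy)
    | add x _ y _ hx hy => rw [map_add, map_add]; exact hx.add hy
  have hhom : ∀ i j, (Ideal.span (g '' Set.Iio i) ⊔ Ideal.span (z '' Set.Iio j)).IsHomogeneous
      (homogeneousSubmodule (Fin (d+3)) k) := by
    intro i j
    rw [← Ideal.span_union]
    apply Ideal.homogeneous_span
    rintro x (⟨a, -, rfl⟩ | ⟨a, -, rfl⟩)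
    · exact ⟨2, hV (hgV a)⟩
    · exact ⟨1, hz1 a⟩
  have hpow : ∀ i, i ≤ 3 → ∀ j : ℕ, j = d + 3 - i → ∀ a : Fin 3, ∃ s, (X a : MvPolynomial (Fin 3) k) ^ s ∈
      Ideal.span ((fun x => ρ (g x)) '' Set.Iio i) ⊔ Ideal.span ((fun x => ρ (z x)) '' Set.Iio j) := by
    rintro i hi j hj a
    have h1 := hz' i j (by omega) (by omega)
    rw [show i + j = d + 3 by omega] at h1
    obtain ⟨s, hs⟩ := linear_in_radical (hhom i j) h1 (hz1 (d + a))
    refine ⟨s, ?_⟩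
    have := Ideal.mem_map_of_mem ρ.toRingHom hs
    rw [Ideal.map_sup, Ideal.map_span, Ideal.map_span, Set.image_image, Set.image_image] at this
    rw [← hρ2]
    have h2 : ρ.toRingHom (z (d+a) ^ s) = ρ (z (d+a)) ^ s := map_pow ρ _ _
    rw [h2] at this
    exact this
  refine ⟨Θ, ![g 2, g 1, g 0], ![ρ (g 2), ρ (g 1), ρ (g 0)], ?_, ?_, ⟨?_, ?_, ?_, ?_⟩, ?_, ?_, ?_⟩
  · intro i; fin_cases i <;> exact hgV _
  · have := hg () 3 le_rfl (by omega)
    have h2 : Set.range ![g 2, g 1, g 0] = g '' Set.Iio 3 := by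
      ext x
      constructor
      · rintro ⟨i, rfl⟩
        fin_cases i
        exacts [⟨2, by simp, rfl⟩, ⟨1, by simp, rfl⟩, ⟨0, by simp, rfl⟩]
      · rintro ⟨i, hi, rfl⟩
        have hi : i < 3 := hi
        interval_cases i
        exacts [⟨2, rfl⟩, ⟨1, rfl⟩, ⟨0, rfl⟩]
    rw [h2]
    simpa using this
  · intro i; fin_cases i <;> exact (hP2 _ (hV (hgV _))).hom
  · obtain ⟨s, hs⟩ := hpow 1 (by omega) (d+2) (by omega) 2
    refine ⟨s, ?_⟩
    refine SetLike.le_def.1 (sup_le ?_ ?_) hs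
    · rw [Ideal.span_le]
      rintro _ ⟨i, hi, rfl⟩
      have hi : i < 1 := hi
      interval_cases i
      exact Submodule.mem_sup_right (Ideal.mem_span_singleton_self _)
    · rw [Ideal.span_le]
      rintro _ ⟨i, hi, rfl⟩
      have hi : i < d + 2 := hi
      rcases lt_or_ge i d with h | h
      · simp only [hρ1 i h]; exact zero_mem _
      · obtain hh | hh : i = d + (0 : Fin 3) ∨ i = d + (1 : Fin 3) := by simp; omega
        · have := hρ2 0
          refine Submodule.mem_sup_left (Submodule.mem_sup_left ?_)
          change ρ (z i) ∈ _
          rw [hh, this]; exact Ideal.mem_span_singleton_self _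
        · have := hρ2 1
          refine Submodule.mem_sup_left (Submodule.mem_sup_right ?_)
          change ρ (z i) ∈ _
          rw [hh, this]; exact Ideal.mem_span_singleton_self _
  · obtain ⟨s, hs⟩ := hpow 2 (by omega) (d+1) (by omega) 1
    refine ⟨s, ?_⟩
    refine SetLike.le_def.1 (sup_le ?_ ?_) hs
    · rw [Ideal.span_le]
      rintro _ ⟨i, hi, rfl⟩
      have hi : i < 2 := hi
      interval_cases i
      · exact Submodule.mem_sup_left (Submodule.mem_sup_right (Ideal.mem_span_singleton_self _))
      · exact Submodule.mem_sup_right (Ideal.mem_span_singleton_self _)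
    · rw [Ideal.span_le]
      rintro _ ⟨i, hi, rfl⟩
      have hi : i < d + 1 := hi
      rcases lt_or_ge i d with h | h
      · simp only [hρ1 i h]; exact zero_mem _
      · have hh : i = d + (0 : Fin 3) := by simp; omega
        have := hρ2 0
        refine Submodule.mem_sup_left (Submodule.mem_sup_left ?_)
        change ρ (z i) ∈ _
        rw [hh, this]; exact Ideal.mem_span_singleton_self _
  · intro j
    obtain ⟨s, hs⟩ := hpow 3 (by omega) d (by omega) j
    refine ⟨s, ?_⟩
    refine SetLike.le_def.1 (sup_le ?_ ?_) hs
    · rw [Ideal.span_le]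
      rintro _ ⟨i, hi, rfl⟩
      have hi : i < 3 := hi
      interval_cases i
      · exact Submodule.mem_sup_left (Submodule.mem_sup_left (Ideal.mem_span_singleton_self _))
      · exact Submodule.mem_sup_left (Submodule.mem_sup_right (Ideal.mem_span_singleton_self _))
      · exact Submodule.mem_sup_right (Ideal.mem_span_singleton_self _)
    · rw [Ideal.span_le]
      rintro _ ⟨i, hi, rfl⟩
      have hi : i < d := hi
      simp only [hρ1 i hi]; exact zero_mem _
  · intro i; fin_cases i <;> exact hP2 _ (hV (hgV _))
  · exact fun q hq => ⟨_, hP2 q hq⟩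
  · intro i
    rw [← hΘ1 i, AlgEquiv.symm_apply_apply]
    exact hz1 _

end coords2
end part14

section part15
section contract
set_option linter.unusedSectionVars false
open MvPolynomial

variable {k : Type*} [Field k] {R : Type*} [CommRing R] [IsDomain R] [Algebra k R]
  {F : Fin 3 → MvPolynomial (Fin 3) k} {f : Fin 3 → MvPolynomial (Fin 3) R}

theorem contract_zero (hF : GoodF F) (hf : ∀ i, PTop R 2 (F i) (f i))
    {p : Ideal (MvPolynomial (Fin 3) R)} (hp : p.IsPrime) (hfp : ∀ i, f i ∈ p)
    (hht : HtGe (Ideal.span (Set.range f)) 3) (hp3 : p.height ≤ 3) (r : R) (hr : C r ∈ p) :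
    r = 0 := by
  by_contra hne
  obtain ⟨b, -⟩ := exists_basis8' hF hf
  set J := Ideal.span (Set.range f) with hJ
  have hJp : J ≤ p := by
    rw [hJ, Ideal.span_le]; rintro _ ⟨i, rfl⟩; exact hfp i
  have : Module.Free R (MvPolynomial (Fin 3) R ⧸ J) := Module.Free.of_basis b
  have hsurj : Function.Surjective (Ideal.Quotient.mk J) := Ideal.Quotient.mk_surjective
  have hker : RingHom.ker (Ideal.Quotient.mk J) ≤ p := by rwa [Ideal.mk_ker]
  set P := p.map (Ideal.Quotient.mk J) with hP
  have hPp : P.IsPrime := Ideal.map_isPrime_of_surjective hsurj hker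
  have hcomap : P.comap (Ideal.Quotient.mk J) = p := by
    rw [hP, Ideal.comap_map_of_surjective _ hsurj, ← RingHom.ker_eq_comap_bot]
    exact sup_eq_left.2 hker
  let q := P.under R
  have hlt : (⊥ : Ideal R) < q := by
    rw [bot_lt_iff_ne_bot, Submodule.ne_bot_iff]
    refine ⟨r, ?_, hne⟩
    change Ideal.Quotient.mk J (C r) ∈ P
    exact Ideal.mem_map_of_mem _ hr
  obtain ⟨Q, hQP, hQ, -⟩ := Ideal.exists_ideal_lt_liesOver_of_lt (q := q) P hlt
  have hQc : (Q.comap (Ideal.Quotient.mk J)).IsPrime := inferInstance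
  have hlt2 : Q.comap (Ideal.Quotient.mk J) < p := by
    refine lt_of_le_of_ne ?_ ?_
    · rw [← hcomap]; exact Ideal.comap_mono hQP.le
    · intro h
      rw [← hcomap] at h
      exact hQP.ne (Ideal.comap_injective_of_surjective _ hsurj h)
  have h1 := hht _ hQc (by
    intro x hx
    change Ideal.Quotient.mk J x ∈ Q
    rw [Ideal.Quotient.eq_zero_iff_mem.2 hx]
    exact zero_mem _)
  have h2 := Ideal.height_add_one_le_of_lt_of_isPrime hlt2
  have h3 := (add_le_add_left h1 1).trans (h2.trans hp3)
  norm_cast at h3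
end contract
end part15

section part16
section hilb
set_option linter.unusedSectionVars false
open MvPolynomial

variable {k : Type u} [Field k] {N d : ℕ}

theorem homogComp_mul_right {σ : Type*} (n δ : ℕ) (x : MvPolynomial σ k) {b : MvPolynomial σ k}
    (hb : b ∈ homogeneousSubmodule σ k δ) :
    homogeneousComponent (n + δ) (x * b) = homogeneousComponent n x * b := by
  conv_lhs => rw [← sum_homogeneousComponent x, Finset.sum_mul, map_sum]
  have h1 : ∀ i ∈ Finset.range (x.totalDegree + 1),
      homogeneousComponent (n + δ) (homogeneousComponent i x * b) =
      if n = i then homogeneousComponent n x * b else 0 := by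
    intro i _
    rw [homogeneousComponent_of_mem (n := i + δ)
      (IsHomogeneous.mul (homogeneousComponent_isHomogeneous i x) hb)]
    by_cases h : n = i
    · subst h; simp
    · rw [if_neg (by omega), if_neg h]
  rw [Finset.sum_congr rfl h1, Finset.sum_ite_eq]
  split_ifs with h
  · rfl
  · rw [homogeneousComponent_eq_zero, zero_mul]
    simp at h
    omega

theorem homogComp_map (ψ : MvPolynomial (Fin d) k →ₐ[k] MvPolynomial (Fin N) k)
    (h : ∀ t, ∀ r ∈ homogeneousSubmodule (Fin d) k t, ψ r ∈ homogeneousSubmodule (Fin N) k t)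
    (n : ℕ) (r : MvPolynomial (Fin d) k) :
    homogeneousComponent n (ψ r) = ψ (homogeneousComponent n r) := by
  conv_lhs => rw [← sum_homogeneousComponent r, map_sum, map_sum]
  have h1 : ∀ i ∈ Finset.range (r.totalDegree + 1),
      homogeneousComponent n (ψ (homogeneousComponent i r)) =
      if n = i then ψ (homogeneousComponent n r) else 0 := by
    intro i _
    rw [homogeneousComponent_of_mem (h i _ (homogeneousComponent_isHomogeneous i r))]
    by_cases h : n = i
    · subst h; simp
    · rw [if_neg h, if_neg h]
  rw [Finset.sum_congr rfl h1, Finset.sum_ite_eq]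
  split_ifs with h
  · rfl
  · rw [homogeneousComponent_eq_zero, map_zero]
    simp at h
    omega

theorem torsion_bound {R A : Type*} [CommRing R] [IsDomain R] [CommRing A] [Algebra R A]
    [Module.Finite R A] {ι : Type*} (v : ι → A) (hv : Submodule.span R (Set.range v) = ⊤) :
    ∃ s : Finset ι, s.card ≤ Module.finrank R A ∧ ∃ a : R, a ≠ 0 ∧
      ∀ y : A, a • y ∈ Submodule.span R (v '' (s : Set ι)) := by
  classical
  obtain ⟨s, hs, hs'⟩ := exists_maximal_linearIndepOn R v
  have hfin : Finite s := LinearIndependent.finite hs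
  have := Fintype.ofFinite s
  have hcard := LinearIndependent.fintype_card_le_finrank hs
  refine ⟨s.toFinset, by rwa [Set.toFinset_card], ?_⟩
  rw [Set.coe_toFinset]
  set M := Submodule.span R (v '' s) with hM
  have htor : ∀ y : A, ∃ a : R, a ≠ 0 ∧ a • y ∈ M := by
    intro y
    have hy : y ∈ Submodule.span R (Set.range v) := by rw [hv]; trivial
    induction hy using Submodule.span_induction with
    | mem x hx =>
      obtain ⟨i, rfl⟩ := hx
      by_cases hi : i ∈ s
      · exact ⟨1, one_ne_zero, by rw [one_smul]; exact Submodule.subset_span ⟨i, hi, rfl⟩⟩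
      · exact hs' i hi
    | zero => exact ⟨1, one_ne_zero, by simp⟩
    | add x y _ _ hx hy =>
      obtain ⟨a, ha, hx⟩ := hx
      obtain ⟨b, hb, hy⟩ := hy
      refine ⟨a * b, mul_ne_zero ha hb, ?_⟩
      rw [smul_add]
      refine M.add_mem ?_ ?_
      · rw [mul_comm, mul_smul]; exact M.smul_mem _ hx
      · rw [mul_smul]; exact M.smul_mem _ hy
    | smul c x _ hx =>
      obtain ⟨a, ha, hx⟩ := hx
      exact ⟨a, ha, by rw [smul_comm]; exact M.smul_mem _ hx⟩
  obtain ⟨Y, hY⟩ := Module.Finite.fg_top (R := R) (M := A)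
  have hY2 : ∃ a : R, a ≠ 0 ∧ ∀ y ∈ Y, a • y ∈ M := by
    clear hY
    induction Y using Finset.induction_on with
    | empty => exact ⟨1, one_ne_zero, by simp⟩
    | insert x Y _ ih =>
      obtain ⟨a, ha, h1⟩ := ih
      obtain ⟨b, hb, h2⟩ := htor x
      refine ⟨a * b, mul_ne_zero ha hb, fun y hy => ?_⟩
      rcases Finset.mem_insert.1 hy with rfl | hy
      · rw [mul_smul]; exact M.smul_mem _ h2
      · rw [mul_comm, mul_smul]; exact M.smul_mem _ (h1 y hy)
  obtain ⟨a, ha, h1⟩ := hY2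
  refine ⟨a, ha, fun y => ?_⟩
  have hy : y ∈ Submodule.span R (Y : Set A) := by rw [hY]; trivial
  induction hy using Submodule.span_induction with
  | mem x hx => exact h1 x hx
  | zero => simp
  | add x y _ _ hx hy => rw [smul_add]; exact M.add_mem hx hy
  | smul c x _ hx => rw [smul_comm]; exact M.smul_mem _ hx

theorem hf_bounds {p : Ideal (MvPolynomial (Fin N) k)} (hpp : p.IsPrime)
    (hph : ∀ x ∈ p, ∀ n, homogeneousComponent n x ∈ p)
    {A : Type*} [CommRing A] [Algebra (MvPolynomial (Fin d) k) A]
    [Module.Finite (MvPolynomial (Fin d) k) A]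
    (hinj : ∀ r, algebraMap (MvPolynomial (Fin d) k) A r = 0 → r = 0)
    (π : MvPolynomial (Fin N) k →+* A) (hπ : Function.Surjective π) (hker : ∀ x, π x = 0 ↔ x ∈ p)
    (ψ : MvPolynomial (Fin d) k →ₐ[k] MvPolynomial (Fin N) k)
    (hψ : ∀ r, π (ψ r) = algebraMap _ A r)
    (hψ1 : ∀ i, ψ (X i) ∈ homogeneousSubmodule (Fin N) k 1) :
    (∀ t, Module.finrank k (homogeneousSubmodule (Fin d) k t) ≤ hilbertFunction k p t) ∧
    ∃ (s : Finset (Fin N →₀ ℕ)) (e : ℕ), s.card ≤ Module.finrank (MvPolynomial (Fin d) k) A ∧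
      ∀ t, (∀ j ∈ s, j.degree ≤ t) → hilbertFunction k p t ≤
        ∑ j ∈ s, Module.finrank k (homogeneousSubmodule (Fin d) k (t + e - j.degree)) := by
  classical
  have hψt : ∀ t, ∀ r ∈ homogeneousSubmodule (Fin d) k t, ψ r ∈ homogeneousSubmodule (Fin N) k t := by
    intro t r hr
    have h1 : ψ = aeval (fun i => ψ (X i)) := by
      apply MvPolynomial.algHom_ext; intro i; simp
    have h2 := IsHomogeneous.aeval (S := k) hr (fun i => ψ (X i)) hψ1
    rw [one_mul, ← h1] at h2
    exact h2
  have hψp : ∀ r, ψ r ∈ p → r = 0 := fun r hr => hinj r (by rw [← hψ]; exact (hker _).2 hr)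
  have hfinm : ∀ t, Module.Finite k (Submodule.map (Ideal.Quotient.mkₐ k p).toLinearMap
    (homogeneousSubmodule (Fin N) k t)) := fun t => inferInstance
  refine ⟨fun t => ?_, ?_⟩
  · let L : homogeneousSubmodule (Fin d) k t →ₗ[k] (Submodule.map (Ideal.Quotient.mkₐ k p).toLinearMap
        (homogeneousSubmodule (Fin N) k t)) :=
      LinearMap.codRestrict _ (((Ideal.Quotient.mkₐ k p).toLinearMap ∘ₗ ψ.toLinearMap).comp
        (Submodule.subtype _)) (fun r => ⟨ψ r, hψt t r r.2, rfl⟩)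
    refine LinearMap.finrank_le_finrank_of_injective (f := L) ?_
    rw [injective_iff_map_eq_zero]
    intro r hr
    have h1 : Ideal.Quotient.mk p (ψ r) = 0 := congrArg Subtype.val hr
    exact Subtype.ext (hψp _ (Ideal.Quotient.eq_zero_iff_mem.1 h1))
  · let v : (Fin N →₀ ℕ) → A := fun m => π (monomial m 1)
    have hv : Submodule.span (MvPolynomial (Fin d) k) (Set.range v) = ⊤ := by
      rw [eq_top_iff]
      rintro y -
      obtain ⟨x, rfl⟩ := hπ y
      rw [x.as_sum, map_sum]
      refine Submodule.sum_mem _ fun m _ => ?_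
      have : π (monomial m (coeff m x)) = (C (coeff m x) : MvPolynomial (Fin d) k) • v m := by
        rw [Algebra.smul_def, ← hψ, ← map_mul]
        have : ψ (C (coeff m x)) = C (coeff m x) := ψ.commutes _
        rw [this, C_mul_monomial, mul_one]
      rw [this]
      exact Submodule.smul_mem _ _ (Submodule.subset_span ⟨m, rfl⟩)
    obtain ⟨s, hs, a, ha, hspan⟩ := torsion_bound v hv
    obtain ⟨e, he⟩ : ∃ e, homogeneousComponent e a ≠ 0 := by
      by_contra hcon
      push Not at hcon
      apply ha
      rw [← sum_homogeneousComponent a]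
      exact Finset.sum_eq_zero fun i _ => hcon i
    refine ⟨s, e, hs, fun t ht => ?_⟩
    set a' := homogeneousComponent e a with ha'
    have hap : ψ a' ∉ p := fun h => he (hψp _ h)
    -- the spanning map
    let Φ : ((j : s) → homogeneousSubmodule (Fin d) k (t + e - j.1.degree)) →ₗ[k]
        (MvPolynomial (Fin N) k ⧸ p) :=
      ∑ j : s, ((Ideal.Quotient.mkₐ k p).toLinearMap ∘ₗ LinearMap.mulRight k (monomial j.1 1) ∘ₗ
        ψ.toLinearMap ∘ₗ Submodule.subtype _) ∘ₗ LinearMap.proj j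
    let μ : (MvPolynomial (Fin N) k ⧸ p) →ₗ[k] (MvPolynomial (Fin N) k ⧸ p) :=
      LinearMap.mulLeft k (Ideal.Quotient.mk p (ψ a'))
    have hμ : Function.Injective μ := by
      rw [injective_iff_map_eq_zero]
      intro x hx
      have hx : Ideal.Quotient.mk p (ψ a') * x = 0 := hx
      rcases mul_eq_zero.1 hx with h | h
      · exact absurd (Ideal.Quotient.eq_zero_iff_mem.1 h) hap
      · exact h
    have hsub : Submodule.map μ (Submodule.map (Ideal.Quotient.mkₐ k p).toLinearMap
        (homogeneousSubmodule (Fin N) k t)) ≤ LinearMap.range Φ := by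
      rintro _ ⟨_, ⟨x, hx, rfl⟩, rfl⟩
      have h1 := hspan (π x)
      rw [Set.image_eq_range, Submodule.mem_span_range_iff_exists_fun] at h1
      obtain ⟨c, hc⟩ := h1
      have h2 : ψ a * x - ∑ j : s, ψ (c j) * monomial j.1 1 ∈ p := by
        rw [← hker, map_sub, map_mul, hψ, ← Algebra.smul_def, ← hc, map_sum, sub_eq_zero]
        refine Finset.sum_congr rfl fun j _ => ?_
        rw [map_mul, hψ, Algebra.smul_def]
      have h3 := hph _ h2 (e + t)
      rw [map_sub, homogComp_mul_right e t _ hx, map_sum, homogComp_map ψ hψt] at h3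
      have h4 : ∀ j : s, homogeneousComponent (e + t) (ψ (c j) * monomial j.1 1) =
          ψ (homogeneousComponent (t + e - j.1.degree) (c j)) * monomial j.1 1 := by
        intro j
        have h5 := ht j.1 j.2
        have h6 : e + t = (t + e - j.1.degree) + j.1.degree := by omega
        rw [h6, homogComp_mul_right _ j.1.degree, homogComp_map ψ hψt]
        exact isHomogeneous_monomial _ rfl
      refine ⟨fun j => ⟨homogeneousComponent (t + e - j.1.degree) (c j),
        homogeneousComponent_isHomogeneous _ _⟩, ?_⟩
      have h7 : Ideal.Quotient.mk p (ψ a' * x) = Ideal.Quotient.mk p (∑ j : s,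
          ψ (homogeneousComponent (t + e - j.1.degree) (c j)) * monomial j.1 1) := by
        rw [Ideal.Quotient.eq]
        simp only [h4] at h3
        exact h3
      change _ = Ideal.Quotient.mk p (ψ a') * Ideal.Quotient.mk p x
      rw [← map_mul, h7, map_sum, LinearMap.sum_apply]
      rfl
    have e1 : hilbertFunction k p t = Module.finrank k (Submodule.map μ (Submodule.map
        (Ideal.Quotient.mkₐ k p).toLinearMap (homogeneousSubmodule (Fin N) k t))) :=
      (LinearEquiv.finrank_eq (Submodule.equivMapOfInjective μ hμ _))
    rw [e1]
    refine (Submodule.finrank_mono hsub).trans ((LinearMap.finrank_range_le Φ).trans ?_)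
    rw [Module.finrank_pi_fintype]
    exact (Finset.sum_coe_sort s (fun j => Module.finrank k
      (homogeneousSubmodule (Fin d) k (t + e - j.degree)))).le
end hilb
end part16

section part17
section asym
open Polynomial Filter Topology

theorem eval_shift (D e t : ℕ) :
    ((ascPochhammer ℚ D).comp (Polynomial.X + Polynomial.C ((e : ℚ) + 1))).eval (t : ℚ)
      = (D.factorial : ℚ) * ((t + e + D).choose D : ℚ) := by
  rw [eval_comp, eval_add, eval_X, eval_C]
  have h : ((t : ℚ) + ((e : ℚ) + 1)) = ((t + e + 1 : ℕ) : ℚ) := by push_cast; ring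
  rw [h, ← ascPochhammer_eval_cast, ascPochhammer_nat_eq_ascFactorial,
    Nat.ascFactorial_eq_factorial_mul_choose]
  push_cast; rfl

theorem shift_monic (D : ℕ) (c : ℚ) :
    ((ascPochhammer ℚ D).comp (Polynomial.X + Polynomial.C c)).Monic :=
  (monic_ascPochhammer ℚ D).comp_X_add_C c

theorem shift_natDegree (D : ℕ) (c : ℚ) :
    ((ascPochhammer ℚ D).comp (Polynomial.X + Polynomial.C c)).natDegree = D := by
  rw [natDegree_comp, natDegree_X_add_C, mul_one, ascPochhammer_natDegree]

theorem asym_bound (D e r : ℕ) (P : ℚ[X])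
    (h1 : ∀ᶠ t : ℕ in atTop, ((t + D).choose D : ℚ) ≤ P.eval (t : ℚ))
    (h2 : ∀ᶠ t : ℕ in atTop, P.eval (t : ℚ) ≤ r * ((t + e + D).choose D : ℚ)) :
    (P.natDegree.factorial : ℚ) * P.leadingCoeff ≤ r := by
  set Q : ℕ → ℚ[X] := fun e => (ascPochhammer ℚ D).comp (Polynomial.X + Polynomial.C ((e : ℚ) + 1)) with hQ
  have hQm : ∀ e, (Q e).Monic := fun e => shift_monic D _
  have hQd : ∀ e, (Q e).natDegree = D := fun e => shift_natDegree D _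
  have hQd' : ∀ e, (Q e).degree = D := fun e => by
    rw [degree_eq_natDegree (hQm e).ne_zero, hQd]
  have hQe : ∀ e t : ℕ, (Q e).eval (t : ℚ) = (D.factorial : ℚ) * ((t + e + D).choose D : ℚ) :=
    fun e t => eval_shift D e t
  have hfac : (0 : ℚ) < D.factorial := by exact_mod_cast D.factorial_pos
  have hpos : ∀ e t : ℕ, 0 < (Q e).eval (t : ℚ) := fun e t => by
    rw [hQe]
    exact mul_pos hfac (by exact_mod_cast Nat.choose_pos (by omega))
  have hcast : Tendsto (fun t : ℕ => (t : ℚ)) atTop atTop := tendsto_natCast_atTop_atTop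
  -- lower ratio
  have l1 : ∀ᶠ t : ℕ in atTop, (1 / (D.factorial : ℚ)) ≤ P.eval (t : ℚ) / (Q 0).eval (t : ℚ) := by
    filter_upwards [h1] with t ht
    rw [le_div_iff₀ (hpos 0 t), hQe]
    have : 1 / (D.factorial : ℚ) * ((D.factorial : ℚ) * ((t + 0 + D).choose D : ℚ))
        = ((t + D).choose D : ℚ) := by
      rw [add_zero]; field_simp
    rw [this]; exact ht
  have l2 : ∀ᶠ t : ℕ in atTop, P.eval (t : ℚ) / (Q e).eval (t : ℚ) ≤ (r : ℚ) / (D.factorial : ℚ) := by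
    filter_upwards [h2] with t ht
    rw [div_le_iff₀ (hpos e t), hQe]
    have : (r : ℚ) / (D.factorial : ℚ) * ((D.factorial : ℚ) * ((t + e + D).choose D : ℚ))
        = r * ((t + e + D).choose D : ℚ) := by
      field_simp
    rw [this]; exact ht
  have l3 : ∀ᶠ t : ℕ in atTop, 0 ≤ P.eval (t : ℚ) / (Q e).eval (t : ℚ) := by
    filter_upwards [h1] with t ht
    exact div_nonneg (le_trans (by positivity) ht) (hpos e t).le
  rcases lt_trichotomy P.degree D with hd | hd | hd
  · exfalso
    have := (div_tendsto_atTop_zero_of_degree_lt P (Q 0) (by rw [hQd']; exact hd)).comp hcast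
    have := ge_of_tendsto this l1
    have h0 : 0 < 1 / (D.factorial : ℚ) := by positivity
    linarith
  · have := (div_tendsto_atTop_leadingCoeff_div_of_degree_eq P (Q e) (by rw [hQd']; exact hd)).comp hcast
    have := le_of_tendsto this l2
    rw [(hQm e).leadingCoeff, div_one, le_div_iff₀ hfac] at this
    rw [natDegree_eq_of_degree_eq_some hd, mul_comm]
    exact this
  · exfalso
    have := (abs_div_tendsto_atTop_atTop_of_degree_gt P (Q e) (by rw [hQd']; exact hd) (hQm e).ne_zero).comp hcast
    obtain ⟨t, ht1, ht2, ht3⟩ := (l2.and (l3.and (this.eventually_gt_atTop ((r : ℚ) / (D.factorial : ℚ))))).exists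
    simp only [Function.comp] at ht3
    rw [abs_of_nonneg ht2] at ht3
    linarith

end asym

theorem mult_bound {k : Type u} [Field k] {N d : ℕ} {p : Ideal (MvPolynomial (Fin N) k)}
    (hpe : hilbertSamuelMultiplicity k p = 5)
    (hlow : ∀ t, Module.finrank k (MvPolynomial.homogeneousSubmodule (Fin d) k t) ≤ hilbertFunction k p t)
    (s : Finset (Fin N →₀ ℕ)) (e r : ℕ) (hs : s.card ≤ r)
    (hup : ∀ t, (∀ j ∈ s, j.degree ≤ t) → hilbertFunction k p t ≤
      ∑ j ∈ s, Module.finrank k (MvPolynomial.homogeneousSubmodule (Fin d) k (t + e - j.degree))) :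
    5 ≤ r := by
  classical
  rw [hilbertSamuelMultiplicity] at hpe
  split_ifs at hpe with h
  · set P := h.choose with hP
    have hPe := h.choose_spec
    rw [← hP] at hPe
    obtain ⟨B, hB⟩ : ∃ B, ∀ j ∈ s, j.degree ≤ B :=
      ⟨s.sup (fun j => j.degree), fun j hj => Finset.le_sup (f := fun j => Finsupp.degree j) hj⟩
    simp only [finrank_homogeneousSubmodule'] at hlow hup
    rcases d with _ | D
    · exfalso
      have h0 : ∀ᶠ t : ℕ in Filter.atTop, P.eval (t : ℚ) = 0 := by
        filter_upwards [hPe, Filter.eventually_ge_atTop (B + 1)] with t ht1 ht2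
        have := hup t (fun j hj => (hB j hj).trans (by omega))
        rw [Finset.sum_eq_zero (fun j hj => by
          have := hB j hj
          exact Nat.choose_eq_zero_of_lt (by omega))] at this
        rw [← ht1]
        have : hilbertFunction k p t = 0 := by omega
        simp [this]
      have hP0 : P = 0 := by
        by_contra hne
        have := (tendsto_natCast_atTop_atTop (R := ℚ)).eventually
          (Polynomial.eventually_atTop_not_isRoot P hne)
        obtain ⟨t, h1, h2⟩ := (h0.and this).exists
        exact h2 h1
      rw [hP0] at hpe
      simp at hpe
    · have hch : ∀ t, (D + 1 + t - 1).choose t = (t + D).choose D := fun t => by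
        have : D + 1 + t - 1 = t + D := by omega
        rw [this, ← Nat.choose_symm_of_eq_add (show t + D = t + D from rfl)]
      simp only [hch] at hlow hup
      have := asym_bound D e r P (by
        filter_upwards [hPe] with t ht
        rw [← ht]; exact_mod_cast hlow t) (by
        filter_upwards [hPe, Filter.eventually_ge_atTop B] with t ht ht2
        rw [← ht]
        have h1 := hup t (fun j hj => (hB j hj).trans ht2)
        have h2 : ∑ j ∈ s, (t + e - j.degree + D).choose D ≤ ∑ j ∈ s, (t + e + D).choose D :=
          Finset.sum_le_sum fun j _ => Nat.choose_le_choose _ (by omega)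
        rw [Finset.sum_const, smul_eq_mul] at h2
        have h3 := Nat.mul_le_mul_right ((t + e + D).choose D) hs
        exact_mod_cast h1.trans (h2.trans h3))
      rw [hpe] at this
      exact_mod_cast this
  · norm_num at hpe
end part17


section final
open MvPolynomial

theorem heightENat_le {R : Type u} [CommRing R] {I P : Ideal R} (hP : P.IsPrime) (h : I ≤ P) :
    I.heightENat ≤ P.height := by
  have := PrimeSpectrum.height_eq_orderHeight (⟨P, hP⟩ : PrimeSpectrum R)
  rw [show P.height = _ from this]
  exact iInf₂_le_of_le ⟨P, hP⟩ h le_rfl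

theorem heightENat_prime {R : Type u} [CommRing R] {P : Ideal R} (hP : P.IsPrime) :
    P.heightENat = P.height := by
  refine le_antisymm (heightENat_le hP le_rfl) ?_
  refine le_iInf₂ fun Q hQ => ?_
  rw [← PrimeSpectrum.height_eq_orderHeight]
  exact Ideal.height_mono hQ

theorem htge_equiv {A B : Type*} [CommRing A] [CommRing B] (θ : A ≃+* B) {ι : Type*} (g : ι → A)
    {t : ℕ} (h : HtGe (Ideal.span (Set.range g)) t) :
    HtGe (Ideal.span (Set.range fun i => θ (g i))) t := by
  intro P hP hle
  have := h (P.comap (θ : A →+* B)) (Ideal.IsPrime.comap _) (by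
    rw [Ideal.span_le]
    rintro _ ⟨i, rfl⟩
    exact hle (Ideal.subset_span ⟨i, rfl⟩))
  have h2 : (P.comap (θ : A →+* B)).height = P.height := RingEquiv.height_comap θ P
  rwa [h2] at this

theorem height_equiv {A B : Type*} [CommRing A] [CommRing B] (θ : B ≃+* A) (p : Ideal A) :
    (p.comap (θ : B →+* A)).height = p.height := RingEquiv.height_comap θ p

theorem map_eq_sup {A B : Type*} [CommRing A] [CommRing B] (θ : A ≃+* B) {ι κ : Type*} (f : ι → A)
    (g : κ → A) {I : Ideal A} (hI : I = Ideal.span (Set.range f)) (hg : ∀ i, g i ∈ I) :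
    I.map (θ : A →+* B) = Ideal.span (Set.range fun i => θ (g i)) ⊔
      Ideal.span (Set.range (fun i => θ (f i))) := by
  apply le_antisymm
  · refine le_trans ?_ le_sup_right
    rw [Ideal.map_le_iff_le_comap, hI, Ideal.span_le]
    rintro _ ⟨i, rfl⟩
    exact Ideal.subset_span ⟨i, rfl⟩
  · refine sup_le ?_ ?_
    · rw [Ideal.span_le]; rintro _ ⟨i, rfl⟩
      exact Ideal.mem_map_of_mem (θ : A →+* B) (hg i)
    · rw [Ideal.span_le]; rintro _ ⟨i, rfl⟩
      exact Ideal.mem_map_of_mem (θ : A →+* B) (by rw [hI]; exact Ideal.subset_span ⟨i, rfl⟩)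

theorem pd_transport {A B : Type u} [CommRing A] [CommRing B] (θ : A ≃+* B) (I : Ideal A) {n : ℕ}
    (h : PDle B n (B ⧸ I.map (θ : A →+* B))) : PDle A n (A ⧸ I) := by
  let E := Ideal.quotientEquiv I (I.map (θ : A →+* B)) θ rfl
  refine PDle.of_semi θ.symm E.symm.toAddEquiv ?_ h
  intro a m
  obtain ⟨m, rfl⟩ := E.surjective m
  obtain ⟨m, rfl⟩ := Ideal.Quotient.mk_surjective m
  change E.symm (a • E (Ideal.Quotient.mk I m)) = θ.symm a • E.symm (E (Ideal.Quotient.mk I m))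
  rw [E.symm_apply_apply, E.symm_apply_eq]
  change a • Ideal.Quotient.mk (I.map (θ : A →+* B)) (θ m) =
    Ideal.Quotient.mk (I.map (θ : A →+* B)) (θ (θ.symm a * m))
  rw [map_mul, θ.apply_symm_apply]
  rfl

attribute [local instance] MvPolynomial.gradedAlgebra

theorem prime_homogeneous {k : Type u} [Field k] {N : ℕ} {I p : Ideal (MvPolynomial (Fin N) k)}
    (hI : I.IsHomogeneous (homogeneousSubmodule (Fin N) k)) (hht : HtGe I 3) (hp : p.IsPrime)
    (hIp : I ≤ p) (hp3 : p.height = 3) : ∀ x ∈ p, ∀ n, homogeneousComponent n x ∈ p := by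
  set Q := (Ideal.homogeneousCore (homogeneousSubmodule (Fin N) k) p).toIdeal with hQ
  have hQp : Q.IsPrime := hp.homogeneousCore
  have hQP : Q ≤ p := Ideal.toIdeal_homogeneousCore_le _ _
  have hbQ : I ≤ Q := by
    rw [← hI.toIdeal_homogeneousCore_eq_self]
    exact Ideal.homogeneousCore_mono _ hIp
  have h1 := hht Q hQp hbQ
  have h2 : Q = p := by
    by_contra hne
    have := Ideal.height_add_one_le_of_lt_of_isPrime (lt_of_le_of_ne hQP hne)
    have h3 := (add_le_add_left h1 1).trans (this.trans hp3.le)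
    norm_cast at h3
  intro x hx n
  rw [← h2] at hx ⊢
  have := (Ideal.homogeneousCore (homogeneousSubmodule (Fin N) k) p).isHomogeneous n hx
  rw [← MvPolynomial.decomposition.decompose'_apply]
  exact this

set_option maxHeartbeats 1000000 in
theorem final_aux (k : Type u) [Field k] [Infinite k] (d n : ℕ)
    (f : Fin n → MvPolynomial (Fin (d+3)) k) (hf : ∀ i, (f i).IsHomogeneous 2)
    (I : Ideal (MvPolynomial (Fin (d+3)) k)) (hI : I = Ideal.span (Set.range f))
    (hht : HtGe I 3) (p : Ideal (MvPolynomial (Fin (d+3)) k)) (hp : p.IsPrime) (hIp : I ≤ p)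
    (hp3 : p.height = 3) (hpe : hilbertSamuelMultiplicity k p = 5) :
    PDle (MvPolynomial (Fin (d+3)) k) 5 (MvPolynomial (Fin (d+3)) k ⧸ I) := by
  have hIh : I.IsHomogeneous (homogeneousSubmodule (Fin (d+3)) k) := by
    rw [hI]
    apply Ideal.homogeneous_span
    rintro _ ⟨i, rfl⟩
    exact ⟨2, hf i⟩
  have hph := prime_homogeneous hIh hht hp hIp hp3
  set V : Submodule k (MvPolynomial (Fin (d+3)) k) := Submodule.span k (Set.range f) with hV
  have hVI : ∀ v ∈ V, v ∈ I := by
    intro v hv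
    have : V ≤ I.restrictScalars k := by
      rw [hV, Submodule.span_le]
      rintro _ ⟨i, rfl⟩
      change f i ∈ I
      rw [hI]
      exact Ideal.subset_span ⟨i, rfl⟩
    exact this hv
  have hIV : Ideal.span (V : Set (MvPolynomial (Fin (d+3)) k)) = I := by
    apply le_antisymm
    · rw [Ideal.span_le]; exact fun v hv => hVI v hv
    · rw [hI]; exact Ideal.span_mono Submodule.subset_span
  obtain ⟨Θ, g, F, hgV, hght, hF, hgF, hquad, hlin⟩ := exists_coord V (by
    rw [hV, Submodule.span_le]; rintro _ ⟨i, rfl⟩; exact hf i) (by rw [hIV]; exact hht)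
  let R := MvPolynomial (Fin d) k
  let S' := MvPolynomial (Fin 3) R
  let θ : MvPolynomial (Fin (d+3)) k ≃+* S' := Θ.toRingEquiv
  have hθ : ∀ x, θ x = Θ x := fun x => rfl
  let p' : Ideal S' := p.comap (θ.symm : S' →+* MvPolynomial (Fin (d+3)) k)
  have hmem : ∀ x : S', x ∈ p' ↔ θ.symm x ∈ p := fun x => Iff.rfl
  have hmem' : ∀ x, θ x ∈ p' ↔ x ∈ p := fun x => by rw [hmem, θ.symm_apply_apply]
  have hp' : p'.IsPrime := Ideal.IsPrime.comap _
  have hp3' : p'.height = 3 := by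
    rw [← hp3]; exact height_equiv θ.symm p
  let G : Fin 3 → S' := fun i => θ (g i)
  have hGp : ∀ i, G i ∈ p' := fun i => (hmem' _).2 (hIp (hVI _ (hgV i)))
  have hGht : HtGe (Ideal.span (Set.range G)) 3 := htge_equiv θ g hght
  have hR : ∀ r : R, C r ∈ p' → r = 0 := fun r hr =>
    contract_zero hF hgF hp' hGp hGht hp3'.le r hr
  have hJp : Ideal.span (Set.range G) ≤ p' := by
    rw [Ideal.span_le]; rintro _ ⟨i, rfl⟩; exact hGp i
  have hfin : Module.Finite R (S' ⧸ p') := by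
    obtain ⟨b, -⟩ := exists_basis8' (R := R) (f := G) hF hgF
    have := Module.Finite.of_basis b
    exact Module.Finite.of_surjective (Ideal.Quotient.factorₐ R hJp).toLinearMap
      (Ideal.Quotient.factor_surjective hJp)
  let ψ : R →ₐ[k] MvPolynomial (Fin (d+3)) k := Θ.symm.toAlgHom.comp (IsScalarTower.toAlgHom k R S')
  have hψ : ∀ r, ψ r = Θ.symm (C r) := fun r => rfl
  have h5 : 5 ≤ Module.finrank R (S' ⧸ p') := by
    obtain ⟨h1, s, e, h2, h3⟩ := hf_bounds (d := d) hp hph (A := S' ⧸ p') (fun r hr => by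
        apply hR
        exact Ideal.Quotient.eq_zero_iff_mem.1 hr)
      ((Ideal.Quotient.mk p').comp (θ : _ →+* S'))
      (Ideal.Quotient.mk_surjective.comp θ.surjective)
      (fun x => by
        rw [← hmem']; exact Ideal.Quotient.eq_zero_iff_mem)
      ψ
      (fun r => by
        change Ideal.Quotient.mk p' (Θ (Θ.symm (C r))) = _
        rw [Θ.apply_symm_apply]; rfl)
      (fun i => by rw [hψ]; exact hlin i)
    exact mult_bound hpe h1 s e _ h2 h3
  have ctx : Ctx F G p' := ⟨hF, hgF, hp', hGp, hR, h5⟩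
  have hfI : ∀ i, f i ∈ I := fun i => by rw [hI]; exact Ideal.subset_span ⟨i, rfl⟩
  choose φ hφ using fun i => hquad (f i) (hf i)
  let I' : Ideal S' := I.map (θ : _ →+* S')
  have hI' : I' = Ideal.span (Set.range G) ⊔ Ideal.span (Set.range (fun i => θ (f i))) :=
    map_eq_sup θ f g hI (fun i => hVI _ (hgV i))
  have hcore : PDle R 2 (S' ⧸ I') := core_thm ctx (fun i => θ (f i)) φ
    (fun i => (hmem' _).2 (hIp (hfI i))) hφ hI'
  have h6 : PDle S' (2 + 3) (S' ⧸ I') := PDle_mvPolynomial 3 2 (S' ⧸ I') hcore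
  exact pd_transport θ I h6

end final

theorem pd_le_of_assoc_prime_mult_five (k : Type u) [Field k] [IsAlgClosed k] (N : ℕ) (n : ℕ)
    (f : Fin n → MvPolynomial (Fin N) k)
    (hf : ∀ i, (f i).IsHomogeneous 2)
    (I : Ideal (MvPolynomial (Fin N) k))
    (hI : I = Ideal.span (Set.range f))
    (hht : I.heightENat = 3)
    (p : Ideal (MvPolynomial (Fin N) k))
    (hp : IsAssociatedPrime p (MvPolynomial (Fin N) k ⧸ I))
    (hpht : p.heightENat = 3)
    (hpe : hilbertSamuelMultiplicity k p = 5) :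
    projDim (MvPolynomial (Fin N) k) (MvPolynomial (Fin N) k ⧸ I) ≤ (6 : ℕ) := by
  have hpp : p.IsPrime := hp.isPrime
  have hIp : I ≤ p := by
    have := hp.annihilator_le
    rwa [Submodule.annihilator_top, Ideal.annihilator_quotient] at this
  have hp3 : p.height = 3 := by rw [← heightENat_prime hpp, hpht]
  have hHt : HtGe I 3 := by
    intro P hP hle
    have := heightENat_le hP hle
    rw [hht] at this
    exact_mod_cast this
  have hN : 3 ≤ N := by
    have := height_le_N hpp
    rw [hp3] at this
    exact_mod_cast this
  obtain ⟨d, rfl⟩ : ∃ d, N = d + 3 := ⟨N - 3, by omega⟩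
  have : Infinite k := IsAlgClosed.instInfinite
  have := final_aux k d n f hf I hI hHt p hpp hIp hp3 hpe
  refine (projDim_le_of_LE _ _ 5 this).trans ?_
  exact_mod_cast (by norm_num : (5:ℕ) ≤ 6)
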